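/- arXiv:2210.06214 — 2 statements merged into one kernel-verified Lean document; each statement's English description precedes it below -/
import Mathlib

section
/- For every positive integer n, there exists an RDSQS(7·4^n), i.e., a Steiner quadruple system SQS(7·4^n) whose derived design at every point is resolvable. -/
open Finset

/-- A parallel class on point set `Y`: a collection of blocks that partitions `Y`. -/
def IsParallelClass (Y : Finset ℕ) (P : Finset (Finset ℕ)) : Prop :=
  (∀ b ∈ P, b ⊆ Y) ∧ ∀ y ∈ Y, ∃! b, b ∈ P ∧ y ∈ b

/-- A block collection `B` on point set `Y` is resolvable if it can be partitioned
into parallel classes of `Y`. -/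
def Resolvable (Y : Finset ℕ) (B : Finset (Finset ℕ)) : Prop :=
  ∃ (r : ℕ) (P : Fin r → Finset (Finset ℕ)),
    (∀ i, IsParallelClass Y (P i)) ∧ (∀ i, P i ⊆ B) ∧ ∀ b ∈ B, ∃! i, b ∈ P i

/-- The blocks of the derived design at a point `x`:
`{B \ {x} : x ∈ B, B ∈ B}`. -/
def derivedBlocks (B : Finset (Finset ℕ)) (x : ℕ) : Finset (Finset ℕ) :=
  (B.filter fun b => x ∈ b).image fun b => b.erase x

/-- A Steiner system S(t, k, v) on point set `X` with block collection `B`. -/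
def IsSteiner (t k v : ℕ) (X : Finset ℕ) (B : Finset (Finset ℕ)) : Prop :=
  X.card = v ∧ (∀ b ∈ B, b ⊆ X ∧ b.card = k) ∧
  ∀ T ⊆ X, T.card = t → ∃! b, b ∈ B ∧ T ⊆ b

/-- An RDS(t, k, v): a Steiner system S(t, k, v) whose derived design at every
point is resolvable. -/
def IsRDS (t k v : ℕ) (X : Finset ℕ) (B : Finset (Finset ℕ)) : Prop :=
  IsSteiner t k v X B ∧ ∀ x ∈ X, Resolvable (X.erase x) (derivedBlocks B x)

/-- Existence of an RDS(t, k, v). -/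
def ExistsRDS (t k v : ℕ) : Prop := ∃ X B, IsRDS t k v X B

/-- Existence of an RDSQS(v), i.e. an RDS(3, 4, v). -/
def ExistsRDSQS (v : ℕ) : Prop := ExistsRDS 3 4 v

/-- A Kirkman triple system KTS(v): a resolvable Steiner triple system. -/
def IsKTS (v : ℕ) (X : Finset ℕ) (B : Finset (Finset ℕ)) : Prop :=
  IsSteiner 2 3 v X B ∧ Resolvable X B

/-- Existence of a large set of Kirkman triple systems LKTS(v): a partition of
all 3-element subsets of a v-element set into v - 2 classes, each a KTS(v). -/
def ExistsLKTS (v : ℕ) : Prop :=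
  ∃ (X : Finset ℕ) (C : Fin (v - 2) → Finset (Finset ℕ)),
    X.card = v ∧ (∀ i, IsKTS v X (C i)) ∧
    (∀ T : Finset ℕ, (T ⊆ X ∧ T.card = 3) ↔ ∃ i, T ∈ C i) ∧
    ∀ (T : Finset ℕ) (i j : Fin (v - 2)), T ∈ C i → T ∈ C j → i = j

/-- A t-wise balanced design S(t, K, v) with block sizes from the set `K`. -/
def IsTBD (t : ℕ) (K : Set ℕ) (v : ℕ) (X : Finset ℕ) (B : Finset (Finset ℕ)) : Prop :=
  X.card = v ∧ (∀ b ∈ B, b ⊆ X ∧ b.card ∈ K) ∧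
  ∀ T ⊆ X, T.card = t → ∃! b, b ∈ B ∧ T ⊆ b

/-- A group divisible design GDD(t, K, g*n) of type g^n: `Gs` is a partition of
`X` into `n` groups of size `g`; blocks have sizes in `K`, meet every group in
at most one point, and every t-subset of `X` meeting every group in at most one
point lies in exactly one block. -/
def IsGDD (t : ℕ) (K : Set ℕ) (g n : ℕ) (X : Finset ℕ)
    (Gs Bs : Finset (Finset ℕ)) : Prop :=
  X.card = g * n ∧ Gs.card = n ∧
  (∀ G ∈ Gs, G ⊆ X ∧ G.card = g) ∧
  (∀ x ∈ X, ∃! G, G ∈ Gs ∧ x ∈ G) ∧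
  (∀ b ∈ Bs, b ⊆ X ∧ b.card ∈ K) ∧
  (∀ b ∈ Bs, ∀ G ∈ Gs, (b ∩ G).card ≤ 1) ∧
  ∀ T ⊆ X, T.card = t → (∀ G ∈ Gs, (T ∩ G).card ≤ 1) → ∃! b, b ∈ Bs ∧ T ⊆ b

/-- An RDGDD(t, K, g*n) of type g^n: a GDD whose derived design at every point
(on point set `X \ G`, where `G` is the group of the point) is resolvable. -/
def IsRDGDD (t : ℕ) (K : Set ℕ) (g n : ℕ) (X : Finset ℕ)
    (Gs Bs : Finset (Finset ℕ)) : Prop :=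
  IsGDD t K g n X Gs Bs ∧
  ∀ x ∈ X, ∀ G ∈ Gs, x ∈ G → Resolvable (X \ G) (derivedBlocks Bs x)

/-- An RDSQS*(v): an SQS(v) with v ≡ 1 (mod 3) such that, for every point `x`,
the derived blocks at `x` contain a parallel class `P'` (enumerated by `Bk`);
the multiset consisting of each triple of `P'` three times and each remaining
derived triple twice can be partitioned into (v-1) parallel classes
`P k l` (k ranging over Fin ((v-1)/3), l over Fin 3); and for each `k` the three
parallel classes `P k l` share the common triple `Bk k`. -/
def IsRDSQSstar (v : ℕ) (X : Finset ℕ) (B : Finset (Finset ℕ)) : Prop :=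
  IsSteiner 3 4 v X B ∧ v % 3 = 1 ∧
  ∀ x ∈ X, ∃ (P' : Finset (Finset ℕ)) (Bk : Fin ((v - 1) / 3) → Finset ℕ)
    (P : Fin ((v - 1) / 3) → Fin 3 → Finset (Finset ℕ)),
    P' ⊆ derivedBlocks B x ∧
    IsParallelClass (X.erase x) P' ∧
    (∀ k, Bk k ∈ P') ∧
    (∀ b ∈ P', ∃ k, Bk k = b) ∧
    Function.Injective Bk ∧
    (∀ k l, IsParallelClass (X.erase x) (P k l)) ∧
    ((∑ k, ∑ l, (P k l).val) =
        3 • P'.val + 2 • ((derivedBlocks B x) \ P').val) ∧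
    ∀ k l, Bk k ∈ P k l

/-!
A quadruple system is encoded by the operation `q x y z` giving the fourth point of a block; then
`q o` is the addition of a Steiner loop with zero `o`, whose triples `{x, y, x + y}` form the
derived design at `o`. The base system lives on the projective line over the field with 27
elements, with the images of the projective line over `F₃` as blocks: all of its derived designs
are isomorphic to that at infinity, the affine space of dimension 3 over `F₃`, and are resolved by
parallelism.

Multiplying a system by the affine plane `F4` multiplies its size by 4 and each derived loop by
`F4`. What propagates through this product is a starred Kirkman structure, which attaches a parallel
class to every point: the line through that point of a fixed spread belongs to the class, and every
triple outside the spread lies in exactly two classes. Above each line of the spread of `α`, the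
product `α × F4` is a copy of `F16`, where explicit structures are available; the triples above the
remaining triples of `α` are separated by means of an auxiliary labelling of the points of each
triple by the nonzero elements of `F4`. The same data yield a resolution of the product, and the
affine space of dimension 3 over `F₃` has a starred Kirkman structure to start the induction.
-/

namespace RDSQS

universe u

/-! ### Steiner loops and Kirkman colourings -/

/-- A Steiner loop: the triples `{x, y, x + y}` with `x`, `y` distinct and nonzero form a Steiner
triple system on the nonzero elements. -/
class IsSteinerLoop (α : Type*) [Zero α] [Add α] : Prop where
  protected add_comm (x y : α) : x + y = y + x
  protected zero_add (x : α) : 0 + x = x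
  add_add_cancel (x y : α) : x + (x + y) = y

/-- The pairs of points that determine a triple of a Steiner loop. -/
def SpansTriple {α : Type*} [Zero α] (x y : α) : Prop :=
  x ≠ 0 ∧ y ≠ 0 ∧ x ≠ y

instance {α : Type*} [Zero α] [DecidableEq α] (x y : α) : Decidable (SpansTriple x y) :=
  inferInstanceAs (Decidable (_ ∧ _ ∧ _))

/-- The triple of a Steiner loop through two points. -/
def triple {α : Type*} [Add α] [DecidableEq α] (x y : α) : Finset α :=
  {x, y, x + y}

/-- A resolution of the triple system of a Steiner loop, given by the parallel class `c x y` of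
the triple through `x` and `y`; the value of `c` is irrelevant on pairs not spanning a triple. -/
structure IsKirkmanColouring {α C : Type*} [Zero α] [Add α] (c : α → α → C) : Prop where
  comm {x y : α} : SpansTriple x y → c x y = c y x
  add_right {x y : α} : SpansTriple x y → c x (x + y) = c x y
  eq_or_eq_add {x y y' : α} : SpansTriple x y → SpansTriple x y' → c x y = c x y' →
    y' = y ∨ y' = x + y
  exists_eq {x y x' : α} : SpansTriple x y → x' ≠ 0 → ∃ y', SpansTriple x' y' ∧ c x' y' = c x y

/-- The triple system of a Steiner loop is resolvable. -/
def IsKirkman (α : Type u) [Zero α] [Add α] : Prop :=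
  ∃ (C : Type u) (c : α → α → C), IsKirkmanColouring c

namespace IsSteinerLoop

variable {α : Type*} [Zero α] [Add α] [IsSteinerLoop α] {x y : α}

protected lemma add_zero (x : α) : x + 0 = x := by
  rw [IsSteinerLoop.add_comm, IsSteinerLoop.zero_add]

protected lemma add_self (x : α) : x + x = 0 := by
  simpa only [IsSteinerLoop.add_zero] using add_add_cancel x 0

lemma add_add_cancel_right (x y : α) : x + y + y = x := by
  rw [IsSteinerLoop.add_comm, IsSteinerLoop.add_comm x, add_add_cancel]

lemma add_add_cancel_left (x y : α) : x + y + x = y := by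
  rw [IsSteinerLoop.add_comm, add_add_cancel]

lemma eq_of_add_eq_zero (h : x + y = 0) : x = y := by
  rw [← add_add_cancel x y, h, IsSteinerLoop.add_zero]

lemma eq_zero_of_add_eq_left (h : x + y = x) : y = 0 := by
  rw [← add_add_cancel x y, h, IsSteinerLoop.add_self]

end IsSteinerLoop

namespace SpansTriple

variable {α : Type*} [Zero α] {x y : α}

lemma symm (h : SpansTriple x y) : SpansTriple y x :=
  ⟨h.2.1, h.1, h.2.2.symm⟩

variable [Add α] [IsSteinerLoop α]

lemma add_right (h : SpansTriple x y) : SpansTriple x (x + y) :=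
  ⟨h.1, fun h0 ↦ h.2.2 (IsSteinerLoop.eq_of_add_eq_zero h0),
    fun hx ↦ h.2.1 (IsSteinerLoop.eq_zero_of_add_eq_left hx.symm)⟩

end SpansTriple

section Triple

variable {α : Type*} [Add α] [DecidableEq α] {x y u v : α}

lemma mem_triple : u ∈ triple x y ↔ u = x ∨ u = y ∨ u = x + y := by
  simp only [triple, mem_insert, mem_singleton]

variable [Zero α] [IsSteinerLoop α]

lemma triple_comm (x y : α) : triple x y = triple y x := by
  ext u
  rw [mem_triple, mem_triple, IsSteinerLoop.add_comm x y, or_left_comm]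

lemma triple_add_right (x y : α) : triple x (x + y) = triple x y := by
  ext u
  rw [mem_triple, mem_triple, IsSteinerLoop.add_add_cancel, or_comm (a := u = x + y)]

lemma triple_eq_of_mem (h : SpansTriple x y) (hy : y ∈ triple x v) : triple x y = triple x v := by
  rcases mem_triple.1 hy with rfl | rfl | rfl
  · exact absurd rfl h.2.2
  · rfl
  · exact triple_add_right x v

lemma SpansTriple.zero_notMem_triple (h : SpansTriple x y) : (0 : α) ∉ triple x y := by
  intro h0
  rcases mem_triple.1 h0 with h0 | h0 | h0
  exacts [h.1 h0.symm, h.2.1 h0.symm, h.add_right.2.1 h0.symm]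

lemma IsKirkmanColouring.exists_of_mem_triple {C : Type*} {c : α → α → C}
    (hc : IsKirkmanColouring c) (h : SpansTriple x y) (hu : u ∈ triple x y) :
    ∃ v, SpansTriple u v ∧ triple u v = triple x y ∧ c u v = c x y := by
  rcases mem_triple.1 hu with rfl | rfl | rfl
  · exact ⟨y, h, rfl, rfl⟩
  · exact ⟨x, h.symm, triple_comm u x, hc.comm h.symm⟩
  · refine ⟨x, h.add_right.symm, ?_, ?_⟩
    · rw [triple_comm, triple_add_right]
    · rw [← hc.comm h.add_right, hc.add_right h]

lemma IsKirkmanColouring.eq_of_triple_eq {C : Type*} {c : α → α → C}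
    (hc : IsKirkmanColouring c) (h : SpansTriple x y) (h' : SpansTriple u v)
    (ht : triple x y = triple u v) : c x y = c u v := by
  obtain ⟨w, hxw, htw, hcw⟩ := hc.exists_of_mem_triple h' (ht ▸ mem_triple.2 (Or.inl rfl))
  have hy : y ∈ triple x w := htw.trans ht.symm ▸ mem_triple.2 (Or.inr (Or.inl rfl))
  rcases mem_triple.1 hy with rfl | rfl | rfl
  · exact absurd rfl h.2.2
  · exact hcw
  · rw [hc.add_right hxw, hcw]

end Triple

section Resolvable

lemma resolvable_of_finite {ι : Type*} [Finite ι] {Y : Finset ℕ} {B : Finset (Finset ℕ)}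
    (P : ι → Finset (Finset ℕ)) (hP : ∀ i, IsParallelClass Y (P i)) (hPB : ∀ i, P i ⊆ B)
    (hB : ∀ b ∈ B, ∃! i, b ∈ P i) : Resolvable Y B := by
  obtain ⟨r, ⟨e⟩⟩ := Finite.exists_equiv_fin ι
  refine ⟨r, P ∘ e.symm, fun i ↦ hP _, fun i ↦ hPB _, fun b hb ↦ ?_⟩
  obtain ⟨i, hi, huniq⟩ := hB b hb
  refine ⟨e i, by simpa using hi, fun j hj ↦ ?_⟩
  rw [← huniq _ hj, e.apply_symm_apply]

variable {α C : Type*} [Zero α] [Add α] [Fintype α] [DecidableEq α]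

open Classical in
/-- The triples of a finite Steiner loop, relabelled by natural numbers. -/
noncomputable def tripleBlocks (f : α ↪ ℕ) : Finset (Finset ℕ) :=
  {p : α × α | SpansTriple p.1 p.2}.toFinset.image fun p ↦ (triple p.1 p.2).map f

open Classical in
/-- The triples of colour `i`, relabelled by natural numbers. -/
noncomputable def colourClass (c : α → α → C) (f : α ↪ ℕ) (i : C) : Finset (Finset ℕ) :=
  {p : α × α | SpansTriple p.1 p.2 ∧ c p.1 p.2 = i}.toFinset.image fun p ↦ (triple p.1 p.2).map f

lemma mem_tripleBlocks {f : α ↪ ℕ} {b : Finset ℕ} :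
    b ∈ tripleBlocks f ↔ ∃ x y : α, SpansTriple x y ∧ (triple x y).map f = b := by
  simp [tripleBlocks]

lemma mem_colourClass {c : α → α → C} {f : α ↪ ℕ} {i : C} {b : Finset ℕ} :
    b ∈ colourClass c f i ↔ ∃ x y, (SpansTriple x y ∧ c x y = i) ∧ (triple x y).map f = b := by
  simp [colourClass]

variable [IsSteinerLoop α] {c : α → α → C}

lemma IsKirkmanColouring.isParallelClass_colourClass (hc : IsKirkmanColouring c) (f : α ↪ ℕ)
    {u v : α} (huv : SpansTriple u v) :
    IsParallelClass ((univ.erase 0).map f) (colourClass c f (c u v)) := by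
  refine ⟨fun b hb ↦ ?_, fun n hn ↦ ?_⟩
  · obtain ⟨x, y, ⟨h, -⟩, rfl⟩ := mem_colourClass.1 hb
    exact map_subset_map.2 fun z hz ↦
      mem_erase.2 ⟨fun h0 ↦ h.zero_notMem_triple (h0 ▸ hz), mem_univ z⟩
  · obtain ⟨x, hx, rfl⟩ := mem_map.1 hn
    obtain ⟨y, hxy, hcy⟩ := hc.exists_eq huv (ne_of_mem_erase hx)
    refine ⟨(triple x y).map f, ⟨mem_colourClass.2 ⟨x, y, ⟨hxy, hcy⟩, rfl⟩,
      mem_map_of_mem f (mem_triple.2 (Or.inl rfl))⟩, ?_⟩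
    rintro b ⟨hb, hxb⟩
    obtain ⟨x', y', ⟨h', hc'⟩, rfl⟩ := mem_colourClass.1 hb
    obtain ⟨w, hxw, htw, hcw⟩ := hc.exists_of_mem_triple h' ((mem_map' f).1 hxb)
    have hw : w ∈ triple x y :=
      mem_triple.2 (Or.inr (hc.eq_or_eq_add hxy hxw (hcy.trans (hcw.trans hc').symm)))
    rw [← htw, triple_eq_of_mem hxw hw]

lemma resolvable_tripleBlocks (h : IsKirkman α) (f : α ↪ ℕ) :
    Resolvable ((univ.erase (0 : α)).map f) (tripleBlocks f) := by
  obtain ⟨C, c, hc⟩ := h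
  let colours : Set C := {i | ∃ x y, SpansTriple x y ∧ c x y = i}
  have : Finite colours := (Set.finite_range fun p : α × α ↦ c p.1 p.2).subset
    fun i ⟨x, y, _, hi⟩ ↦ ⟨(x, y), hi⟩
  refine resolvable_of_finite (fun i : colours ↦ colourClass c f i) ?_ ?_ ?_
  · rintro ⟨-, u, v, huv, rfl⟩
    exact hc.isParallelClass_colourClass f huv
  · intro i b hb
    obtain ⟨x, y, ⟨h, -⟩, hb⟩ := mem_colourClass.1 hb
    exact mem_tripleBlocks.2 ⟨x, y, h, hb⟩
  · intro b hb
    obtain ⟨x, y, h, rfl⟩ := mem_tripleBlocks.1 hb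
    refine ⟨⟨c x y, x, y, h, rfl⟩, mem_colourClass.2 ⟨x, y, ⟨h, rfl⟩, rfl⟩, fun i hi ↦ ?_⟩
    obtain ⟨x', y', ⟨h', hi⟩, ht⟩ := mem_colourClass.1 hi
    exact Subtype.ext (hi.symm.trans (hc.eq_of_triple_eq h' h (map_injective f ht)))

end Resolvable

/-! ### Steiner skeins -/

/-- The triples of points that determine a block of a quadruple system. -/
def PairwiseNe {α : Type*} (x y z : α) : Prop := x ≠ y ∧ x ≠ z ∧ y ≠ z

/-- A Steiner skein: `op x y z` is the fourth point of the block through `x`, `y` and `z` of a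
Steiner quadruple system, extended to repeated points so that every derived operation `op o` is
a Steiner loop with zero element `o`. -/
structure Skein (α : Type*) where
  op : α → α → α → α
  op_swap_left (x y z : α) : op x y z = op y x z
  op_swap_right (x y z : α) : op x y z = op x z y
  op_self (x y : α) : op x y y = x
  op_op (x y z : α) : op x y (op x y z) = z

namespace Skein

/-- The Steiner loop of the derived triple system of a skein at a point, which becomes the zero
element. -/
def Derived {α : Type*} (_ : Skein α) (_ : α) : Type _ := α

section Blocks

variable {α : Type*} (q : Skein α)

instance (o : α) : Zero (q.Derived o) := ⟨o⟩

instance (o : α) : Add (q.Derived o) := ⟨q.op o⟩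

instance (o : α) [DecidableEq α] : DecidableEq (q.Derived o) := ‹DecidableEq α›

instance (o : α) [Fintype α] : Fintype (q.Derived o) := ‹Fintype α›

instance (o : α) : IsSteinerLoop (q.Derived o) where
  add_comm := q.op_swap_right o
  zero_add (y : α) :=
    (q.op_swap_right o o y).trans ((q.op_swap_left o y o).trans (q.op_self y o))
  add_add_cancel := q.op_op o

variable {o u v w x y z : α}

lemma op_ne_left (hyz : y ≠ z) : q.op x y z ≠ x := fun h ↦
  hyz (by rw [← q.op_op x y z, h, q.op_swap_left, q.op_self])

lemma op_ne_mid (hxz : x ≠ z) : q.op x y z ≠ y := by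
  rw [q.op_swap_left]
  exact q.op_ne_left hxz

lemma op_ne_right (hxy : x ≠ y) : q.op x y z ≠ z := by
  rw [q.op_swap_right]
  exact q.op_ne_mid hxy

variable [DecidableEq α]

/-- The block of the quadruple system through three points. -/
def block (x y z : α) : Finset α := {x, y, z, q.op x y z}

lemma block_swap_left (x y z : α) : q.block x y z = q.block y x z := by
  rw [block, block, Finset.insert_comm, q.op_swap_left]

lemma block_swap_right (x y z : α) : q.block x y z = q.block x z y := by
  rw [block, block, Finset.insert_comm y, q.op_swap_right]

lemma block_op (x y z : α) : q.block x y (q.op x y z) = q.block x y z := by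
  rw [block, block, q.op_op, pair_comm]

lemma erase_block (h : SpansTriple (α := q.Derived o) y z) :
    (q.block o y z).erase o = triple (α := q.Derived o) y z :=
  erase_insert h.zero_notMem_triple

lemma card_block (h : PairwiseNe x y z) : #(q.block x y z) = 4 := by
  have h₃ : #{y, z, q.op x y z} = 3 :=
    card_eq_three.2 ⟨y, z, _, h.2.2, (q.op_ne_mid h.2.1).symm, (q.op_ne_right h.1).symm, rfl⟩
  rw [block, card_insert_of_notMem, h₃]
  simpa only [mem_insert, mem_singleton, not_or] using ⟨h.1, h.2.1, (q.op_ne_left h.2.2).symm⟩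

variable {q}

lemma exists_block_eq_of_mem (h : PairwiseNe u v w) (hx : x ∈ q.block u v w) :
    ∃ y z, PairwiseNe x y z ∧ q.block x y z = q.block u v w := by
  simp only [block, mem_insert, mem_singleton] at hx
  rcases hx with rfl | rfl | rfl | rfl
  · exact ⟨v, w, h, rfl⟩
  · exact ⟨u, w, ⟨h.1.symm, h.2.2, h.2.1⟩, q.block_swap_left ..⟩
  · exact ⟨u, v, ⟨h.2.1.symm, h.2.2.symm, h.1⟩, by rw [q.block_swap_left, q.block_swap_right]⟩
  · refine ⟨u, v, ⟨q.op_ne_left h.2.2, q.op_ne_mid h.2.1, h.1⟩, ?_⟩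
    rw [q.block_swap_left, q.block_swap_right, q.block_op]

lemma exists_block_eq_of_mem_of_ne (hy : y ∈ q.block x v w) (hxy : x ≠ y) :
    ∃ z, q.block x y z = q.block x v w := by
  simp only [block, mem_insert, mem_singleton] at hy
  rcases hy with rfl | rfl | rfl | rfl
  · exact absurd rfl hxy
  · exact ⟨w, rfl⟩
  · exact ⟨v, q.block_swap_right ..⟩
  · exact ⟨v, by rw [q.block_swap_right, q.block_op]⟩

lemma block_eq_of_mem (h : PairwiseNe u v w) (h' : PairwiseNe x y z) (hx : x ∈ q.block u v w)
    (hy : y ∈ q.block u v w) (hz : z ∈ q.block u v w) : q.block x y z = q.block u v w := by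
  obtain ⟨v', w', -, hb⟩ := exists_block_eq_of_mem h hx
  rw [← hb] at hy hz ⊢
  obtain ⟨w'', hb'⟩ := exists_block_eq_of_mem_of_ne hy h'.1
  rw [← hb'] at hz ⊢
  simp only [block, mem_insert, mem_singleton] at hz
  rcases hz with rfl | rfl | rfl | rfl
  · exact absurd rfl h'.2.1
  · exact absurd rfl h'.2.2
  · rfl
  · exact q.block_op ..

variable [Fintype α] (q)

open Classical in
/-- The blocks of the quadruple system, relabelled by natural numbers. -/
noncomputable def blocks (f : α ↪ ℕ) : Finset (Finset ℕ) :=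
  {p : α × α × α | PairwiseNe p.1 p.2.1 p.2.2}.toFinset.image
    fun p ↦ (q.block p.1 p.2.1 p.2.2).map f

variable {q}

lemma mem_blocks {f : α ↪ ℕ} {b : Finset ℕ} : b ∈ q.blocks f ↔
    ∃ x y z, PairwiseNe x y z ∧ (q.block x y z).map f = b := by
  simp [blocks]

lemma exists_eq_block_of_mem {f : α ↪ ℕ} {b : Finset ℕ} (hb : b ∈ q.blocks f) (ho : f o ∈ b) :
    ∃ y z, PairwiseNe o y z ∧ (q.block o y z).map f = b := by
  obtain ⟨u, v, w, h, rfl⟩ := mem_blocks.1 hb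
  obtain ⟨y, z, hyz, hblock⟩ := exists_block_eq_of_mem h ((mem_map' f).1 ho)
  exact ⟨y, z, hyz, by rw [hblock]⟩

variable (q)

lemma isSteiner_blocks (f : α ↪ ℕ) :
    IsSteiner 3 4 (Fintype.card α) (univ.map f) (q.blocks f) := by
  refine ⟨by rw [card_map, card_univ], fun b hb ↦ ?_, fun T hT hcard ↦ ?_⟩
  · obtain ⟨x, y, z, h, rfl⟩ := mem_blocks.1 hb
    exact ⟨map_subset_map.2 (subset_univ _), by rw [card_map, q.card_block h]⟩
  · obtain ⟨S, -, rfl⟩ := subset_map_iff.1 hT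
    obtain ⟨x, y, z, hxy, hxz, hyz, rfl⟩ := card_eq_three.1 (card_map f ▸ hcard)
    have h : PairwiseNe x y z := ⟨hxy, hxz, hyz⟩
    refine ⟨(q.block x y z).map f, ⟨mem_blocks.2 ⟨x, y, z, h, rfl⟩, map_subset_map.2 ?_⟩, ?_⟩
    · intro w hw
      simp only [mem_insert, mem_singleton] at hw
      simp only [block, mem_insert, mem_singleton]
      tauto
    · rintro b ⟨hb, hsub⟩
      obtain ⟨u, v, w, huvw, rfl⟩ := mem_blocks.1 hb
      simp only [map_subset_map, insert_subset_iff, singleton_subset_iff] at hsub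
      rw [block_eq_of_mem huvw h hsub.1 hsub.2.1 hsub.2.2]

lemma mem_tripleBlocks_derived {f : α ↪ ℕ} {b : Finset ℕ} :
    b ∈ tripleBlocks (α := q.Derived o) f ↔
      ∃ y z, PairwiseNe o y z ∧ ((q.block o y z).erase o).map f = b := by
  refine mem_tripleBlocks.trans ⟨?_, ?_⟩
  · rintro ⟨y, z, h, rfl⟩
    exact ⟨y, z, ⟨h.1.symm, h.2.1.symm, h.2.2⟩, congrArg (Finset.map f) (q.erase_block h)⟩
  · rintro ⟨y, z, h, rfl⟩
    have h' : SpansTriple (α := q.Derived o) y z := ⟨h.1.symm, h.2.1.symm, h.2.2⟩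
    exact ⟨y, z, h', congrArg (Finset.map f) (q.erase_block h').symm⟩

lemma derivedBlocks_blocks (f : α ↪ ℕ) (o : α) :
    derivedBlocks (q.blocks f) (f o) = tripleBlocks (α := q.Derived o) f := by
  ext b
  rw [mem_tripleBlocks_derived]
  simp only [derivedBlocks, mem_image, mem_filter]
  constructor
  · rintro ⟨b, ⟨hb, ho⟩, rfl⟩
    obtain ⟨y, z, h, rfl⟩ := exists_eq_block_of_mem hb ho
    exact ⟨y, z, h, map_erase ..⟩
  · rintro ⟨y, z, h, rfl⟩
    exact ⟨_, ⟨mem_blocks.2 ⟨o, y, z, h, rfl⟩, mem_map_of_mem f (mem_insert_self ..)⟩,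
      (map_erase ..).symm⟩

end Blocks

theorem existsRDSQS {α : Type*} [Fintype α] (q : Skein α) (hq : ∀ o, IsKirkman (q.Derived o)) :
    ExistsRDSQS (Fintype.card α) := by
  classical
  let f : α ↪ ℕ := (Fintype.equivFin α).toEmbedding.trans Fin.valEmbedding
  refine ⟨univ.map f, q.blocks f, q.isSteiner_blocks f, fun n hn ↦ ?_⟩
  obtain ⟨o, -, rfl⟩ := mem_map.1 hn
  rw [derivedBlocks_blocks, ← map_erase]
  exact resolvable_tripleBlocks (hq o) f

end Skein

open scoped QuadraticAlgebra

/-! ### Spreads and starred Kirkman structures -/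

/-- The field with four elements, generated by `ω` with `ω ^ 2 = 1 + ω`. -/
abbrev F4 : Type := QuadraticAlgebra (ZMod 2) 1 1

/-- The field with sixteen elements, generated over `F4 = F₂(ω)` by `ω'` with
`ω' ^ 2 = ω + ω'`. -/
abbrev F16 : Type := QuadraticAlgebra F4 ω 1

instance : Fintype F4 := .ofEquiv _ (QuadraticAlgebra.equivProd 1 1).symm

instance : Fintype F16 := .ofEquiv _ (QuadraticAlgebra.equivProd ω 1).symm

instance : Fact (∀ a : ZMod 2, a ^ 2 ≠ 1 + 1 * a) := ⟨by decide⟩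

instance : Fact (∀ a : F4, a ^ 2 ≠ ω + 1 * a) := ⟨by decide⟩

lemma IsSteinerLoop.of_add_self {α : Type*} [AddCommGroup α] (h : ∀ x : α, x + x = 0) :
    IsSteinerLoop α where
  add_comm := add_comm
  zero_add := zero_add
  add_add_cancel x y := by rw [← add_assoc, h, zero_add]

instance : IsSteinerLoop F4 := .of_add_self (by decide)

instance : IsSteinerLoop F16 := .of_add_self (by decide)

instance {α β : Type*} [Zero α] [Add α] [IsSteinerLoop α] [Zero β] [Add β] [IsSteinerLoop β] :
    IsSteinerLoop (α × β) where
  add_comm _ _ := Prod.ext (IsSteinerLoop.add_comm ..) (IsSteinerLoop.add_comm ..)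
  zero_add _ := Prod.ext (IsSteinerLoop.zero_add _) (IsSteinerLoop.zero_add _)
  add_add_cancel _ _ :=
    Prod.ext (IsSteinerLoop.add_add_cancel ..) (IsSteinerLoop.add_add_cancel ..)

/-- A spread of a Steiner loop: a parallel class of triples, each with its points labelled by the
nonzero elements of `F4`. It is encoded by an action of `F4` whose lines `F4 • x` are the triples
of the class together with `0`. -/
class Spread (α : Type*) [Zero α] [Add α] extends MulActionWithZero F4 α where
  add_smul (a b : F4) (x : α) : (a + b) • x = a • x + b • x
  label : α → F4
  label_smul (a : F4) (x : α) : label (a • x) = a * label x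
  eq_zero_of_label (x : α) : label x = 0 → x = 0
  exists_label_eq_one : ∃ x, label x = 1

namespace Spread

variable {α : Type*} [Zero α] [Add α] [Spread α] {k k' x y : α} {a b : F4}

lemma label_zero : label (0 : α) = 0 := by
  rw [← zero_smul F4 (0 : α), label_smul, zero_mul]

lemma label_smul_of_label_eq_one (hk : label k = 1) (a : F4) : label (a • k) = a := by
  rw [label_smul, hk, mul_one]

lemma eq_of_smul_eq_smul (hk : label k = 1) (hk' : label k' = 1) (ha : a ≠ 0)
    (h : a • k = b • k') : k = k' := by
  have hab : a = b := by
    rw [← label_smul_of_label_eq_one hk a, h, label_smul_of_label_eq_one hk']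
  rw [← inv_smul_smul₀ ha k, h, ← hab, inv_smul_smul₀ ha]

/-- Two points lie on a common line `F4 • k`. -/
def OnLine (x y : α) : Prop := ∃ (k : α) (a b : F4), x = a • k ∧ y = b • k

lemma OnLine.symm : OnLine x y → OnLine y x :=
  fun ⟨k, a, b, hx, hy⟩ ↦ ⟨k, b, a, hy, hx⟩

lemma onLine_zero_right (x : α) : OnLine x 0 :=
  ⟨x, 1, 0, (one_smul F4 x).symm, (zero_smul F4 x).symm⟩

lemma onLine_self (x : α) : OnLine x x :=
  ⟨x, 1, 1, (one_smul F4 x).symm, (one_smul F4 x).symm⟩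

lemma spansTriple_of_not_onLine (h : ¬OnLine x y) : SpansTriple x y :=
  ⟨fun hx ↦ h (hx ▸ (onLine_zero_right y).symm), fun hy ↦ h (hy ▸ onLine_zero_right x),
    fun hxy ↦ h (hxy ▸ onLine_self x)⟩

lemma OnLine.add_right : OnLine x y → OnLine x (x + y) :=
  fun ⟨k, a, b, hx, hy⟩ ↦ ⟨k, a, a + b, hx, by rw [add_smul, hx, hy]⟩

lemma onLine_add_right_iff [IsSteinerLoop α] : OnLine x (x + y) ↔ OnLine x y :=
  ⟨fun h ↦ by simpa only [IsSteinerLoop.add_add_cancel] using h.add_right, .add_right⟩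

lemma OnLine.exists_label_eq_one (h : OnLine x y) :
    ∃ k, label k = 1 ∧ x = label x • k ∧ y = label y • k := by
  obtain ⟨k, a, b, rfl, rfl⟩ := h
  by_cases hk : label k = 0
  · obtain ⟨k', hk'⟩ := Spread.exists_label_eq_one (α := α)
    exact ⟨k', hk', by simp [eq_zero_of_label k hk, label_zero]⟩
  · refine ⟨(label k)⁻¹ • k, ?_, ?_⟩
    · rw [label_smul, inv_mul_cancel₀ hk]
    · simp only [label_smul, mul_smul, smul_inv_smul₀ hk, and_self]

lemma eq_or_eq_add_of_onLine {y' : α} (h : SpansTriple x y) (h' : SpansTriple x y')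
    (hy : OnLine x y) (hy' : OnLine x y') : y' = y ∨ y' = x + y := by
  obtain ⟨k, hk, hxk, hyk⟩ := hy.exists_label_eq_one
  obtain ⟨k', hk', hxk', hyk'⟩ := hy'.exists_label_eq_one
  have label_ne_zero {x : α} (hx : x ≠ 0) : label x ≠ 0 := mt (eq_zero_of_label x) hx
  obtain rfl : k = k' := eq_of_smul_eq_smul hk hk' (label_ne_zero h.1) (hxk.symm.trans hxk')
  have label_ne {y : α} (hy : y = label y • k) (hne : x ≠ y) : label x ≠ label y :=
    fun hl ↦ hne (by rw [hxk, hy, hl])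
  have eq_or_eq_add : ∀ a b b' : F4, a ≠ 0 → b ≠ 0 → b' ≠ 0 → a ≠ b → a ≠ b' →
      b' = b ∨ b' = a + b := by decide +kernel
  refine (eq_or_eq_add _ _ _ (label_ne_zero h.1) (label_ne_zero h.2.1) (label_ne_zero h'.2.1)
    (label_ne hyk h.2.2) (label_ne hyk' h'.2.2)).imp (fun hl ↦ ?_) fun hl ↦ ?_
  · rw [hyk', hl, ← hyk]
  · rw [hyk', hl, add_smul, ← hxk, ← hyk]

/-- The point with label `1` on the line through `x` and `y`, for `x`, `y` on a common line and
not both `0`. -/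
def axis [DecidableEq α] (x y : α) : α :=
  if x = 0 then (label y)⁻¹ • y else (label x)⁻¹ • x

lemma axis_smul_smul [DecidableEq α] (hk : label k = 1) (hab : a ≠ 0 ∨ b ≠ 0) :
    axis (a • k) (b • k) = k := by
  have smul_eq_zero_iff : a • k = 0 ↔ a = 0 :=
    ⟨fun h ↦ by rw [← label_smul_of_label_eq_one hk a, h, label_zero], fun h ↦ by simp [h]⟩
  by_cases ha : a = 0
  · have hb := hab.resolve_left (not_not.2 ha)
    rw [axis, if_pos (smul_eq_zero_iff.2 ha), label_smul_of_label_eq_one hk, inv_smul_smul₀ hb]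
  · rw [axis, if_neg (mt smul_eq_zero_iff.1 ha), label_smul_of_label_eq_one hk,
      inv_smul_smul₀ ha]

end Spread

open Spread

/-- A starred Kirkman structure: every point `w ≠ 0` has a parallel class, consisting of the line
`F4 • w` of the spread and of the triples `{x, y, x + y}` with `w = z ε x y` for some `ε`, so that
every triple outside the spread lies in two classes. The value of `z` is irrelevant on pairs of
points on a common line. -/
structure IsStar {α : Type*} [Zero α] [Add α] [Spread α] (z : ZMod 2 → α → α → α) : Prop where
  comm {ε : ZMod 2} {x y : α} : ¬OnLine x y → z ε x y = z ε y x
  add_right {ε : ZMod 2} {x y : α} : ¬OnLine x y → z ε x (x + y) = z ε x y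
  not_onLine {ε : ZMod 2} {x y : α} : ¬OnLine x y → ¬OnLine x (z ε x y)
  exists_eq {x w : α} : ¬OnLine x w → ∃ ε y, ¬OnLine x y ∧ z ε x y = w
  eq_and_eq_or_eq_add {ε ε' : ZMod 2} {x y y' : α} : ¬OnLine x y → ¬OnLine x y' →
    z ε x y = z ε' x y' → ε = ε' ∧ (y' = y ∨ y' = x + y)

/-- The loop carries a starred Kirkman structure. -/
def HasStar (α : Type*) [Zero α] [Add α] : Prop :=
  ∃ (_ : Spread α) (z : ZMod 2 → α → α → α), IsStar z

/-! ### The field with sixteen elements -/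

namespace F16

instance : Spread F16 where
  add_smul := add_smul
  label x := if x.re = 0 then x.im else x.re
  label_smul := by decide +kernel
  eq_zero_of_label := by decide +kernel
  exists_label_eq_one := ⟨1, by decide +kernel⟩

lemma onLine_iff {x y : F16} : OnLine x y ↔ x.re * y.im = x.im * y.re := by
  constructor
  · rintro ⟨k, a, b, rfl, rfl⟩
    simp only [QuadraticAlgebra.re_smul, QuadraticAlgebra.im_smul, smul_eq_mul]
    ring
  · intro h
    by_cases hx : x = 0
    · exact hx ▸ (onLine_zero_right y).symm
    · have exists_smul_eq : ∀ x y : F16, x ≠ 0 → x.re * y.im = x.im * y.re →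
          ∃ b : F4, y = b • x := by decide +kernel
      obtain ⟨b, hb⟩ := exists_smul_eq x y hx h
      exact ⟨x, 1, b, (one_smul F4 x).symm, hb⟩

instance : DecidableRel (OnLine (α := F16)) := fun _ _ ↦ decidable_of_iff' _ onLine_iff

variable {ε ε' : ZMod 2} {c x y y' w : F16}

lemma onLine_of_re_eq_zero (hx : x.re = 0) (hy : y.re = 0) : OnLine x y :=
  onLine_iff.2 (by rw [hx, hy, zero_mul, mul_zero])

lemma re_eq_zero_of_onLine (hx : x ≠ 0) (hre : x.re = 0) (h : OnLine x y) : y.re = 0 := by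
  have him : x.im ≠ 0 := fun him ↦ hx (QuadraticAlgebra.ext hre him)
  have hdet := onLine_iff.1 h
  rw [hre, zero_mul, eq_comm, mul_eq_zero] at hdet
  exact hdet.resolve_left him

lemma onLine_mul_left_iff (hc : c ≠ 0) : OnLine (c * x) (c * y) ↔ OnLine x y := by
  have onLine_mul_left {c x y : F16} : OnLine x y → OnLine (c * x) (c * y) := by
    rintro ⟨k, a, b, rfl, rfl⟩
    exact ⟨c * k, a, b, mul_smul_comm .., mul_smul_comm ..⟩
  refine ⟨fun h ↦ ?_, onLine_mul_left⟩
  simpa only [inv_mul_cancel_left₀ hc] using onLine_mul_left (c := c⁻¹) h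

lemma onLine_iff_onLine_one (hx : x ≠ 0) : OnLine x y ↔ OnLine 1 (x⁻¹ * y) := by
  rw [← onLine_mul_left_iff (x := 1) hx, mul_one, mul_inv_cancel_left₀ hx]

/-- The quadratic form whose values on the three pairs of points of a triple agree. -/
def normForm (x y : F16) : F16 := x ^ 2 + x * y + y ^ 2

/-- The starred Kirkman structure of `F16`. It is a combination, found by computer search, of the
two simplest functions on triples that are homogeneous of degree `1`; the second of these is the
square root of `normForm x y`. -/
def star (ε : ZMod 2) (x y : F16) : F16 :=
  ⟨⟨ε, 1⟩, 1⟩ * (x * y * (x + y) / normForm x y) + (ω : F4) • normForm x y ^ 8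

lemma normForm_mul_left : normForm (c * x) (c * y) = c ^ 2 * normForm x y := by
  rw [normForm, normForm]
  ring

lemma star_mul_left : star ε (c * x) (c * y) = c * star ε x y := by
  have pow_sixteen : ∀ c : F16, c ^ 16 = c := by decide +kernel
  by_cases hc : c = 0
  · simp [hc, star, normForm]
  have hcubic : c * x * (c * y) * (c * x + c * y) / (c ^ 2 * normForm x y) =
      c * (x * y * (x + y) / normForm x y) := by
    rw [show c * x * (c * y) * (c * x + c * y) = c ^ 2 * (c * (x * y * (x + y))) by ring,
      mul_div_mul_left _ _ (pow_ne_zero 2 hc), mul_div_assoc]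
  rw [star, star, normForm_mul_left, hcubic, mul_pow, ← pow_mul, pow_sixteen, mul_add c,
    mul_smul_comm, mul_left_comm]

lemma star_eq_mul_star_one (hx : x ≠ 0) : star ε x y = x * star ε 1 (x⁻¹ * y) := by
  rw [← star_mul_left, mul_one, mul_inv_cancel_left₀ hx]

lemma star_one_add_one : ∀ ε y, star ε 1 (1 + y) = star ε 1 y := by
  decide +kernel

lemma not_onLine_star_one : ∀ ε y, ¬OnLine 1 y → ¬OnLine 1 (star ε 1 y) := by
  decide +kernel

lemma exists_star_one_eq : ∀ w, ¬OnLine 1 w → ∃ ε y, ¬OnLine 1 y ∧ star ε 1 y = w := by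
  decide +kernel

lemma eq_of_star_one_eq : ∀ ε y, ¬OnLine 1 y → ∀ ε' y', ¬OnLine 1 y' →
    star ε 1 y = star ε' 1 y' → ε = ε' ∧ (y' = y ∨ y' = 1 + y) := by
  decide +kernel

lemma isStar_star : IsStar star where
  comm _ := by
    simp only [star, normForm]
    ring_nf
  add_right h := by
    have hx := (spansTriple_of_not_onLine h).1
    rw [star_eq_mul_star_one hx, mul_add, inv_mul_cancel₀ hx, star_one_add_one,
      ← star_eq_mul_star_one hx]
  not_onLine {ε x y} h := by
    have hx := (spansTriple_of_not_onLine h).1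
    rw [onLine_iff_onLine_one hx] at h
    simpa only [star_eq_mul_star_one hx, mul_one, onLine_mul_left_iff hx] using
      mt (onLine_mul_left_iff (x := 1) hx).1 (not_onLine_star_one ε _ h)
  exists_eq {x w} h := by
    have hx := (spansTriple_of_not_onLine h).1
    rw [onLine_iff_onLine_one hx] at h
    obtain ⟨ε, y, hy, hw⟩ := exists_star_one_eq _ h
    refine ⟨ε, x * y, ?_, ?_⟩
    · rwa [onLine_iff_onLine_one hx, inv_mul_cancel_left₀ hx]
    · rw [star_eq_mul_star_one hx, inv_mul_cancel_left₀ hx, hw, mul_inv_cancel_left₀ hx]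
  eq_and_eq_or_eq_add {ε ε' x y y'} h h' heq := by
    have hx := (spansTriple_of_not_onLine h).1
    rw [onLine_iff_onLine_one hx] at h h'
    rw [star_eq_mul_star_one hx, star_eq_mul_star_one hx, mul_right_inj' hx] at heq
    refine (eq_of_star_one_eq _ _ h _ _ h' heq).imp_right (Or.imp (fun hy ↦ ?_) fun hy ↦ ?_)
    · exact mul_left_cancel₀ (inv_ne_zero hx) hy
    · rw [← mul_inv_cancel_left₀ hx y', hy, mul_add, mul_one, mul_inv_cancel_left₀ hx]

/-- An additive map of order `7` that permutes the spreads of a packing of `F16`. -/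
def rotation : F16 →+ F16 where
  toFun x := ⟨⟨x.re.re, x.im.im⟩, ⟨x.re.im + x.im.im, x.im.re⟩⟩
  map_zero' := rfl
  map_add' := by decide +kernel

lemma rotation_injective : Function.Injective rotation := by
  rw [injective_iff_map_eq_zero]
  decide +kernel

lemma exists_onLine_rotation_iff : ∀ x y : F16, SpansTriple x y →
    ∃ i : Fin 7, ∀ j : Fin 7, OnLine (rotation^[j] x) (rotation^[j] y) ↔ i = j := by
  decide +kernel

lemma exists_onLine_rotation : ∀ x : F16, x ≠ 0 → ∀ i : Fin 7,
    ∃ y, SpansTriple x y ∧ OnLine (rotation^[i] x) (rotation^[i] y) := by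
  decide +kernel

/-- The index of the spread of the packing that contains the triple through `x` and `y`. -/
noncomputable def packingIndex (x y : F16) : Fin 7 :=
  Classical.epsilon fun i : Fin 7 ↦ OnLine (rotation^[i] x) (rotation^[i] y)

lemma packingIndex_eq_iff (h : SpansTriple x y) {i : Fin 7} :
    packingIndex x y = i ↔ OnLine (rotation^[i] x) (rotation^[i] y) := by
  obtain ⟨j, hj⟩ := exists_onLine_rotation_iff x y h
  have hindex : packingIndex x y = j :=
    ((hj _).1 (Classical.epsilon_spec
      (p := fun i : Fin 7 ↦ OnLine (rotation^[i] x) (rotation^[i] y)) ⟨j, (hj j).2 rfl⟩)).symm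
  rw [hindex, hj]

/-- The seven spreads of the packing, relabelled by the elements of `F4 × ZMod 2` other than
`(0, 1)`. -/
def packingLabel : Fin 7 → F4 × ZMod 2 :=
  ![(0, 0), (1, 0), (1, 1), (ω, 0), (ω, 1), (ω + 1, 0), (ω + 1, 1)]

/-- The Kirkman colouring of the triples of `F16` by the spreads of a packing. -/
noncomputable def colour (x y : F16) : F4 × ZMod 2 := packingLabel (packingIndex x y)

lemma packingLabel_injective : Function.Injective packingLabel := by
  decide +kernel

lemma exists_packingLabel_eq : ∀ c : F4 × ZMod 2, c ≠ (0, 1) → ∃ i, packingLabel i = c := by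
  decide +kernel

lemma packingLabel_ne : ∀ i, packingLabel i ≠ (0, 1) := by
  decide +kernel

lemma packingLabel_fst_eq_zero_iff : ∀ i, (packingLabel i).1 = 0 ↔ i = 0 := by
  decide +kernel

lemma colour_ne (x y : F16) : colour x y ≠ (0, 1) := packingLabel_ne _

lemma exists_colour_eq (hx : x ≠ 0) {c : F4 × ZMod 2} (hc : c ≠ (0, 1)) :
    ∃ y, SpansTriple x y ∧ colour x y = c := by
  obtain ⟨i, rfl⟩ := exists_packingLabel_eq c hc
  obtain ⟨y, hy, hline⟩ := exists_onLine_rotation x hx i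
  exact ⟨y, hy, congrArg packingLabel ((packingIndex_eq_iff hy).2 hline)⟩

lemma colour_fst_eq_zero_iff (h : SpansTriple x y) : (colour x y).1 = 0 ↔ OnLine x y := by
  rw [colour, packingLabel_fst_eq_zero_iff, packingIndex_eq_iff h]
  rfl

lemma spansTriple_rotation (h : SpansTriple x y) (n : ℕ) :
    SpansTriple (rotation^[n] x) (rotation^[n] y) := by
  have hinj := rotation_injective.iterate n
  have hzero : rotation^[n] 0 = 0 := iterate_map_zero rotation n
  exact ⟨hzero ▸ hinj.ne h.1, hzero ▸ hinj.ne h.2.1, hinj.ne h.2.2⟩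

lemma isKirkmanColouring_colour : IsKirkmanColouring colour where
  comm h := congrArg packingLabel <|
    (packingIndex_eq_iff h).2 ((packingIndex_eq_iff h.symm).1 rfl).symm
  add_right h := congrArg packingLabel <| (packingIndex_eq_iff h.add_right).2 <| by
    rw [iterate_map_add]
    exact ((packingIndex_eq_iff h).1 rfl).add_right
  eq_or_eq_add {x y y'} h h' hcol := by
    have hindex := (packingLabel_injective hcol).symm
    have hline := (packingIndex_eq_iff h).1 rfl
    have hline' := (packingIndex_eq_iff h').1 hindex
    have hinj := rotation_injective.iterate (packingIndex x y)
    refine (eq_or_eq_add_of_onLine (spansTriple_rotation h _) (spansTriple_rotation h' _)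
      hline hline').imp (fun hy ↦ hinj hy) fun hy ↦ hinj ?_
    rw [hy, iterate_map_add]
  exists_eq _ hx := exists_colour_eq hx (colour_ne _ _)

end F16

section TripleLabelling

/-- The label of `a` when the smallest, the middle and the largest of three points `a`, `b`, `c`
are labelled `1`, `ω + 1` and `ω`. -/
def rankLabel {α : Type*} [LinearOrder α] (a b c : α) : F4 :=
  if a < b then (if a < c then 1 else ω + 1) else (if a < c then ω + 1 else ω)

lemma rankLabel_swap {α : Type*} [LinearOrder α] (a b c : α) :
    rankLabel a b c = rankLabel a c b := by
  unfold rankLabel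
  split_ifs <;> rfl

lemma rankLabel_ne_zero {α : Type*} [LinearOrder α] (a b c : α) : rankLabel a b c ≠ 0 := by
  unfold rankLabel
  split_ifs <;> decide

lemma rankLabel_add {α : Type*} [LinearOrder α] {a b c : α} (h : PairwiseNe a b c) :
    rankLabel a b c + rankLabel b c a = rankLabel c a b := by
  have sums : (1 : F4) + ω = ω + 1 ∧ (1 : F4) + (ω + 1) = ω ∧ (ω : F4) + (ω + 1) = 1 := by decide
  obtain ⟨hab, hac, hbc⟩ := h
  unfold rankLabel
  rcases hab.lt_or_gt with hab | hab <;> rcases hac.lt_or_gt with hac | hac <;>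
    rcases hbc.lt_or_gt with hbc | hbc <;> grind

variable {α : Type*}

/-- The combination of the second coordinates of `p` and `r` that is invariant under replacing
`r` by `p + r`, for a triple labelling `L`. -/
def mix (L : α → α → F4) (p r : α × F4) : F4 := L r.1 p.1 * p.2 + L p.1 r.1 * r.2

lemma mix_comm (L : α → α → F4) (p r : α × F4) : mix L p r = mix L r p := add_comm _ _

/-- A labelling of the points of each triple by the nonzero elements of `F4`, each used once:
`L x y` is the label of the point `x` of the triple through `x` and `y`. -/
structure IsTripleLabelling {α : Type*} [Zero α] [Add α] (L : α → α → F4) : Prop where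
  ne_zero (x y : α) : L x y ≠ 0
  add_right {x y : α} : SpansTriple x y → L x (x + y) = L x y
  add_left {x y : α} : SpansTriple x y → L (x + y) x = L x y + L y x

variable [Zero α] [Add α]

lemma exists_isTripleLabelling [IsSteinerLoop α] : ∃ L : α → α → F4, IsTripleLabelling L := by
  classical
  let : LinearOrder α := linearOrderOfSTO WellOrderingRel
  refine ⟨fun x y ↦ rankLabel x y (x + y), ⟨fun x y ↦ rankLabel_ne_zero _ _ _, fun {x y} _ ↦ ?_,
    fun {x y} h ↦ ?_⟩⟩
  · rw [IsSteinerLoop.add_add_cancel, rankLabel_swap]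
  · have hy : y ≠ x + y := IsSteinerLoop.add_comm y x ▸ h.symm.add_right.2.2
    rw [IsSteinerLoop.add_add_cancel_left, IsSteinerLoop.add_comm y x, rankLabel_swap y,
      rankLabel_add ⟨h.2.2, h.add_right.2.2, hy⟩]

variable {L : α → α → F4}

lemma IsTripleLabelling.mix_add_right (hL : IsTripleLabelling L) {p r : α × F4}
    (h : SpansTriple p.1 r.1) : mix L p (p + r) = mix L p r := by
  simp only [mix, Prod.fst_add, Prod.snd_add, hL.add_right h, hL.add_left h, add_mul, mul_add]
  rw [add_comm (L p.1 r.1 * p.2), add_assoc, IsSteinerLoop.add_add_cancel]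

lemma IsTripleLabelling.exists_mix_eq (hL : IsTripleLabelling L) (p : α × F4) (x : α) (m : F4) :
    ∃ b, mix L p (x, b) = m :=
  ⟨(L p.1 x)⁻¹ * (m - L x p.1 * p.2), by
    rw [mix, mul_inv_cancel_left₀ (hL.ne_zero _ _), add_sub_cancel]⟩

lemma IsTripleLabelling.eq_of_mix_eq (hL : IsTripleLabelling L) {p r r' : α × F4}
    (hfst : r'.1 = r.1) (h : mix L p r = mix L p r') : r' = r := by
  rw [mix, mix, hfst, add_right_inj, mul_right_inj' (hL.ne_zero _ _)] at h
  exact Prod.ext hfst h.symm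

lemma IsTripleLabelling.eq_or_eq_add_of_mix_eq (hL : IsTripleLabelling L) {p r r' : α × F4}
    (hr : SpansTriple p.1 r.1) (hfst : r'.1 = r.1 ∨ r'.1 = p.1 + r.1)
    (h : mix L p r = mix L p r') : r' = r ∨ r' = p + r :=
  hfst.imp (fun hfst ↦ hL.eq_of_mix_eq hfst h)
    fun hfst ↦ hL.eq_of_mix_eq hfst ((hL.mix_add_right hr).trans h)

end TripleLabelling

/-! ### Products with `F4` -/

section Product

variable {α : Type*} [Zero α] [Add α] [Spread α] {k k' : α} {u u' v v' : F16} {p r : α × F4}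

open Classical in
noncomputable instance : Spread (α × F4) where
  add_smul a b p := Prod.ext (Spread.add_smul a b p.1) (_root_.add_smul a b p.2)
  label p := if p.1 = 0 then p.2 else label p.1
  label_smul a p := by
    by_cases ha : a = 0
    · simp only [ha, zero_smul, Prod.fst_zero, Prod.snd_zero, if_true, zero_mul]
    · have hsmul : a • p.1 = 0 ↔ p.1 = 0 :=
        ⟨fun h ↦ by rw [← inv_smul_smul₀ ha p.1, h, smul_zero], fun h ↦ by rw [h, smul_zero]⟩
      simp only [Prod.smul_fst, Prod.smul_snd, hsmul, label_smul, smul_eq_mul, mul_ite]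
  eq_zero_of_label p h := by
    split_ifs at h with hp
    exacts [Prod.ext hp h, absurd (eq_zero_of_label _ h) hp]
  exists_label_eq_one := ⟨(0, 1), if_pos rfl⟩

lemma onLine_fst : OnLine p r → OnLine p.1 r.1 :=
  fun ⟨k, a, b, hp, hr⟩ ↦ ⟨k.1, a, b, congrArg Prod.fst hp, congrArg Prod.fst hr⟩

/-- The copy of `F16` above the line of the spread through a point `k` with label `1`. -/
def frame (k : α) (u : F16) : α × F4 := (u.re • k, u.im)

/-- The coordinates of a point in the copies of `F16` containing it. -/
def coord (p : α × F4) : F16 := ⟨label p.1, p.2⟩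

lemma frame_zero (k : α) : frame k 0 = 0 := Prod.ext (zero_smul F4 k) rfl

lemma frame_add (k : α) (u v : F16) : frame k (u + v) = frame k u + frame k v :=
  Prod.ext (Spread.add_smul ..) rfl

lemma frame_smul (k : α) (a : F4) (u : F16) : frame k (a • u) = a • frame k u :=
  Prod.ext (mul_smul ..) rfl

lemma frame_eq_of_re_eq_zero (k k' : α) (hu : u.re = 0) : frame k u = frame k' u := by
  simp only [frame, hu, zero_smul]

lemma coord_frame (hk : label k = 1) (u : F16) : coord (frame k u) = u :=
  QuadraticAlgebra.ext (label_smul_of_label_eq_one hk _) rfl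

lemma coord_smul (a : F4) (p : α × F4) : coord (a • p) = a • coord p :=
  QuadraticAlgebra.ext (label_smul ..) rfl

lemma onLine_frame_iff (hk : label k = 1) : OnLine (frame k u) (frame k v) ↔ OnLine u v := by
  constructor
  · rintro ⟨p, a, b, hu, hv⟩
    refine ⟨coord p, a, b, ?_, ?_⟩
    · rw [← coord_frame hk u, hu, coord_smul]
    · rw [← coord_frame hk v, hv, coord_smul]
  · rintro ⟨w, a, b, rfl, rfl⟩
    exact ⟨frame k w, a, b, frame_smul .., frame_smul ..⟩

lemma frame_injective (hk : label k = 1) : Function.Injective (frame k) :=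
  Function.LeftInverse.injective (coord_frame hk)

lemma frame_eq_zero_iff (hk : label k = 1) : frame k u = 0 ↔ u = 0 := by
  rw [← frame_zero k, (frame_injective hk).eq_iff]

lemma spansTriple_frame_iff (hk : label k = 1) :
    SpansTriple (frame k u) (frame k v) ↔ SpansTriple u v := by
  simp only [SpansTriple, ne_eq, frame_eq_zero_iff hk, (frame_injective hk).eq_iff]

lemma exists_frame_eq_of_onLine_fst (h : OnLine p.1 r.1) :
    ∃ k u v, label k = 1 ∧ p = frame k u ∧ r = frame k v := by
  obtain ⟨k, hk, hp, hr⟩ := h.exists_label_eq_one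
  exact ⟨k, coord p, coord r, hk, Prod.ext hp rfl, Prod.ext hr rfl⟩

lemma onLine_fst_frame (k : α) (u v : F16) : OnLine (frame k u).1 (frame k v).1 :=
  ⟨k, u.re, v.re, rfl, rfl⟩

lemma eq_of_frame_eq_frame (hk : label k = 1) (hk' : label k' = 1)
    (h : frame k u = frame k' u') : u = u' := by
  rw [← coord_frame hk u, h, coord_frame hk']

lemma eq_or_re_eq_zero_of_frame_eq_frame (hk : label k = 1) (hk' : label k' = 1)
    (h : frame k u = frame k' u') : k = k' ∨ u.re = 0 :=
  or_iff_not_imp_right.2 fun hu ↦ eq_of_smul_eq_smul hk hk' hu (congrArg Prod.fst h)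

lemma axis_frame [DecidableEq α] (hk : label k = 1) (h : u.re ≠ 0 ∨ v.re ≠ 0) :
    axis (frame k u).1 (frame k v).1 = k :=
  axis_smul_smul hk h

open Classical in
/-- The starred Kirkman structure of `α × F4` built from that of `α`: pairs lying in a common copy
of `F16` are treated there, and all others are treated in `α`, the second coordinate being
determined by a triple labelling of `α`. -/
noncomputable def prodStar (z : ZMod 2 → α → α → α) (L : α → α → F4) (ε : ZMod 2)
    (p r : α × F4) : α × F4 :=
  if OnLine p.1 r.1 then frame (axis p.1 r.1) (F16.star ε (coord p) (coord r))
  else (z ε p.1 r.1, mix L p r)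

open Classical in
/-- The Kirkman colouring of `α × F4` built from a starred Kirkman structure of `α`: each of the
two classes of a triple outside the spread of `α` provides two colours for the triples above it. -/
noncomputable def prodColour (z : ZMod 2 → α → α → α) (L : α → α → F4) (p r : α × F4) :
    α × ZMod 2 :=
  if OnLine p.1 r.1 then
    ((F16.colour (coord p) (coord r)).1 • axis p.1 r.1, (F16.colour (coord p) (coord r)).2)
  else (z (mix L p r).re p.1 r.1, (mix L p r).im)

variable {z : ZMod 2 → α → α → α} {L : α → α → F4} {ε : ZMod 2}

lemma prodStar_frame (hk : label k = 1) (h : ¬OnLine u v) :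
    prodStar z L ε (frame k u) (frame k v) = frame k (F16.star ε u v) := by
  classical
  have hre : u.re ≠ 0 ∨ v.re ≠ 0 := by
    by_contra! hre
    exact h (F16.onLine_of_re_eq_zero hre.1 hre.2)
  rw [prodStar, if_pos (onLine_fst_frame ..), coord_frame hk, coord_frame hk, axis_frame hk hre]

lemma prodStar_of_not_onLine_fst (h : ¬OnLine p.1 r.1) :
    prodStar z L ε p r = (z ε p.1 r.1, mix L p r) :=
  if_neg h

lemma prodColour_frame (hk : label k = 1) (h : SpansTriple u v) :
    prodColour z L (frame k u) (frame k v) = ((F16.colour u v).1 • k, (F16.colour u v).2) := by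
  classical
  rw [prodColour, if_pos (onLine_fst_frame ..), coord_frame hk, coord_frame hk]
  by_cases hre : u.re ≠ 0 ∨ v.re ≠ 0
  · rw [axis_frame hk hre]
  · push Not at hre
    rw [(F16.colour_fst_eq_zero_iff h).2 (F16.onLine_of_re_eq_zero hre.1 hre.2), zero_smul,
      zero_smul]

lemma prodColour_of_not_onLine_fst (h : ¬OnLine p.1 r.1) :
    prodColour z L p r = (z (mix L p r).re p.1 r.1, (mix L p r).im) :=
  if_neg h

variable {r' w : α × F4} {ε' : ZMod 2}

lemma IsStar.onLine_fst_prodStar_iff (hz : IsStar z) (h : ¬OnLine p r) :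
    OnLine p.1 (prodStar z L ε p r).1 ↔ OnLine p.1 r.1 := by
  by_cases hlocal : OnLine p.1 r.1
  · obtain ⟨k, u, v, hk, rfl, rfl⟩ := exists_frame_eq_of_onLine_fst hlocal
    rw [onLine_frame_iff hk] at h
    simp only [prodStar_frame hk h, onLine_fst_frame]
  · simp only [prodStar_of_not_onLine_fst hlocal, hlocal, hz.not_onLine hlocal]

lemma exists_prodStar_eq_of_onLine_fst (hlocal : OnLine p.1 w.1) (h : ¬OnLine p w) :
    ∃ ε r, ¬OnLine p r ∧ prodStar z L ε p r = w := by
  obtain ⟨k, u, t, hk, rfl, rfl⟩ := exists_frame_eq_of_onLine_fst hlocal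
  rw [onLine_frame_iff hk] at h
  obtain ⟨ε, v, hv, rfl⟩ := F16.isStar_star.exists_eq h
  exact ⟨ε, frame k v, mt (onLine_frame_iff hk).1 hv, prodStar_frame hk hv⟩

lemma IsStar.exists_prodStar_eq_of_not_onLine_fst (hz : IsStar z) (hL : IsTripleLabelling L)
    (h : ¬OnLine p.1 w.1) : ∃ ε r, ¬OnLine p r ∧ prodStar z L ε p r = w := by
  obtain ⟨ε, x, hx, hzx⟩ := hz.exists_eq h
  obtain ⟨b, hb⟩ := hL.exists_mix_eq p x w.2
  exact ⟨ε, (x, b), mt onLine_fst hx,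
    (prodStar_of_not_onLine_fst hx).trans (Prod.ext hzx hb)⟩

lemma eq_of_prodStar_eq_of_onLine_fst (hlocal : OnLine p.1 r.1) (hlocal' : OnLine p.1 r'.1)
    (h : ¬OnLine p r) (h' : ¬OnLine p r') (heq : prodStar z L ε p r = prodStar z L ε' p r') :
    ε = ε' ∧ (r' = r ∨ r' = p + r) := by
  obtain ⟨k, u, v, hk, rfl, rfl⟩ := exists_frame_eq_of_onLine_fst hlocal
  obtain ⟨k', u', v', hk', hp, rfl⟩ := exists_frame_eq_of_onLine_fst hlocal'
  obtain rfl := eq_of_frame_eq_frame hk hk' hp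
  rw [hp, onLine_frame_iff hk'] at h'
  rw [onLine_frame_iff hk] at h
  rw [prodStar_frame hk h, hp, prodStar_frame hk' h'] at heq
  obtain ⟨rfl, hv⟩ := F16.isStar_star.eq_and_eq_or_eq_add h h' (eq_of_frame_eq_frame hk hk' heq)
  have hkk' : k = k' := by
    rcases eq_or_re_eq_zero_of_frame_eq_frame hk hk' hp with hkk' | hu
    · exact hkk'
    · exact (eq_or_re_eq_zero_of_frame_eq_frame hk hk' heq).resolve_right fun hstar ↦
        F16.isStar_star.not_onLine h (F16.onLine_of_re_eq_zero hu hstar)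
  subst hkk'
  rw [← frame_add]
  exact ⟨rfl, hv.imp (congrArg _) (congrArg _)⟩

lemma IsStar.eq_of_prodStar_eq_of_not_onLine_fst (hz : IsStar z) (hL : IsTripleLabelling L)
    (h : ¬OnLine p.1 r.1) (h' : ¬OnLine p.1 r'.1)
    (heq : prodStar z L ε p r = prodStar z L ε' p r') : ε = ε' ∧ (r' = r ∨ r' = p + r) := by
  rw [prodStar_of_not_onLine_fst h, prodStar_of_not_onLine_fst h', Prod.mk.injEq] at heq
  obtain ⟨rfl, hfst⟩ := hz.eq_and_eq_or_eq_add h h' heq.1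
  exact ⟨rfl, hL.eq_or_eq_add_of_mix_eq (spansTriple_of_not_onLine h) hfst heq.2⟩

lemma IsStar.prodStar [IsSteinerLoop α] (hz : IsStar z) (hL : IsTripleLabelling L) :
    IsStar (prodStar z L) where
  comm {ε p r} h := by
    by_cases hlocal : OnLine p.1 r.1
    · obtain ⟨k, u, v, hk, rfl, rfl⟩ := exists_frame_eq_of_onLine_fst hlocal
      rw [onLine_frame_iff hk] at h
      rw [prodStar_frame hk h, prodStar_frame hk (mt OnLine.symm h), F16.isStar_star.comm h]
    · rw [prodStar_of_not_onLine_fst hlocal, prodStar_of_not_onLine_fst (mt OnLine.symm hlocal),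
        hz.comm hlocal, mix_comm]
  add_right {ε p r} h := by
    by_cases hlocal : OnLine p.1 r.1
    · obtain ⟨k, u, v, hk, rfl, rfl⟩ := exists_frame_eq_of_onLine_fst hlocal
      rw [onLine_frame_iff hk] at h
      rw [← frame_add, prodStar_frame hk h, prodStar_frame hk (mt onLine_add_right_iff.1 h),
        F16.isStar_star.add_right h]
    · rw [prodStar_of_not_onLine_fst hlocal,
        prodStar_of_not_onLine_fst (mt onLine_add_right_iff.1 hlocal), Prod.fst_add,
        hz.add_right hlocal, hL.mix_add_right (spansTriple_of_not_onLine hlocal)]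
  not_onLine {ε p r} h := by
    by_cases hlocal : OnLine p.1 r.1
    · obtain ⟨k, u, v, hk, rfl, rfl⟩ := exists_frame_eq_of_onLine_fst hlocal
      rw [onLine_frame_iff hk] at h
      rw [prodStar_frame hk h, onLine_frame_iff hk]
      exact F16.isStar_star.not_onLine h
    · exact mt onLine_fst (mt (hz.onLine_fst_prodStar_iff h).1 hlocal)
  exists_eq {p w} h := by
    by_cases hlocal : OnLine p.1 w.1
    · exact exists_prodStar_eq_of_onLine_fst hlocal h
    · exact hz.exists_prodStar_eq_of_not_onLine_fst hL hlocal
  eq_and_eq_or_eq_add {ε ε' p r r'} h h' heq := by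
    have hlocal : OnLine p.1 r.1 ↔ OnLine p.1 r'.1 := by
      rw [← hz.onLine_fst_prodStar_iff h, heq, hz.onLine_fst_prodStar_iff h']
    by_cases hr : OnLine p.1 r.1
    · exact eq_of_prodStar_eq_of_onLine_fst hr (hlocal.1 hr) h h' heq
    · exact hz.eq_of_prodStar_eq_of_not_onLine_fst hL hr (mt hlocal.2 hr) heq

lemma IsStar.onLine_fst_prodColour_iff (hz : IsStar z) (h : SpansTriple p r) :
    OnLine p.1 (prodColour z L p r).1 ↔ OnLine p.1 r.1 := by
  by_cases hlocal : OnLine p.1 r.1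
  · obtain ⟨k, u, v, hk, rfl, rfl⟩ := exists_frame_eq_of_onLine_fst hlocal
    rw [spansTriple_frame_iff hk] at h
    rw [prodColour_frame hk h]
    exact iff_of_true ⟨k, _, _, rfl, rfl⟩ hlocal
  · simp only [prodColour_of_not_onLine_fst hlocal, hlocal, hz.not_onLine hlocal]

lemma IsStar.prodColour_ne (hz : IsStar z) (h : SpansTriple p r) :
    prodColour z L p r ≠ (0, 1) := by
  intro hcol
  have hlocal : OnLine p.1 r.1 :=
    (hz.onLine_fst_prodColour_iff (L := L) h).1 (hcol ▸ onLine_zero_right p.1)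
  obtain ⟨k, u, v, hk, rfl, rfl⟩ := exists_frame_eq_of_onLine_fst hlocal
  rw [spansTriple_frame_iff hk] at h
  rw [prodColour_frame hk h, Prod.mk.injEq] at hcol
  have hfst : (F16.colour u v).1 = 0 := by
    rw [← label_smul_of_label_eq_one hk (F16.colour u v).1, hcol.1, label_zero]
  exact F16.colour_ne u v (Prod.ext hfst hcol.2)

lemma exists_prodColour_eq_of_onLine {c : α × ZMod 2} (hc : c ≠ (0, 1)) (hp : p ≠ 0)
    (h : OnLine p.1 c.1) : ∃ r, SpansTriple p r ∧ prodColour z L p r = c := by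
  obtain ⟨k, hk, hpk, hck⟩ := h.exists_label_eq_one
  have hframe : p = frame k (coord p) := Prod.ext hpk rfl
  have hlabel : (label c.1, c.2) ≠ (0, 1) := fun hlabel ↦
    hc (Prod.ext (eq_zero_of_label _ (Prod.mk.inj hlabel).1) (Prod.mk.inj hlabel).2)
  rw [hframe, ne_eq, frame_eq_zero_iff hk] at hp
  obtain ⟨v, hv, hcol⟩ := F16.exists_colour_eq hp hlabel
  refine ⟨frame k v, ?_, ?_⟩
  · rwa [hframe, spansTriple_frame_iff hk]
  · rw [hframe, prodColour_frame hk hv, hcol, ← hck]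

lemma IsStar.exists_prodColour_eq_of_not_onLine (hz : IsStar z) (hL : IsTripleLabelling L)
    {c : α × ZMod 2} (h : ¬OnLine p.1 c.1) : ∃ r, SpansTriple p r ∧ prodColour z L p r = c := by
  obtain ⟨ε, x, hx, hzx⟩ := hz.exists_eq h
  obtain ⟨b, hb⟩ := hL.exists_mix_eq p x ⟨ε, c.2⟩
  refine ⟨(x, b), spansTriple_of_not_onLine (mt onLine_fst hx), ?_⟩
  rw [prodColour_of_not_onLine_fst hx, hb, hzx]

lemma eq_or_eq_add_of_prodColour_eq_of_onLine_fst (hlocal : OnLine p.1 r.1)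
    (hlocal' : OnLine p.1 r'.1) (h : SpansTriple p r) (h' : SpansTriple p r')
    (heq : prodColour z L p r = prodColour z L p r') : r' = r ∨ r' = p + r := by
  obtain ⟨k, u, v, hk, rfl, rfl⟩ := exists_frame_eq_of_onLine_fst hlocal
  obtain ⟨k', u', v', hk', hp, rfl⟩ := exists_frame_eq_of_onLine_fst hlocal'
  obtain rfl := eq_of_frame_eq_frame hk hk' hp
  rw [hp, spansTriple_frame_iff hk'] at h'
  rw [spansTriple_frame_iff hk] at h
  rw [prodColour_frame hk h, hp, prodColour_frame hk' h', Prod.mk.injEq] at heq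
  have hfst : (F16.colour u v).1 = (F16.colour u v').1 := by
    rw [← label_smul_of_label_eq_one hk (F16.colour u v).1, heq.1,
      label_smul_of_label_eq_one hk']
  have hv := F16.isKirkmanColouring_colour.eq_or_eq_add h h' (Prod.ext hfst heq.2)
  have hframe : frame k v' = frame k' v' := by
    by_cases hzero : (F16.colour u v').1 = 0
    · rcases eq_or_re_eq_zero_of_frame_eq_frame hk hk' hp with rfl | hu
      · rfl
      · exact frame_eq_of_re_eq_zero k k'
          (F16.re_eq_zero_of_onLine h.1 hu ((F16.colour_fst_eq_zero_iff h').1 hzero))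
    · rw [eq_of_smul_eq_smul hk hk' (hfst ▸ hzero) heq.1]
  rw [← hframe, ← frame_add]
  exact hv.imp (congrArg _) (congrArg _)

lemma IsStar.eq_or_eq_add_of_prodColour_eq_of_not_onLine_fst (hz : IsStar z)
    (hL : IsTripleLabelling L) (h : ¬OnLine p.1 r.1) (h' : ¬OnLine p.1 r'.1)
    (heq : prodColour z L p r = prodColour z L p r') : r' = r ∨ r' = p + r := by
  rw [prodColour_of_not_onLine_fst h, prodColour_of_not_onLine_fst h', Prod.mk.injEq] at heq
  obtain ⟨hre, hfst⟩ := hz.eq_and_eq_or_eq_add h h' heq.1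
  exact hL.eq_or_eq_add_of_mix_eq (spansTriple_of_not_onLine h) hfst
    (QuadraticAlgebra.ext hre heq.2)

lemma IsStar.isKirkmanColouring_prodColour [IsSteinerLoop α] (hz : IsStar z)
    (hL : IsTripleLabelling L) : IsKirkmanColouring (prodColour z L) where
  comm {p r} h := by
    by_cases hlocal : OnLine p.1 r.1
    · obtain ⟨k, u, v, hk, rfl, rfl⟩ := exists_frame_eq_of_onLine_fst hlocal
      rw [spansTriple_frame_iff hk] at h
      rw [prodColour_frame hk h, prodColour_frame hk h.symm,
        F16.isKirkmanColouring_colour.comm h]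
    · rw [prodColour_of_not_onLine_fst hlocal,
        prodColour_of_not_onLine_fst (mt OnLine.symm hlocal), hz.comm hlocal, mix_comm]
  add_right {p r} h := by
    by_cases hlocal : OnLine p.1 r.1
    · obtain ⟨k, u, v, hk, rfl, rfl⟩ := exists_frame_eq_of_onLine_fst hlocal
      rw [spansTriple_frame_iff hk] at h
      rw [← frame_add, prodColour_frame hk h, prodColour_frame hk h.add_right,
        F16.isKirkmanColouring_colour.add_right h]
    · rw [prodColour_of_not_onLine_fst hlocal,
        prodColour_of_not_onLine_fst (mt onLine_add_right_iff.1 hlocal), Prod.fst_add,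
        hz.add_right hlocal, hL.mix_add_right (spansTriple_of_not_onLine hlocal)]
  eq_or_eq_add {p r r'} h h' heq := by
    have hlocal : OnLine p.1 r.1 ↔ OnLine p.1 r'.1 := by
      rw [← hz.onLine_fst_prodColour_iff h, heq, hz.onLine_fst_prodColour_iff h']
    by_cases hr : OnLine p.1 r.1
    · exact eq_or_eq_add_of_prodColour_eq_of_onLine_fst hr (hlocal.1 hr) h h' heq
    · exact hz.eq_or_eq_add_of_prodColour_eq_of_not_onLine_fst hL hr (mt hlocal.2 hr) heq
  exists_eq {p r p'} h hp' := by
    by_cases hlocal : OnLine p'.1 (prodColour z L p r).1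
    · exact exists_prodColour_eq_of_onLine (hz.prodColour_ne h) hp' hlocal
    · exact hz.exists_prodColour_eq_of_not_onLine hL hlocal

end Product

section HasStar

variable {α : Type u} [Zero α] [Add α] [IsSteinerLoop α]

lemma HasStar.prod (h : HasStar α) : HasStar (α × F4) := by
  obtain ⟨_, z, hz⟩ := h
  obtain ⟨L, hL⟩ := exists_isTripleLabelling (α := α)
  exact ⟨inferInstance, prodStar z L, hz.prodStar hL⟩

lemma HasStar.isKirkman_prod (h : HasStar α) : IsKirkman (α × F4) := by
  obtain ⟨_, z, hz⟩ := h
  obtain ⟨L, hL⟩ := exists_isTripleLabelling (α := α)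
  exact ⟨α × ZMod 2, prodColour z L, hz.isKirkmanColouring_prodColour hL⟩

end HasStar

section Transport

variable {α β : Type*} [Zero α] [Add α] [IsSteinerLoop α] [Zero β] [Add β] [IsSteinerLoop β]
  (e : α ≃+ β)

lemma addEquiv_map_zero : e 0 = 0 := by
  rw [← IsSteinerLoop.add_self (0 : α), map_add, IsSteinerLoop.add_self]

lemma spansTriple_map_iff {x y : α} : SpansTriple (e x) (e y) ↔ SpansTriple x y := by
  have map_eq_zero_iff (x : α) : e x = 0 ↔ x = 0 := by
    rw [← addEquiv_map_zero e, e.apply_eq_iff_eq]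
  simp only [SpansTriple, ne_eq, map_eq_zero_iff, e.apply_eq_iff_eq]

lemma IsKirkmanColouring.comp_addEquiv {C : Type*} {c : β → β → C} (hc : IsKirkmanColouring c) :
    IsKirkmanColouring fun x y ↦ c (e x) (e y) where
  comm h := hc.comm ((spansTriple_map_iff e).2 h)
  add_right h := by
    rw [map_add, hc.add_right ((spansTriple_map_iff e).2 h)]
  eq_or_eq_add h h' hcol := by
    have := hc.eq_or_eq_add ((spansTriple_map_iff e).2 h) ((spansTriple_map_iff e).2 h') hcol
    rwa [← map_add, e.apply_eq_iff_eq, e.apply_eq_iff_eq] at this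
  exists_eq {x y x'} h hx' := by
    obtain ⟨y', hy', hcol⟩ := hc.exists_eq (x' := e x') ((spansTriple_map_iff e).2 h)
      (addEquiv_map_zero e ▸ e.injective.ne hx')
    refine ⟨e.symm y', ?_, ?_⟩
    · rwa [← spansTriple_map_iff e, e.apply_symm_apply]
    · simpa only [e.apply_symm_apply] using hcol

/-- The spread of `α` that corresponds to a spread of `β` under an isomorphism. -/
abbrev Spread.comap [Spread β] : Spread α where
  smul a x := e.symm (a • e x)
  one_smul x := by
    change e.symm ((1 : F4) • e x) = x
    rw [one_smul, e.symm_apply_apply]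
  mul_smul a b x := by
    change e.symm ((a * b) • e x) = e.symm (a • e (e.symm (b • e x)))
    rw [mul_smul, e.apply_symm_apply]
  smul_zero a := by
    change e.symm (a • e 0) = 0
    rw [addEquiv_map_zero, smul_zero, addEquiv_map_zero]
  zero_smul x := by
    change e.symm ((0 : F4) • e x) = 0
    rw [zero_smul, addEquiv_map_zero]
  add_smul a b x := by
    change e.symm ((a + b) • e x) = e.symm (a • e x) + e.symm (b • e x)
    rw [Spread.add_smul, map_add]
  label x := label (e x)
  label_smul a x := by
    change label (e (e.symm (a • e x))) = a * label (e x)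
    rw [e.apply_symm_apply, label_smul]
  eq_zero_of_label x hx := by
    rw [← e.symm_apply_apply x, eq_zero_of_label _ hx, addEquiv_map_zero]
  exists_label_eq_one := by
    obtain ⟨k, hk⟩ := Spread.exists_label_eq_one (α := β)
    exact ⟨e.symm k, by rwa [e.apply_symm_apply]⟩

lemma onLine_map_iff [Spread β] {x y : α} :
    OnLine (e x) (e y) ↔ letI := Spread.comap e; OnLine x y := by
  let := Spread.comap e
  have eq_smul_iff (x k : α) (a : F4) : x = a • k ↔ e x = a • e k := e.eq_symm_apply
  constructor
  · rintro ⟨k, a, b, hx, hy⟩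
    exact ⟨e.symm k, a, b, by rwa [eq_smul_iff, e.apply_symm_apply],
      by rwa [eq_smul_iff, e.apply_symm_apply]⟩
  · rintro ⟨k, a, b, hx, hy⟩
    exact ⟨e k, a, b, (eq_smul_iff _ _ _).1 hx, (eq_smul_iff _ _ _).1 hy⟩

lemma IsStar.comp_addEquiv [Spread β] {z : ZMod 2 → β → β → β} (hz : IsStar z) :
    letI := Spread.comap e; IsStar fun ε x y ↦ e.symm (z ε (e x) (e y)) := by
  let := Spread.comap e
  exact {
    comm h := by
      rw [hz.comm (mt (onLine_map_iff e).1 h)]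
    add_right h := by
      rw [map_add, hz.add_right (mt (onLine_map_iff e).1 h)]
    not_onLine h := by
      rw [← onLine_map_iff e, e.apply_symm_apply]
      exact hz.not_onLine (mt (onLine_map_iff e).1 h)
    exists_eq {x w} h := by
      obtain ⟨ε, y, hy, hw⟩ := hz.exists_eq (mt (onLine_map_iff e).1 h)
      refine ⟨ε, e.symm y, ?_, ?_⟩
      · rwa [← onLine_map_iff e, e.apply_symm_apply]
      · rw [e.apply_symm_apply, hw, e.symm_apply_apply]
    eq_and_eq_or_eq_add h h' heq := by
      have := hz.eq_and_eq_or_eq_add (mt (onLine_map_iff e).1 h) (mt (onLine_map_iff e).1 h')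
        (e.symm.injective heq)
      rwa [← map_add, e.apply_eq_iff_eq, e.apply_eq_iff_eq] at this }

lemma HasStar.of_addEquiv (e : α ≃+ β) (h : HasStar β) : HasStar α :=
  let ⟨_, _, hz⟩ := h
  ⟨Spread.comap e, _, hz.comp_addEquiv e⟩

end Transport

lemma IsKirkman.of_addEquiv {α β : Type u} [Zero α] [Add α] [IsSteinerLoop α] [Zero β] [Add β]
    [IsSteinerLoop β] (e : α ≃+ β) (h : IsKirkman β) : IsKirkman α :=
  let ⟨C, _, hc⟩ := h
  ⟨C, _, hc.comp_addEquiv e⟩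

namespace Skein

/-- The product of a quadruple system with the affine plane `F4`, by doubling twice. -/
def prod {α : Type*} (q : Skein α) : Skein (α × F4) where
  op x y z := (q.op x.1 y.1 z.1, x.2 + y.2 + z.2)
  op_swap_left x y z := Prod.ext (q.op_swap_left ..) (by rw [add_comm x.2])
  op_swap_right x y z := Prod.ext (q.op_swap_right ..) (add_right_comm ..)
  op_self x y := Prod.ext (q.op_self ..) (IsSteinerLoop.add_add_cancel_right ..)
  op_op x y z := Prod.ext (q.op_op ..) (IsSteinerLoop.add_add_cancel ..)

/-- The derived loops of a product are products. -/
def derivedProdEquiv {α : Type*} (q : Skein α) (o : α × F4) :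
    q.prod.Derived o ≃+ q.Derived o.1 × F4 where
  toFun x := (x.1, x.2 + o.2)
  invFun x := (x.1, x.2 + o.2)
  left_inv x := Prod.ext rfl (IsSteinerLoop.add_add_cancel_right x.2 o.2)
  right_inv x := Prod.ext rfl (IsSteinerLoop.add_add_cancel_right x.2 o.2)
  map_add' x y := Prod.ext rfl <| by
    change o.2 + x.2 + y.2 + o.2 = x.2 + o.2 + (y.2 + o.2)
    rw [add_comm o.2, add_assoc]

end Skein

/-! ### The projective line in characteristic three -/

/-- The points of a vector space `A` over `F₃` together with a point at infinity. With the latter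
as zero element, they form the Steiner loop whose triples are the lines of `A`. -/
inductive AffineLoop (A : Type*)
  | infinity : AffineLoop A
  | point (x : A) : AffineLoop A
  deriving DecidableEq

namespace AffineLoop

/-- The identification with `Option A` in which infinity corresponds to `none`. -/
def optionEquiv (A : Type*) : Option A ≃ AffineLoop A where
  toFun x := x.elim infinity point
  invFun
    | infinity => none
    | point x => some x
  left_inv x := by cases x <;> rfl
  right_inv x := by cases x <;> rfl

instance {A : Type*} [Fintype A] : Fintype (AffineLoop A) := .ofEquiv _ (optionEquiv A)

lemma card_eq (A : Type*) [Fintype A] : Fintype.card (AffineLoop A) = Fintype.card A + 1 := by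
  rw [← Fintype.card_congr (optionEquiv A), Fintype.card_option]

section Loop

variable {A : Type*}

instance : Zero (AffineLoop A) := ⟨infinity⟩

lemma spansTriple_point_iff {x y : A} : SpansTriple (point x) (point y) ↔ x ≠ y :=
  ⟨fun h hxy ↦ h.2.2 (congrArg point hxy), fun h ↦ ⟨nofun, nofun, mt point.inj h⟩⟩

lemma exists_of_spansTriple {x y : AffineLoop A} (h : SpansTriple x y) :
    ∃ a b, a ≠ b ∧ x = point a ∧ y = point b := by
  rcases x with - | a
  · exact absurd rfl h.1
  rcases y with - | b
  · exact absurd rfl h.2.1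
  exact ⟨a, b, spansTriple_point_iff.1 h, rfl, rfl⟩

variable [AddCommGroup A]

lemma add_self_eq_neg [Module (ZMod 3) A] (x : A) : x + x = -x := by
  have h : 3 • x = 0 := ZModModule.char_nsmul_eq_zero 3 x
  rw [eq_neg_iff_add_eq_zero, ← h]
  abel

variable [DecidableEq A]

instance : Add (AffineLoop A) where
  add
    | infinity, y => y
    | x, infinity => x
    | point x, point y => if x = y then infinity else point (-(x + y))

lemma point_add_self (x : A) : point x + point x = 0 := if_pos rfl

lemma point_add_point {x y : A} (h : x ≠ y) : point x + point y = point (-(x + y)) := if_neg h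

instance [Module (ZMod 3) A] : IsSteinerLoop (AffineLoop A) where
  add_comm x y := by
    rcases x with - | x <;> rcases y with - | y <;> try rfl
    by_cases h : x = y
    · rw [h]
    · rw [point_add_point h, point_add_point (Ne.symm h), add_comm]
  zero_add _ := rfl
  add_add_cancel x y := by
    rcases x with - | x
    · rfl
    rcases y with - | y
    · exact point_add_self x
    by_cases h : x = y
    · rw [h, point_add_self]
      rfl
    · have hne : x ≠ -(x + y) := fun hx ↦ h <| by
        rwa [eq_neg_iff_add_eq_zero, ← add_assoc, add_self_eq_neg, neg_add_eq_zero] at hx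
      rw [point_add_point h, point_add_point hne, ← sub_eq_add_neg, sub_add_cancel_left, neg_neg]

/-- Isomorphic vector spaces have isomorphic loops. -/
def congr {B : Type*} [AddCommGroup B] [DecidableEq B] (e : A ≃+ B) :
    AffineLoop A ≃+ AffineLoop B where
  toEquiv := (optionEquiv A).symm.trans ((Equiv.optionCongr e).trans (optionEquiv B))
  map_add' x y := by
    rcases x with - | x
    · rfl
    rcases y with - | y
    · rfl
    by_cases h : x = y
    · rw [h, point_add_self]
      exact (point_add_self (e y)).symm
    · rw [point_add_point h]
      change point (e (-(x + y))) = point (e x) + point (e y)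
      rw [point_add_point (e.injective.ne h), map_neg, map_add]

end Loop

section ProjectiveLine

variable {K : Type*} [Field K]

/-- The square of the direction of the line through two points of a field of characteristic `3`,
which determines the parallel class of the line. -/
def directionSq : AffineLoop K → AffineLoop K → K
  | point x, point y => (x - y) ^ 2
  | _, _ => 0

/-- The inversion of the projective line `AffineLoop K` about a point `p`: an involution that
exchanges `p` and infinity, and the identity if `p` itself is infinity. -/
def inversion [DecidableEq K] : AffineLoop K → AffineLoop K → AffineLoop K
  | infinity, x => x
  | point a, infinity => point a
  | point a, point x => if x = a then infinity else point (a + (x - a)⁻¹)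

lemma inversion_point_point [DecidableEq K] {a x : K} (h : x ≠ a) :
    inversion (point a) (point x) = point (a + (x - a)⁻¹) :=
  if_neg h

lemma inversion_self [DecidableEq K] (p : AffineLoop K) : inversion p p = 0 := by
  rcases p with - | a
  exacts [rfl, if_pos rfl]

lemma inversion_zero [DecidableEq K] (p : AffineLoop K) : inversion p 0 = p := by
  rcases p with - | a <;> rfl

lemma inversion_inversion [DecidableEq K] (p x : AffineLoop K) :
    inversion p (inversion p x) = x := by
  rcases p with - | a
  · rfl
  rcases x with - | x
  · exact inversion_self _
  by_cases h : x = a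
  · rw [h, inversion_self, inversion_zero]
  · have hne : a + (x - a)⁻¹ ≠ a := fun ha ↦
      inv_ne_zero (sub_ne_zero.2 h) (left_eq_add.1 ha.symm)
    rw [inversion_point_point h, inversion_point_point hne, add_sub_cancel_left, inv_inv,
      add_sub_cancel]

/-- The fourth point of the block through three points of the projective line: an inversion about
the first point takes the block to a line of `K`. -/
def harmonic [DecidableEq K] (p x y : AffineLoop K) : AffineLoop K :=
  inversion p (inversion p x + inversion p y)

lemma harmonic_infinity_point_point [DecidableEq K] {x y : K} (h : x ≠ y) :
    harmonic infinity (point x) (point y) = point (-(x + y)) :=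
  point_add_point h

variable [Algebra (ZMod 3) K]

lemma three_eq_zero : (3 : K) = 0 := by
  exact_mod_cast (nsmul_one 3).symm.trans (ZModModule.char_nsmul_eq_zero 3 (1 : K))

lemma isKirkmanColouring_directionSq [DecidableEq K] :
    IsKirkmanColouring (directionSq (K := K)) where
  comm h := by
    obtain ⟨a, b, -, rfl, rfl⟩ := exists_of_spansTriple h
    exact sub_sq_comm a b
  add_right h := by
    obtain ⟨a, b, hab, rfl, rfl⟩ := exists_of_spansTriple h
    rw [point_add_point hab]
    change (a - -(a + b)) ^ 2 = (a - b) ^ 2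
    rw [sub_neg_eq_add, ← add_assoc, add_self_eq_neg, neg_add_eq_sub, sub_sq_comm]
  eq_or_eq_add {x y y'} h h' hcol := by
    obtain ⟨a, b, hab, rfl, rfl⟩ := exists_of_spansTriple h
    rcases y' with - | b'
    · exact absurd rfl h'.2.1
    rw [point_add_point hab, point.injEq, point.injEq]
    refine (sq_eq_sq_iff_eq_or_eq_neg.1 hcol).imp (fun hb ↦ (sub_right_injective hb).symm)
      fun hb ↦ ?_
    linear_combination -hb + a * three_eq_zero (K := K)
  exists_eq {x y x'} h hx' := by
    obtain ⟨a, b, hab, rfl, rfl⟩ := exists_of_spansTriple h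
    rcases x' with - | a'
    · exact absurd rfl hx'
    refine ⟨point (a' - (a - b)), spansTriple_point_iff.2 ?_, ?_⟩
    · exact fun ha ↦ sub_ne_zero.2 hab (sub_eq_self.1 ha.symm)
    · exact congrArg (· ^ 2) (sub_sub_cancel a' (a - b))

variable [DecidableEq K] {x y z : K}

lemma harmonic_point_infinity_point (h : x ≠ y) :
    harmonic (point x) infinity (point y) = point (-(x + y)) := by
  have hA : (y - x)⁻¹ ≠ 0 := inv_ne_zero (sub_ne_zero.2 h.symm)
  have hsum : point x + point (x + (y - x)⁻¹) = point (x - (y - x)⁻¹) := by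
    rw [point_add_point (fun hx ↦ hA (left_eq_add.1 hx)), point.injEq]
    linear_combination -x * three_eq_zero (K := K)
  change inversion (point x) (point x + inversion (point x) (point y)) = _
  rw [inversion_point_point h.symm, hsum, inversion_point_point (mt sub_eq_self.1 hA),
    sub_sub_cancel_left, inv_neg, inv_inv, point.injEq]
  linear_combination x * three_eq_zero (K := K)

lemma harmonic_point_point_point (hxy : x ≠ y) (hxz : x ≠ z) (hyz : y ≠ z) :
    harmonic (point x) (point y) (point z) =
      if x + y + z = 0 then infinity else point (-(x * y + x * z + y * z) / (x + y + z)) := by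
  have hy : y - x ≠ 0 := sub_ne_zero.2 hxy.symm
  have hz : z - x ≠ 0 := sub_ne_zero.2 hxz.symm
  have hsum : point (x + (y - x)⁻¹) + point (x + (z - x)⁻¹) =
      point (x - (x + y + z) / ((y - x) * (z - x))) := by
    have hne : x + (y - x)⁻¹ ≠ x + (z - x)⁻¹ := fun h ↦
      hyz (sub_left_injective (inv_injective (add_right_injective x h)))
    rw [point_add_point hne, point.injEq]
    field_simp
    linear_combination (x - x * (y - x) * (z - x)) * three_eq_zero (K := K)
  rw [harmonic, inversion_point_point hxy.symm, inversion_point_point hxz.symm, hsum]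
  split_ifs with hxyz
  · rw [hxyz, zero_div, sub_zero]
    exact inversion_self _
  · rw [inversion_point_point (mt sub_eq_self.1 (div_ne_zero hxyz (mul_ne_zero hy hz))),
      sub_sub_cancel_left, inv_neg, inv_div, point.injEq]
    field_simp
    linear_combination (x * y + x * z) * three_eq_zero (K := K)

lemma harmonic_swap_right (p x y : AffineLoop K) : harmonic p x y = harmonic p y x :=
  congrArg (inversion p) (IsSteinerLoop.add_comm ..)

lemma harmonic_self_right (p x : AffineLoop K) : harmonic p x x = p := by
  rw [harmonic, IsSteinerLoop.add_self, inversion_zero]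

lemma harmonic_self_left (p x : AffineLoop K) : harmonic p p x = x := by
  rw [harmonic, inversion_self, IsSteinerLoop.zero_add, inversion_inversion]

lemma harmonic_swap_left_of_ne {p x y : AffineLoop K} (hpx : p ≠ x) (hpy : p ≠ y) (hxy : x ≠ y) :
    harmonic p x y = harmonic x p y := by
  rcases p with - | a <;> rcases x with - | b <;> rcases y with - | c <;>
    simp only [ne_eq, point.injEq, not_true_eq_false] at hpx hpy hxy
  · rw [harmonic_infinity_point_point hxy, harmonic_point_infinity_point hxy]
  · rw [harmonic_infinity_point_point hpy, harmonic_point_infinity_point hpy]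
  · rw [harmonic_swap_right, harmonic_point_infinity_point hpx, harmonic_swap_right (point b),
      harmonic_point_infinity_point (Ne.symm hpx), add_comm]
  · rw [harmonic_point_point_point hpx hpy hxy, harmonic_point_point_point (Ne.symm hpx) hxy hpy,
      add_comm b a, mul_comm b a, add_right_comm (a * b)]

variable (K) in
/-- The quadruple system on the projective line over a field of characteristic `3` whose blocks
are the images of the projective line over `F₃` under fractional linear maps. -/
def skein : Skein (AffineLoop K) where
  op := harmonic
  op_swap_left p x y := by
    rcases eq_or_ne p x with rfl | hpx
    · rfl
    rcases eq_or_ne p y with rfl | hpy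
    · rw [harmonic_self_right, harmonic_swap_right, harmonic_self_left]
    rcases eq_or_ne x y with rfl | hxy
    · rw [harmonic_self_right, harmonic_swap_right, harmonic_self_left]
    exact harmonic_swap_left_of_ne hpx hpy hxy
  op_swap_right := harmonic_swap_right
  op_self := harmonic_self_right
  op_op p x y := by
    rw [harmonic, harmonic, inversion_inversion, IsSteinerLoop.add_add_cancel,
      inversion_inversion]

/-- All derived loops of the projective line are isomorphic to the one at infinity. -/
def derivedEquiv (p : AffineLoop K) : (skein K).Derived p ≃+ AffineLoop K where
  toFun := inversion p
  invFun := inversion p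
  left_inv := inversion_inversion p
  right_inv := inversion_inversion p
  map_add' _ _ := inversion_inversion p _

theorem isKirkman_derived (p : AffineLoop K) : IsKirkman ((skein K).Derived p) :=
  .of_addEquiv (derivedEquiv p) ⟨K, directionSq, isKirkmanColouring_directionSq⟩

end ProjectiveLine

end AffineLoop

/-! ### The affine space of dimension three over `F₃` -/

/-- The field with nine elements, generated over `F₃` by a square root of `-1`. -/
abbrev F9 : Type := QuadraticAlgebra (ZMod 3) (-1) 0

instance : Fintype F9 := .ofEquiv _ (QuadraticAlgebra.equivProd (-1) 0).symm

/-- The affine space of dimension `3` over `F₃`; the lines with direction `(0, 1)` are called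
vertical. -/
abbrev Space : Type := F9 × ZMod 3

namespace Space

open AffineLoop (infinity point)

/-- The discrete logarithm to the base `ω`, with junk value at `0`. -/
def log (a : F4) : ZMod 3 := if a = 1 then 0 else if a = ω then 1 else 2

/-- The lines of the spread are the vertical lines, on which a nonzero `a` acts as the translation
by `log a`. -/
instance : Spread (AffineLoop Space) where
  smul
    | _, infinity => infinity
    | a, point p => if a = 0 then infinity else point (p.1, p.2 + log a)
  one_smul := by decide +kernel
  mul_smul := by decide +kernel
  smul_zero _ := rfl
  zero_smul := by decide +kernel
  add_smul := by decide +kernel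
  label
    | infinity => 0
    | point p => ω ^ p.2.val
  label_smul := by decide +kernel
  eq_zero_of_label := by decide +kernel
  exists_label_eq_one := ⟨point 0, rfl⟩

lemma onLine_point_iff {p r : Space} : OnLine (point p) (point r) ↔ p.1 = r.1 := by
  have fst_smul (a : F4) (k : AffineLoop Space) (p : Space) (h : point p = a • k) :
      ∃ t, k = point (p.1, t) := by
    revert a k p; decide +kernel
  have point_eq_smul : ∀ p : Space, point p = label (point p) • point (p.1, 0) := by
    decide +kernel
  constructor
  · rintro ⟨k, a, b, hp, hr⟩
    obtain ⟨t, rfl⟩ := fst_smul a k p hp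
    obtain ⟨t', ht'⟩ := fst_smul b _ r hr
    exact (Prod.ext_iff.1 (AffineLoop.point.inj ht')).1
  · intro h
    exact ⟨point (p.1, 0), _, _, point_eq_smul p, h ▸ point_eq_smul r⟩

lemma exists_of_not_onLine {x y : AffineLoop Space} (h : ¬OnLine x y) :
    ∃ p r, p.1 ≠ r.1 ∧ x = point p ∧ y = point r := by
  obtain ⟨p, r, -, rfl, rfl⟩ := AffineLoop.exists_of_spansTriple (spansTriple_of_not_onLine h)
  exact ⟨p, r, mt onLine_point_iff.2 h, rfl, rfl⟩

/-- A quadratic shear along the vertical lines. -/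
def shear : Space ≃ Space where
  toFun p := (p.1, p.2 + p.1.norm)
  invFun p := (p.1, p.2 - p.1.norm)
  left_inv _ := Prod.ext rfl (add_sub_cancel_right ..)
  right_inv _ := Prod.ext rfl (sub_add_cancel ..)

/-- The displacement to the third point of a line, in sheared coordinates. -/
def third (d : Space) : Space := (-d.1, -(d.2 + d.1.norm))

lemma shear_neg_add_sub (p r : Space) :
    shear (-(p + r)) - shear p = third (shear r - shear p) := by
  revert p r; decide +kernel

/-- One of the two signs for `x ≠ 0`: an odd function of `x`, negated by changing `ε`. -/
def sign (ε : ZMod 2) (x : F9) : ZMod 3 := (-1) ^ ε.val * if x.re = 0 then x.im else x.re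

/-- The displacement from a point to the value of the star, in terms of the displacement `d` to
a second point, both in sheared coordinates. The formula is ad hoc. -/
def starOffset (ε : ZMod 2) (d : Space) : Space :=
  let n := d.1.norm
  let s := d.2 - n
  let σ := sign ε d.1
  (⟨n * s - σ, -σ * n⟩ * d.1, -n * s ^ 2)

lemma add_starOffset_neg : ∀ ε d, d.1 ≠ 0 → d + starOffset ε (-d) = starOffset ε d := by
  decide +kernel

lemma starOffset_third : ∀ ε d, d.1 ≠ 0 → starOffset ε (third d) = starOffset ε d := by
  decide +kernel

lemma starOffset_fst_ne_zero : ∀ ε d, d.1 ≠ 0 → (starOffset ε d).1 ≠ 0 := by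
  decide +kernel

lemma exists_starOffset_eq : ∀ w : Space, w.1 ≠ 0 → ∃ ε d, d.1 ≠ 0 ∧ starOffset ε d = w := by
  decide +kernel

set_option synthInstance.maxSize 400 in
lemma eq_of_starOffset_eq : ∀ d : Space, d.1 ≠ 0 → ∀ d' : Space, d'.1 ≠ 0 → ∀ ε ε',
    starOffset ε d = starOffset ε' d' → ε = ε' ∧ (d' = d ∨ d' = third d) := by
  decide +kernel

/-- The starred Kirkman structure of the affine space. -/
def star (ε : ZMod 2) : AffineLoop Space → AffineLoop Space → AffineLoop Space
  | point p, point r => point (shear.symm (shear p + starOffset ε (shear r - shear p)))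
  | _, _ => 0

lemma star_eq_iff {ε : ZMod 2} {p r w : Space} :
    star ε (point p) (point r) = point w ↔
      starOffset ε (shear r - shear p) = shear w - shear p := by
  rw [star, AffineLoop.point.injEq, Equiv.symm_apply_eq, eq_sub_iff_add_eq']

lemma shear_sub_shear_fst_ne_zero {p r : Space} (h : p.1 ≠ r.1) :
    (shear r - shear p).1 ≠ 0 :=
  sub_ne_zero.2 h.symm

lemma isStar_star : IsStar star where
  comm {ε x y} h := by
    obtain ⟨p, r, hne, rfl, rfl⟩ := exists_of_not_onLine h
    have hd := add_starOffset_neg ε _ (shear_sub_shear_fst_ne_zero hne)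
    rw [neg_sub] at hd
    rw [star, star, ← hd, ← add_assoc, add_sub_cancel]
  add_right {ε x y} h := by
    obtain ⟨p, r, hne, rfl, rfl⟩ := exists_of_not_onLine h
    rw [AffineLoop.point_add_point (fun hpr ↦ hne (congrArg Prod.fst hpr)), star, star,
      shear_neg_add_sub, starOffset_third _ _ (shear_sub_shear_fst_ne_zero hne)]
  not_onLine {ε x y} h := by
    obtain ⟨p, r, hne, rfl, rfl⟩ := exists_of_not_onLine h
    rw [star, onLine_point_iff]
    exact fun h ↦ starOffset_fst_ne_zero ε _ (shear_sub_shear_fst_ne_zero hne)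
      (left_eq_add.1 h)
  exists_eq {x w} h := by
    obtain ⟨p, v, hne, rfl, rfl⟩ := exists_of_not_onLine h
    obtain ⟨ε, d, hd, hv⟩ := exists_starOffset_eq _ (shear_sub_shear_fst_ne_zero hne)
    refine ⟨ε, point (shear.symm (shear p + d)), ?_, ?_⟩
    · exact mt onLine_point_iff.1 fun h ↦ hd (left_eq_add.1 h)
    · rw [star_eq_iff, shear.apply_symm_apply, add_sub_cancel_left, hv]
  eq_and_eq_or_eq_add {ε ε' x y y'} h h' heq := by
    obtain ⟨p, r, hne, rfl, rfl⟩ := exists_of_not_onLine h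
    obtain ⟨_, r', hne', hp, rfl⟩ := exists_of_not_onLine h'
    obtain rfl := AffineLoop.point.inj hp
    rw [star, star, AffineLoop.point.injEq, shear.symm.injective.eq_iff, add_right_inj] at heq
    rw [AffineLoop.point_add_point (fun hpr ↦ hne (congrArg Prod.fst hpr)),
      AffineLoop.point.injEq, AffineLoop.point.injEq]
    refine (eq_of_starOffset_eq _ (shear_sub_shear_fst_ne_zero hne) _
      (shear_sub_shear_fst_ne_zero hne') _ _ heq).imp_right (Or.imp (fun hr ↦ ?_) fun hr ↦ ?_)
    · exact shear.injective (sub_left_injective hr)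
    · rw [← shear_neg_add_sub] at hr
      exact shear.injective (sub_left_injective hr)

lemma finrank_eq_three : Module.finrank (ZMod 3) Space = 3 := by
  rw [Module.finrank_prod, QuadraticAlgebra.finrank_eq_two, Module.finrank_self]

end Space

lemma AffineLoop.hasStar {A : Type*} [AddCommGroup A] [Module (ZMod 3) A] [DecidableEq A]
    [Module.Finite (ZMod 3) A] (hA : Module.finrank (ZMod 3) A = 3) : HasStar (AffineLoop A) := by
  have e : A ≃ₗ[ZMod 3] Space := .ofFinrankEq _ _ (hA.trans Space.finrank_eq_three.symm)
  exact .of_addEquiv (congr e.toAddEquiv) ⟨inferInstance, Space.star, Space.isStar_star⟩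

lemma Skein.hasStar_derived_prod {α : Type*} (q : Skein α)
    (hq : ∀ o, HasStar (q.Derived o)) (o : α × F4) : HasStar (q.prod.Derived o) :=
  .of_addEquiv (q.derivedProdEquiv o) (hq o.1).prod

lemma Skein.isKirkman_derived_prod {α : Type*} (q : Skein α)
    (hq : ∀ o, HasStar (q.Derived o)) (o : α × F4) : IsKirkman (q.prod.Derived o) :=
  .of_addEquiv (q.derivedProdEquiv o) (hq o.1).isKirkman_prod

/-- The field with twenty-seven elements. -/
abbrev F27 : Type := GaloisField 3 3

noncomputable instance : Fintype F27 := .ofFinite F27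

noncomputable instance : DecidableEq F27 := Classical.decEq F27

lemma card_affineLoop_F27 : Fintype.card (AffineLoop F27) = 7 * 4 := by
  rw [AffineLoop.card_eq, Fintype.card_eq_nat_card, GaloisField.card 3 3 three_ne_zero]
  rfl

lemma hasStar_derived_F27 (p : AffineLoop F27) : HasStar ((AffineLoop.skein F27).Derived p) :=
  .of_addEquiv (AffineLoop.derivedEquiv p)
    (AffineLoop.hasStar (GaloisField.finrank 3 three_ne_zero))

lemma card_prod_F4 {α : Type*} [Fintype α] {m : ℕ} (h : Fintype.card α = 7 * 4 ^ m) :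
    Fintype.card (α × F4) = 7 * 4 ^ (m + 1) := by
  rw [Fintype.card_prod, h, pow_succ, mul_assoc]
  rfl

lemma exists_skein_hasStar (m : ℕ) :
    ∃ (α : Type) (_ : Fintype α) (q : Skein α),
      Fintype.card α = 7 * 4 ^ (m + 1) ∧ ∀ o, HasStar (q.Derived o) := by
  induction m with
  | zero => exact ⟨AffineLoop F27, inferInstance, AffineLoop.skein F27, card_affineLoop_F27,
      hasStar_derived_F27⟩
  | succ m ih =>
    obtain ⟨α, _, q, hcard, hq⟩ := ih
    exact ⟨α × F4, inferInstance, q.prod, card_prod_F4 hcard, q.hasStar_derived_prod hq⟩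

end RDSQS

/-- For every positive integer n, there exists an RDSQS(7·4^n). -/
theorem stmt_14 (n : ℕ) (hn : 0 < n) : ExistsRDSQS (7 * 4 ^ n) := by
  obtain _ | _ | m := n
  · exact absurd hn (lt_irrefl 0)
  · rw [zero_add, pow_one, ← RDSQS.card_affineLoop_F27]
    exact (RDSQS.AffineLoop.skein RDSQS.F27).existsRDSQS RDSQS.AffineLoop.isKirkman_derived
  · obtain ⟨α, _, q, hcard, hq⟩ := RDSQS.exists_skein_hasStar m
    rw [← RDSQS.card_prod_F4 hcard]
    exact q.prod.existsRDSQS (q.isKirkman_derived_prod hq)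
end

section
/- Let u and v be positive integers. If there exist an RDSQS(u + 1) and an RDSQS(v + 1), then there exists an RDSQS(uv + 1). -/
open Finset

/-!
Put a point `∞` on top of a `v × u` grid, with the given SQS(v + 1), `V`, on `∞` and the columns
and the given SQS(u + 1), `U`, on `∞` and the rows. The product has three kinds of blocks: a copy
of `U` on every completed column; over a block of `V` missing `∞`, a transversal design on four
columns, the solutions of `h₀ + h₁ = h₂ + h₃` in `ℤ/u`; over a block of `V` through `∞`, a
candelabra system on three columns. A class of the derived design of `V` at a column gives `u`
classes of the product, one for each full class of the ingredients. The remaining classes of the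
candelabra systems at a point miss the column of that point, and are completed by the classes of
`U` on this column. The classes of the transversal design need `2` to be invertible in `ℤ/u`, which
holds because the order `u + 1` of a quadruple system is even.

The candelabra systems on three columns come from the same product, with `U` in the role of `V`
and the one-block SQS(4) in the role of `U`. Here the candelabra systems needed have type `3 ^ 3`
and are found in the inversive plane of order three, with tangent pencils as classes. The resulting
system on `∞` and three rows of size `u` contains a copy of `U` on each completed row. Interchange
rows and columns and delete these copies.
-/

theorem exists_two_others {α : Type*} {b : Finset α} (hb : b.card = 4) (x : α) :
    ∃ y ∈ b, ∃ z ∈ b, x ≠ y ∧ x ≠ z ∧ y ≠ z := by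
  classical
  have hcard : 1 < (b.erase x).card := by
    have := Finset.pred_card_le_card_erase (s := b) (a := x)
    omega
  obtain ⟨y, hy, z, hz, hyz⟩ := Finset.one_lt_card.1 hcard
  exact ⟨y, mem_of_mem_erase hy, z, mem_of_mem_erase hz, (ne_of_mem_erase hy).symm,
    (ne_of_mem_erase hz).symm, hyz⟩

/-- A family of blocks together with, at every point `x`, a family of block classes indexed by
colours `k : Γ`. The resolution of the derived design at `x` is encoded by the classes
`classes x k`, whose members contain `x`; a colour with an empty class is regarded as absent. -/
structure ColouredSystem (α Γ : Type*) where
  blocks : Set (Finset α)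
  classes : α → Γ → Set (Finset α)

namespace ColouredSystem

instance (α Γ : Type*) : Inhabited (ColouredSystem α Γ) := ⟨⟨∅, fun _ _ => ∅⟩⟩

variable {α β Γ Γ' ι : Type*} {S : ColouredSystem α Γ}
  {T T' : α → α → α → Prop} {C C' : α → Γ → α → Prop}

/-- The colour `k` occurs at the point `x`. -/
def Uses (S : ColouredSystem α Γ) (x : α) (k : Γ) : Prop :=
  (S.classes x k).Nonempty

/-- A partial quadruple system with resolved derived designs: the blocks are quadruples covering
every triple satisfying `T` exactly once and no other triple, the classes at `x` partition the
blocks through `x`, and the class of colour `k` at `x` partitions the points `y ≠ x` satisfying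
`C x k y`. Only the values of `T` and `C` at distinct points matter. -/
structure IsPartialRDSQS (S : ColouredSystem α Γ) (T : α → α → α → Prop)
    (C : α → Γ → α → Prop) : Prop where
  card_eq : ∀ b ∈ S.blocks, b.card = 4
  triple_of_mem : ∀ b ∈ S.blocks, ∀ x ∈ b, ∀ y ∈ b, ∀ z ∈ b, x ≠ y → x ≠ z → y ≠ z → T x y z
  existsUnique_block : ∀ x y z, x ≠ y → x ≠ z → y ≠ z → T x y z →
    ∃! b, b ∈ S.blocks ∧ x ∈ b ∧ y ∈ b ∧ z ∈ b
  mem_blocks : ∀ x k, ∀ b ∈ S.classes x k, b ∈ S.blocks ∧ x ∈ b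
  existsUnique_class : ∀ b ∈ S.blocks, ∀ x ∈ b, ∃! k, b ∈ S.classes x k
  covers_of_mem : ∀ x k, ∀ b ∈ S.classes x k, ∀ y ∈ b, x ≠ y → C x k y
  existsUnique_mem_class : ∀ x k y, x ≠ y → C x k y → ∃! b, b ∈ S.classes x k ∧ y ∈ b

/-- A Steiner quadruple system all of whose derived designs are resolved by the classes. -/
def IsRDSQS (S : ColouredSystem α Γ) : Prop :=
  S.IsPartialRDSQS (fun _ _ _ => True) fun x k _ => S.Uses x k

namespace IsPartialRDSQS

theorem congr (h : S.IsPartialRDSQS T C)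
    (hT : ∀ x y z, x ≠ y → x ≠ z → y ≠ z → (T x y z ↔ T' x y z))
    (hC : ∀ x k y, x ≠ y → (C x k y ↔ C' x k y)) : S.IsPartialRDSQS T' C' where
  card_eq := h.card_eq
  triple_of_mem b hb x hx y hy z hz hxy hxz hyz :=
    (hT x y z hxy hxz hyz).1 (h.triple_of_mem b hb x hx y hy z hz hxy hxz hyz)
  existsUnique_block x y z hxy hxz hyz ht :=
    h.existsUnique_block x y z hxy hxz hyz ((hT x y z hxy hxz hyz).2 ht)
  mem_blocks := h.mem_blocks
  existsUnique_class := h.existsUnique_class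
  covers_of_mem x k b hb y hy hxy := (hC x k y hxy).1 (h.covers_of_mem x k b hb y hy hxy)
  existsUnique_mem_class x k y hxy hc := h.existsUnique_mem_class x k y hxy ((hC x k y hxy).2 hc)

theorem uses_iff (h : S.IsPartialRDSQS T C) (x : α) (k : Γ) :
    S.Uses x k ↔ ∃ y, x ≠ y ∧ C x k y := by
  constructor
  · rintro ⟨b, hb⟩
    have hcard : 1 < b.card := by
      rw [h.card_eq b (h.mem_blocks x k b hb).1]
      norm_num
    obtain ⟨y, hy, hyx⟩ := Finset.exists_mem_ne hcard x
    exact ⟨y, hyx.symm, h.covers_of_mem x k b hb y hy hyx.symm⟩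
  · rintro ⟨y, hxy, hc⟩
    obtain ⟨b, ⟨hb, -⟩, -⟩ := h.existsUnique_mem_class x k y hxy hc
    exact ⟨b, hb⟩

theorem isRDSQS {D : α → Γ → Prop} (h : S.IsPartialRDSQS T C)
    (hT : ∀ x y z, x ≠ y → x ≠ z → y ≠ z → T x y z)
    (hC : ∀ x k y, x ≠ y → (C x k y ↔ D x k)) : S.IsRDSQS := by
  refine h.congr (fun x y z hxy hxz hyz => iff_of_true (hT x y z hxy hxz hyz) trivial)
    fun x k y hxy => ?_
  rw [h.uses_iff]
  exact ⟨fun hc => ⟨y, hxy, hc⟩, fun ⟨z, hxz, hc⟩ => (hC x k y hxy).2 ((hC x k z hxz).1 hc)⟩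

theorem eq_of_mem_blocks (h : S.IsPartialRDSQS T C) {b b' : Finset α} (hb : b ∈ S.blocks)
    (hb' : b' ∈ S.blocks) {x y z : α} (hxy : x ≠ y) (hxz : x ≠ z) (hyz : y ≠ z)
    (hx : x ∈ b) (hy : y ∈ b) (hz : z ∈ b) (hx' : x ∈ b') (hy' : y ∈ b') (hz' : z ∈ b') :
    b = b' :=
  (h.existsUnique_block x y z hxy hxz hyz
    (h.triple_of_mem b hb x hx y hy z hz hxy hxz hyz)).unique ⟨hb, hx, hy, hz⟩ ⟨hb', hx', hy', hz'⟩

theorem eq_of_mem_classes (h : S.IsPartialRDSQS T C) {b b' : Finset α} {x y : α} {k : Γ}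
    (hb : b ∈ S.classes x k) (hb' : b' ∈ S.classes x k) (hxy : x ≠ y) (hy : y ∈ b)
    (hy' : y ∈ b') : b = b' :=
  (h.existsUnique_mem_class x k y hxy (h.covers_of_mem x k b hb y hy hxy)).unique
    ⟨hb, hy⟩ ⟨hb', hy'⟩

theorem colour_eq (h : S.IsPartialRDSQS T C) {b : Finset α} {x : α} {k k' : Γ}
    (hb : b ∈ S.classes x k) (hb' : b ∈ S.classes x k') : k = k' :=
  (h.existsUnique_class b (h.mem_blocks x k b hb).1 x (h.mem_blocks x k b hb).2).unique hb hb'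

end IsPartialRDSQS

/-- The image of a system under an embedding of its points. -/
def map (f : α ↪ β) (S : ColouredSystem α Γ) : ColouredSystem β Γ where
  blocks := {B | ∃ b ∈ S.blocks, b.map f = B}
  classes y k := {B | ∃ x, f x = y ∧ ∃ b ∈ S.classes x k, b.map f = B}

theorem IsPartialRDSQS.map (h : S.IsPartialRDSQS T C) (f : α ↪ β) :
    (S.map f).IsPartialRDSQS
      (fun x' y' z' => ∃ x y z, T x y z ∧ f x = x' ∧ f y = y' ∧ f z = z')
      (fun x' k y' => ∃ x y, C x k y ∧ f x = x' ∧ f y = y') where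
  card_eq := by
    rintro _ ⟨b, hb, rfl⟩
    rw [card_map, h.card_eq b hb]
  triple_of_mem := by
    rintro _ ⟨b, hb, rfl⟩
    simp only [Finset.forall_mem_map, f.injective.ne_iff]
    exact fun x hx y hy z hz hxy hxz hyz =>
      ⟨x, y, z, h.triple_of_mem b hb x hx y hy z hz hxy hxz hyz, rfl, rfl, rfl⟩
  existsUnique_block := by
    rintro _ _ _ hxy hxz hyz ⟨x, y, z, ht, rfl, rfl, rfl⟩
    obtain ⟨b, ⟨hb, hx, hy, hz⟩, huniq⟩ := h.existsUnique_block x y z (f.injective.ne_iff.1 hxy)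
      (f.injective.ne_iff.1 hxz) (f.injective.ne_iff.1 hyz) ht
    refine ⟨b.map f, ⟨⟨b, hb, rfl⟩, by simpa, by simpa, by simpa⟩, ?_⟩
    rintro _ ⟨⟨b', hb', rfl⟩, hx', hy', hz'⟩
    rw [huniq b' ⟨hb', by simpa using hx', by simpa using hy', by simpa using hz'⟩]
  mem_blocks := by
    rintro _ k _ ⟨x, rfl, b, hb, rfl⟩
    exact ⟨⟨b, (h.mem_blocks x k b hb).1, rfl⟩, mem_map_of_mem f (h.mem_blocks x k b hb).2⟩
  existsUnique_class := by
    rintro _ ⟨b, hb, rfl⟩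
    simp only [Finset.forall_mem_map]
    intro x hx
    obtain ⟨k, hk, huniq⟩ := h.existsUnique_class b hb x hx
    refine ⟨k, ⟨x, rfl, b, hk, rfl⟩, ?_⟩
    rintro k' ⟨x', hx', b', hb', hbb'⟩
    rw [f.injective hx', map_injective f hbb'] at hb'
    exact huniq k' hb'
  covers_of_mem := by
    rintro _ k _ ⟨x, rfl, b, hb, rfl⟩
    simp only [Finset.forall_mem_map, f.injective.ne_iff]
    exact fun y hy hxy => ⟨x, y, h.covers_of_mem x k b hb y hy hxy, rfl, rfl⟩
  existsUnique_mem_class := by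
    rintro _ k _ hxy ⟨x, y, hc, rfl, rfl⟩
    obtain ⟨b, ⟨hb, hy⟩, huniq⟩ := h.existsUnique_mem_class x k y (f.injective.ne_iff.1 hxy) hc
    refine ⟨b.map f, ⟨⟨x, rfl, b, hb, rfl⟩, by simpa⟩, ?_⟩
    rintro _ ⟨⟨x', hx', b', hb', rfl⟩, hy'⟩
    rw [f.injective hx'] at hb'
    rw [huniq b' ⟨hb', by simpa using hy'⟩]

theorem IsRDSQS.map_equiv (h : S.IsRDSQS) (e : α ≃ β) : (S.map e.toEmbedding).IsRDSQS :=
  (IsPartialRDSQS.map h e.toEmbedding).isRDSQS (D := fun x k => S.Uses (e.symm x) k)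
    (fun x y z _ _ _ => ⟨e.symm x, e.symm y, e.symm z, by simp⟩)
    fun x k y _ => ⟨by rintro ⟨x, y, hk, rfl, -⟩; simpa using hk,
      fun hk => ⟨e.symm x, e.symm y, by simpa using hk⟩⟩

/-- Renames the colours at each point `x` according to the relation `R x`. -/
def relabel (R : α → Γ → Γ' → Prop) (S : ColouredSystem α Γ) : ColouredSystem α Γ' where
  blocks := S.blocks
  classes x k' := {b | ∃ k, R x k k' ∧ b ∈ S.classes x k}

theorem IsPartialRDSQS.relabel (h : S.IsPartialRDSQS T C) {R : α → Γ → Γ' → Prop}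
    (hR : ∀ x k, S.Uses x k → ∃! k', R x k k')
    (hinj : ∀ x k₁ k₂ k', R x k₁ k' → R x k₂ k' → k₁ = k₂) :
    (S.relabel R).IsPartialRDSQS T fun x k' y => ∃ k, R x k k' ∧ C x k y where
  card_eq := h.card_eq
  triple_of_mem := h.triple_of_mem
  existsUnique_block := h.existsUnique_block
  mem_blocks := fun x _ b ⟨k, _, hb⟩ => h.mem_blocks x k b hb
  existsUnique_class b hb x hx := by
    obtain ⟨k, hk, -⟩ := h.existsUnique_class b hb x hx
    obtain ⟨k', hk', huniq⟩ := hR x k ⟨b, hk⟩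
    refine ⟨k', ⟨k, hk', hk⟩, ?_⟩
    rintro l' ⟨l, hl', hl⟩
    rw [h.colour_eq hl hk] at hl'
    exact huniq l' hl'
  covers_of_mem := fun x _ b ⟨k, hk, hb⟩ y hy hxy => ⟨k, hk, h.covers_of_mem x k b hb y hy hxy⟩
  existsUnique_mem_class := by
    rintro x k' y hxy ⟨k, hk, hc⟩
    obtain ⟨b, ⟨hb, hy⟩, huniq⟩ := h.existsUnique_mem_class x k y hxy hc
    refine ⟨b, ⟨⟨k, hk, hb⟩, hy⟩, ?_⟩
    rintro b' ⟨⟨l, hl, hb'⟩, hy'⟩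
    rw [hinj x l k k' hl hk] at hb'
    exact huniq b' ⟨hb', hy'⟩

/-- The union of a family of systems on the same points with the same colours. -/
def iUnion (S : ι → ColouredSystem α Γ) : ColouredSystem α Γ where
  blocks := {b | ∃ i, b ∈ (S i).blocks}
  classes x k := {b | ∃ i, b ∈ (S i).classes x k}

theorem IsPartialRDSQS.iUnion {S : ι → ColouredSystem α Γ} {T : ι → α → α → α → Prop}
    {C : ι → α → Γ → α → Prop} (h : ∀ i, (S i).IsPartialRDSQS (T i) (C i))
    (hT : ∀ i j x y z, x ≠ y → x ≠ z → y ≠ z → T i x y z → T j x y z → i = j)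
    (hC : ∀ i j x k y, x ≠ y → C i x k y → C j x k y → i = j) :
    (ColouredSystem.iUnion S).IsPartialRDSQS (fun x y z => ∃ i, T i x y z)
      fun x k y => ∃ i, C i x k y where
  card_eq := fun b ⟨i, hb⟩ => (h i).card_eq b hb
  triple_of_mem := fun b ⟨i, hb⟩ x hx y hy z hz hxy hxz hyz =>
    ⟨i, (h i).triple_of_mem b hb x hx y hy z hz hxy hxz hyz⟩
  existsUnique_block := by
    rintro x y z hxy hxz hyz ⟨i, hi⟩
    obtain ⟨b, ⟨hb, hxb⟩, huniq⟩ := (h i).existsUnique_block x y z hxy hxz hyz hi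
    refine ⟨b, ⟨⟨i, hb⟩, hxb⟩, ?_⟩
    rintro b' ⟨⟨j, hb'⟩, hx', hy', hz'⟩
    obtain rfl := hT i j x y z hxy hxz hyz hi
      ((h j).triple_of_mem b' hb' x hx' y hy' z hz' hxy hxz hyz)
    exact huniq b' ⟨hb', hx', hy', hz'⟩
  mem_blocks := fun x k b ⟨i, hb⟩ =>
    ⟨⟨i, ((h i).mem_blocks x k b hb).1⟩, ((h i).mem_blocks x k b hb).2⟩
  existsUnique_class := by
    rintro b ⟨i, hb⟩ x hx
    obtain ⟨k, hk, huniq⟩ := (h i).existsUnique_class b hb x hx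
    refine ⟨k, ⟨i, hk⟩, ?_⟩
    rintro l ⟨j, hl⟩
    obtain ⟨y, hy, z, hz, hxy, hxz, hyz⟩ := exists_two_others ((h i).card_eq b hb) x
    obtain rfl := hT i j x y z hxy hxz hyz
      ((h i).triple_of_mem b hb x hx y hy z hz hxy hxz hyz)
      ((h j).triple_of_mem b ((h j).mem_blocks x l b hl).1 x hx y hy z hz hxy hxz hyz)
    exact huniq l hl
  covers_of_mem := fun x k b ⟨i, hb⟩ y hy hxy => ⟨i, (h i).covers_of_mem x k b hb y hy hxy⟩
  existsUnique_mem_class := by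
    rintro x k y hxy ⟨i, hi⟩
    obtain ⟨b, ⟨hb, hy⟩, huniq⟩ := (h i).existsUnique_mem_class x k y hxy hi
    refine ⟨b, ⟨⟨i, hb⟩, hy⟩, ?_⟩
    rintro b' ⟨⟨j, hb'⟩, hy'⟩
    obtain rfl := hC i j x k y hxy hi ((h j).covers_of_mem x k b' hb' y hy' hxy)
    exact huniq b' ⟨hb', hy'⟩

end ColouredSystem

section Grid

variable {A A' G Γ : Type*}

/-- The column of a point of the grid `A × G` with a point `none` at infinity added. -/
def colOf (x : Option (A × G)) : Option A := x.map Prod.fst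

/-- The row of a point of the grid `A × G` with a point `none` at infinity added. -/
def rowOf (x : Option (A × G)) : Option G := x.map Prod.snd

/-- The column `a` of the grid, completed by the point at infinity. -/
def inCol (a : A) : Option G ↪ Option (A × G) := (Function.Embedding.sectR a G).optionMap

/-- The row `g` of the grid, completed by the point at infinity. -/
def inRow (g : G) : Option A ↪ Option (A × G) := (Function.Embedding.sectL A g).optionMap

/-- The points `x` and `y` lie on a common completed column. -/
def SameCol (x y : Option (A × G)) : Prop :=
  colOf x = none ∨ colOf y = none ∨ colOf x = colOf y

/-- The points `x`, `y` and `z` lie pairwise on a common completed column. -/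
def AllSameCol (x y z : Option (A × G)) : Prop :=
  SameCol x y ∧ SameCol x z ∧ SameCol y z

instance [DecidableEq A] (x y : Option (A × G)) : Decidable (SameCol x y) :=
  inferInstanceAs (Decidable (_ ∨ _ ∨ _))

instance [DecidableEq A] (x y z : Option (A × G)) : Decidable (AllSameCol x y z) :=
  inferInstanceAs (Decidable (_ ∧ _ ∧ _))

@[simp] theorem colOf_none : colOf (none : Option (A × G)) = none := rfl

@[simp] theorem colOf_some (p : A × G) : colOf (some p) = some p.1 := rfl

theorem colOf_eq_none_iff {x : Option (A × G)} : colOf x = none ↔ x = none :=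
  Option.map_eq_none_iff

@[simp] theorem inCol_none (a : A) : inCol a (none : Option G) = none := rfl

@[simp] theorem inCol_some (a : A) (g : G) : inCol a (some g) = some (a, g) := rfl

theorem sameCol_inCol (a : A) (x y : Option G) : SameCol (inCol a x) (inCol a y) := by
  cases x <;> cases y <;> simp [SameCol]

theorem SameCol.exists_inCol {x y : Option (A × G)} (h : SameCol x y) (hxy : x ≠ y) :
    ∃ a p q, inCol a p = x ∧ inCol a q = y := by
  rcases x with _ | ⟨a, g⟩
  · rcases y with _ | ⟨a', g'⟩
    · exact absurd rfl hxy
    · exact ⟨a', none, some g', rfl, rfl⟩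
  · rcases y with _ | ⟨a', g'⟩
    · exact ⟨a, some g, none, rfl, rfl⟩
    · obtain rfl : a = a' := by simpa [SameCol] using h
      exact ⟨a, some g, some g', rfl, rfl⟩

theorem AllSameCol.exists_inCol {x y z : Option (A × G)} (h : AllSameCol x y z) (hxy : x ≠ y) :
    ∃ a p q r, inCol a p = x ∧ inCol a q = y ∧ inCol a r = z := by
  obtain ⟨hxy', hxz, hyz⟩ := h
  obtain ⟨a, p, q, rfl, rfl⟩ := hxy'.exists_inCol hxy
  rcases z with _ | ⟨a', g'⟩
  · exact ⟨a, p, q, none, rfl, rfl, rfl⟩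
  · obtain rfl : a = a' := by
      cases p <;> cases q <;> simp_all [SameCol]
    exact ⟨a, p, q, some g', rfl, rfl, rfl⟩

theorem col_eq_of_inCol_eq {a a' : A} {p q p' q' : Option G} (hpq : p ≠ q)
    (hp : inCol a p = inCol a' p') (hq : inCol a q = inCol a' q') : a = a' := by
  cases p <;> cases q <;> cases p' <;> cases q' <;> simp_all

/-- The triples covered by an ingredient of the product that lies over the block `b` of columns.
If `b` contains the point at infinity, the ingredient is a candelabra system (three columns of
the grid and a stem), otherwise a transversal design on four columns. -/
def TransverseTo (b : Finset (Option A)) (x y z : Option (A × G)) : Prop :=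
  (colOf x ∈ b ∧ colOf y ∈ b ∧ colOf z ∈ b) ∧ ¬ AllSameCol x y z ∧
    (none ∈ b ∨ colOf x ≠ colOf y ∧ colOf x ≠ colOf z ∧ colOf y ≠ colOf z)

theorem exists_triple_transverseTo_iff {x y z : Option (A × G)} (h : ¬ AllSameCol x y z) :
    ∃ p q r, p ≠ q ∧ p ≠ r ∧ q ≠ r ∧ ∀ b, TransverseTo b x y z ↔ p ∈ b ∧ q ∈ b ∧ r ∈ b := by
  by_cases hdist : colOf x ≠ colOf y ∧ colOf x ≠ colOf z ∧ colOf y ≠ colOf z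
  · exact ⟨colOf x, colOf y, colOf z, hdist.1, hdist.2.1, hdist.2.2,
      fun b => ⟨fun ht => ht.1, fun hb => ⟨hb, h, .inr hdist⟩⟩⟩
  · have hiff : ∀ b, TransverseTo b x y z ↔
        none ∈ b ∧ colOf x ∈ b ∧ colOf y ∈ b ∧ colOf z ∈ b := fun b => by
      simp only [TransverseTo, h, hdist, not_false_eq_true, true_and, or_false]
      tauto
    rcases not_and_or.1 h with hxy | hrest
    · refine ⟨none, colOf x, colOf y, ?_⟩
      grind [SameCol]
    · rcases not_and_or.1 hrest with hxz | hyz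
      · refine ⟨none, colOf x, colOf z, ?_⟩
        grind [SameCol]
      · refine ⟨none, colOf y, colOf z, ?_⟩
        grind [SameCol]

/-- The points covered by the classes at `x` of an ingredient lying over `b`: the full classes,
indexed by `G`, cover all points they can, while the holey classes, indexed by the colours
`σ` with `H (rowOf x) σ`, avoid the completed column of `x`. -/
def IngredientCover (b : Finset (Option A)) (H : Option G → Γ → Prop) (x : Option (A × G)) :
    G ⊕ Γ → Option (A × G) → Prop
  | .inl _, y => colOf x ∈ b ∧ colOf y ∈ b ∧ (none ∈ b ∨ colOf x ≠ colOf y)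
  | .inr σ, y => colOf x ∈ b ∧ colOf y ∈ b ∧ none ∈ b ∧ H (rowOf x) σ ∧ ¬ SameCol x y

theorem IngredientCover.colOf_mem {b : Finset (Option A)} {H : Option G → Γ → Prop}
    {x y : Option (A × G)} {k : G ⊕ Γ} (h : IngredientCover b H x k y) : colOf x ∈ b := by
  cases k <;> exact h.1

/-- The systems used to replace a block `b` of columns in the product. -/
def IsIngredient (b : Finset (Option A)) (H : Option G → Γ → Prop)
    (S : ColouredSystem (Option (A × G)) (G ⊕ Γ)) : Prop :=
  S.IsPartialRDSQS (TransverseTo b) (IngredientCover b H)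

/-- The horizontal copies of `b` are blocks of `S`, and lie in the full class `0` at each of
their points. -/
def HasHorizontalBlocks [Zero G] (b : Finset (Option A))
    (S : ColouredSystem (Option (A × G)) (G ⊕ Γ)) : Prop :=
  ∀ g : G, ∀ x ∈ b, b.map (inRow g) ∈ S.classes (inRow g x) (.inl 0)

/-- The embedding of completed grids induced by an embedding of the sets of columns. -/
def gridEmb (G : Type*) (e : A' ↪ A) : Option (A' × G) ↪ Option (A × G) :=
  (e.prodMap (Function.Embedding.refl G)).optionMap

@[simp] theorem colOf_gridEmb (e : A' ↪ A) (x : Option (A' × G)) :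
    colOf (gridEmb G e x) = e.optionMap (colOf x) := by
  cases x <;> rfl

@[simp] theorem rowOf_gridEmb (e : A' ↪ A) (x : Option (A' × G)) :
    rowOf (gridEmb G e x) = rowOf x := by
  cases x <;> rfl

theorem optionMap_eq_none_iff (e : A' ↪ A) (p : Option A') : e.optionMap p = none ↔ p = none := by
  cases p <;> simp

theorem none_mem_map_optionMap (e : A' ↪ A) (b : Finset (Option A')) :
    none ∈ b.map e.optionMap ↔ none ∈ b := by
  simp

theorem sameCol_gridEmb (e : A' ↪ A) (x y : Option (A' × G)) :
    SameCol (gridEmb G e x) (gridEmb G e y) ↔ SameCol x y := by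
  simp only [SameCol, colOf_gridEmb, optionMap_eq_none_iff, e.optionMap.injective.eq_iff]

theorem transverseTo_gridEmb (e : A' ↪ A) (b : Finset (Option A')) (x y z : Option (A' × G)) :
    TransverseTo (b.map e.optionMap) (gridEmb G e x) (gridEmb G e y) (gridEmb G e z) ↔
      TransverseTo b x y z := by
  simp only [TransverseTo, AllSameCol, sameCol_gridEmb, colOf_gridEmb, mem_map',
    none_mem_map_optionMap, e.optionMap.injective.ne_iff]

theorem ingredientCover_gridEmb (e : A' ↪ A) (b : Finset (Option A')) (H : Option G → Γ → Prop)
    (x y : Option (A' × G)) (k : G ⊕ Γ) :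
    IngredientCover (b.map e.optionMap) H (gridEmb G e x) k (gridEmb G e y) ↔
      IngredientCover b H x k y := by
  cases k <;> simp only [IngredientCover, sameCol_gridEmb, colOf_gridEmb, rowOf_gridEmb, mem_map',
    none_mem_map_optionMap, e.optionMap.injective.ne_iff]

theorem exists_gridEmb_eq {e : A' ↪ A} {b : Finset (Option A')} {x : Option (A × G)}
    (h : colOf x ∈ b.map e.optionMap) : ∃ x', gridEmb G e x' = x := by
  rcases x with _ | ⟨a, g⟩
  · exact ⟨none, rfl⟩
  · obtain ⟨_ | a', -, ha'⟩ := mem_map.1 h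
    · exact absurd ha' (by simp)
    · obtain rfl : e a' = a := by simpa using ha'
      exact ⟨some (a', g), rfl⟩

theorem IsIngredient.map_gridEmb {b : Finset (Option A')} {H : Option G → Γ → Prop}
    {S : ColouredSystem (Option (A' × G)) (G ⊕ Γ)} (h : IsIngredient b H S) (e : A' ↪ A) :
    IsIngredient (b.map e.optionMap) H (S.map (gridEmb G e)) := by
  refine (ColouredSystem.IsPartialRDSQS.map h (gridEmb G e)).congr (fun x y z _ _ _ => ?_)
    fun x k y _ => ?_
  · constructor
    · rintro ⟨x, y, z, ht, rfl, rfl, rfl⟩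
      exact (transverseTo_gridEmb e b x y z).2 ht
    · intro ht
      obtain ⟨x, rfl⟩ := exists_gridEmb_eq ht.1.1
      obtain ⟨y, rfl⟩ := exists_gridEmb_eq ht.1.2.1
      obtain ⟨z, rfl⟩ := exists_gridEmb_eq ht.1.2.2
      exact ⟨x, y, z, (transverseTo_gridEmb e b x y z).1 ht, rfl, rfl, rfl⟩
  · constructor
    · rintro ⟨x, y, hc, rfl, rfl⟩
      exact (ingredientCover_gridEmb e b H x y k).2 hc
    · intro hc
      have hy : colOf y ∈ b.map e.optionMap := by cases k <;> exact hc.2.1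
      obtain ⟨x, rfl⟩ := exists_gridEmb_eq hc.colOf_mem
      obtain ⟨y, rfl⟩ := exists_gridEmb_eq hy
      exact ⟨x, y, (ingredientCover_gridEmb e b H x y k).1 hc, rfl, rfl⟩

theorem gridEmb_inRow (e : A' ↪ A) (g : G) (p : Option A') :
    gridEmb G e (inRow g p) = inRow g (e.optionMap p) := by
  cases p <;> rfl

theorem HasHorizontalBlocks.map_gridEmb [Zero G] {b : Finset (Option A')}
    {S : ColouredSystem (Option (A' × G)) (G ⊕ Γ)} (h : HasHorizontalBlocks b S) (e : A' ↪ A) :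
    HasHorizontalBlocks (b.map e.optionMap) (S.map (gridEmb G e)) := by
  intro g
  simp only [Finset.forall_mem_map]
  intro x hx
  refine ⟨inRow g x, gridEmb_inRow e g x, b.map (inRow g), h g x hx, ?_⟩
  rw [Finset.map_map, Finset.map_map]
  congr 1
  ext1 p
  exact gridEmb_inRow e g p

end Grid

section Product

open ColouredSystem

variable {A G ΓV ΓU : Type*} {V : ColouredSystem (Option A) ΓV}
  {U : ColouredSystem (Option G) ΓU}
  {D : Finset (Option A) → ColouredSystem (Option (A × G)) (G ⊕ ΓU)}

/-- How a colour at `x` of the ingredient over `b` becomes a colour of the product: the index of a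
full class is paired with the colour of `b` in `V` at the column of `x`, while the colour of a
holey class is kept, and will be shared with the copies of `U` on the columns. -/
inductive LiftColour (V : ColouredSystem (Option A) ΓV) (b : Finset (Option A))
    (x : Option (A × G)) : G ⊕ ΓU → (ΓV × G) ⊕ ΓU → Prop
  | full {k : ΓV} (t : G) (hk : b ∈ V.classes (colOf x) k) : LiftColour V b x (.inl t) (.inl (k, t))
  | holey (σ : ΓU) : LiftColour V b x (.inr σ) (.inr σ)

/-- The constituents of the product: the ingredients over the blocks of `V`, and a copy of `U` on
every completed column. -/
def productPiece (V : ColouredSystem (Option A) ΓV) (U : ColouredSystem (Option G) ΓU)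
    (D : Finset (Option A) → ColouredSystem (Option (A × G)) (G ⊕ ΓU)) :
    V.blocks ⊕ A → ColouredSystem (Option (A × G)) ((ΓV × G) ⊕ ΓU)
  | .inl b => (D b).relabel (LiftColour V b)
  | .inr a => (U.map (inCol a)).relabel fun _ σ k => k = .inr σ

/-- The product of the systems `V` and `U` with ingredients `D b` over the blocks `b` of `V`. -/
def product (V : ColouredSystem (Option A) ΓV) (U : ColouredSystem (Option G) ΓU)
    (D : Finset (Option A) → ColouredSystem (Option (A × G)) (G ⊕ ΓU)) :
    ColouredSystem (Option (A × G)) ((ΓV × G) ⊕ ΓU) :=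
  iUnion (productPiece V U D)

/-- The triples covered by a constituent of the product. -/
def productTriple (V : ColouredSystem (Option A) ΓV) :
    V.blocks ⊕ A → Option (A × G) → Option (A × G) → Option (A × G) → Prop
  | .inl b, x, y, z => TransverseTo b.1 x y z
  | .inr a, x, y, z => ∃ p q r, inCol a p = x ∧ inCol a q = y ∧ inCol a r = z

/-- The points covered by the classes of a constituent of the product. -/
def productCover (V : ColouredSystem (Option A) ΓV) (U : ColouredSystem (Option G) ΓU) :
    V.blocks ⊕ A → Option (A × G) → (ΓV × G) ⊕ ΓU → Option (A × G) → Prop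
  | .inl b, x, .inl (k, _), y =>
    b.1 ∈ V.classes (colOf x) k ∧ colOf y ∈ b.1 ∧ (none ∈ b.1 ∨ colOf x ≠ colOf y)
  | .inl b, x, .inr σ, y =>
    (none ∈ b.1 ∧ colOf x ∈ b.1 ∧ colOf y ∈ b.1) ∧ U.Uses (rowOf x) σ ∧ ¬ SameCol x y
  | .inr _, _, .inl _, _ => False
  | .inr a, x, .inr σ, y => U.Uses (rowOf x) σ ∧ ∃ p q, inCol a p = x ∧ inCol a q = y

theorem rowOf_inCol (a : A) (p : Option G) : rowOf (inCol a p) = p := by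
  cases p <;> rfl

theorem isPartialRDSQS_productPiece_inl (hV : V.IsRDSQS) (b : V.blocks)
    (hD : IsIngredient b.1 U.Uses (D b)) :
    (productPiece V U D (.inl b)).IsPartialRDSQS (productTriple V (.inl b))
      (productCover V U (.inl b)) := by
  refine (IsPartialRDSQS.relabel hD ?_ ?_).congr (fun _ _ _ _ _ _ => Iff.rfl) ?_
  · intro x k hk
    obtain ⟨y, -, hc⟩ := (IsPartialRDSQS.uses_iff hD x k).1 hk
    obtain ⟨l, hl, -⟩ := hV.existsUnique_class b b.2 _ hc.colOf_mem
    rcases k with t | σ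
    · refine ⟨.inl (l, t), .full t hl, ?_⟩
      rintro _ ⟨_, hl'⟩
      rw [hV.colour_eq hl' hl]
    · refine ⟨.inr σ, .holey σ, ?_⟩
      rintro _ ⟨⟩
      rfl
  · rintro x k₁ k₂ _ ⟨⟩ ⟨⟩ <;> rfl
  · rintro x (⟨l, t⟩ | σ) y -
    · constructor
      · rintro ⟨_, ⟨_, hl⟩, hc⟩
        exact ⟨hl, hc.2⟩
      · rintro ⟨hl, hc⟩
        exact ⟨.inl t, .full t hl, (hV.mem_blocks _ l b hl).2, hc⟩
    · constructor
      · rintro ⟨_, ⟨⟩, hx, hy, hb, hc⟩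
        exact ⟨⟨hb, hx, hy⟩, hc⟩
      · rintro ⟨⟨hb, hx, hy⟩, hc⟩
        exact ⟨.inr σ, .holey σ, hx, hy, hb, hc⟩

theorem isPartialRDSQS_productPiece_inr (hU : U.IsRDSQS) (a : A) :
    (productPiece V U D (.inr a)).IsPartialRDSQS (productTriple V (.inr a))
      (productCover V U (.inr a)) := by
  refine ((IsPartialRDSQS.map hU (inCol a)).relabel (fun _ σ _ => ⟨.inr σ, rfl, fun _ h => h⟩)
    (by rintro _ σ σ' _ rfl h; exact Sum.inr_injective h)).congr
    (fun x y z _ _ _ => by simp only [true_and, productTriple]) ?_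
  rintro x (⟨l, t⟩ | σ) y -
  · simp [productCover]
  · constructor
    · rintro ⟨_, ⟨⟩, p, q, hσ, rfl, rfl⟩
      exact ⟨by rwa [rowOf_inCol], p, q, rfl, rfl⟩
    · rintro ⟨hσ, p, q, rfl, rfl⟩
      exact ⟨σ, rfl, p, q, by rwa [rowOf_inCol] at hσ, rfl, rfl⟩

theorem productTriple_unique (hV : V.IsRDSQS) {i j : V.blocks ⊕ A} {x y z : Option (A × G)}
    (hxy : x ≠ y) (hi : productTriple V i x y z) (hj : productTriple V j x y z) : i = j := by
  have hcol : ∀ {a b}, productTriple V (.inl b) x y z → ¬ productTriple V (.inr a) x y z := by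
    rintro a b ht ⟨p, q, r, rfl, rfl, rfl⟩
    exact ht.2.1 ⟨sameCol_inCol a p q, sameCol_inCol a p r, sameCol_inCol a q r⟩
  rcases i with b | a <;> rcases j with b' | a'
  · obtain ⟨p, q, r, hpq, hpr, hqr, hiff⟩ := exists_triple_transverseTo_iff hi.2.1
    obtain ⟨hp, hq, hr⟩ := (hiff b).1 hi
    obtain ⟨hp', hq', hr'⟩ := (hiff b').1 hj
    exact congrArg _ (Subtype.ext (hV.eq_of_mem_blocks b.2 b'.2 hpq hpr hqr hp hq hr hp' hq' hr'))
  · exact absurd hj (hcol hi)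
  · exact absurd hi (hcol hj)
  · obtain ⟨p, q, r, rfl, rfl, rfl⟩ := hi
    obtain ⟨p', q', r', hp, hq, -⟩ := hj
    rw [col_eq_of_inCol_eq (ne_of_apply_ne _ hxy) hp.symm hq.symm]

theorem exists_productTriple (hV : V.IsRDSQS) {x y z : Option (A × G)} (hxy : x ≠ y) :
    ∃ i, productTriple V i x y z := by
  by_cases h : AllSameCol x y z
  · obtain ⟨a, hpqr⟩ := h.exists_inCol hxy
    exact ⟨.inr a, hpqr⟩
  · obtain ⟨p, q, r, hpq, hpr, hqr, hiff⟩ := exists_triple_transverseTo_iff h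
    obtain ⟨b, ⟨hb, hbpqr⟩, -⟩ := hV.existsUnique_block p q r hpq hpr hqr trivial
    exact ⟨.inl ⟨b, hb⟩, (hiff b).2 hbpqr⟩

theorem exists_ne_colOf_forall_mem_iff {x y : Option (A × G)} (hxy : x ≠ y) :
    ∃ p, colOf x ≠ p ∧ ∀ b : Finset (Option A), colOf x ∈ b →
      (colOf y ∈ b ∧ (none ∈ b ∨ colOf x ≠ colOf y) ↔ p ∈ b) := by
  by_cases h : colOf x = colOf y
  · refine ⟨none, fun hx => hxy ?_, fun b hb => ?_⟩
    · rw [colOf_eq_none_iff.1 hx, colOf_eq_none_iff.1 (h.symm.trans hx)]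
    · simp [← h, hb]
  · exact ⟨colOf y, h, fun b _ => by simp [h]⟩

theorem ne_colOf_of_not_sameCol {x y : Option (A × G)} (h : ¬ SameCol x y) :
    none ≠ colOf x ∧ none ≠ colOf y ∧ colOf x ≠ colOf y := by
  simp only [SameCol, not_or] at h
  exact ⟨Ne.symm h.1, Ne.symm h.2.1, h.2.2⟩

theorem productCover_unique (hV : V.IsRDSQS) {i j : V.blocks ⊕ A} {x y : Option (A × G)}
    {k : (ΓV × G) ⊕ ΓU} (hxy : x ≠ y) (hi : productCover V U i x k y)
    (hj : productCover V U j x k y) : i = j := by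
  rcases k with ⟨k, t⟩ | σ <;> rcases i with b | a <;> rcases j with b' | a'
  · obtain ⟨p, hp, hiff⟩ := exists_ne_colOf_forall_mem_iff hxy
    exact congrArg _ (Subtype.ext (hV.eq_of_mem_classes hi.1 hj.1 hp
      ((hiff b (hV.mem_blocks _ k b hi.1).2).1 hi.2)
      ((hiff b' (hV.mem_blocks _ k b' hj.1).2).1 hj.2)))
  · exact hj.elim
  · exact hi.elim
  · exact hi.elim
  · obtain ⟨⟨hn, hx, hy⟩, -, hne⟩ := hi
    obtain ⟨⟨hn', hx', hy'⟩, -⟩ := hj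
    obtain ⟨h₁, h₂, h₃⟩ := ne_colOf_of_not_sameCol hne
    exact congrArg _ (Subtype.ext (hV.eq_of_mem_blocks b.2 b'.2 h₁ h₂ h₃ hn hx hy hn' hx' hy'))
  · obtain ⟨-, p, q, rfl, rfl⟩ := hj
    exact absurd (sameCol_inCol a' p q) hi.2.2
  · obtain ⟨-, p, q, rfl, rfl⟩ := hi
    exact absurd (sameCol_inCol a p q) hj.2.2
  · obtain ⟨-, p, q, rfl, rfl⟩ := hi
    obtain ⟨-, p', q', hp, hq⟩ := hj
    rw [col_eq_of_inCol_eq (ne_of_apply_ne _ hxy) hp.symm hq.symm]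

theorem exists_productCover_inl_iff (hV : V.IsRDSQS) {x y : Option (A × G)} (k : ΓV) (t : G)
    (hxy : x ≠ y) : (∃ i, productCover V U i x (.inl (k, t)) y) ↔ V.Uses (colOf x) k := by
  constructor
  · rintro ⟨b | a, hi⟩
    · exact ⟨b, hi.1⟩
    · exact hi.elim
  · intro hk
    obtain ⟨p, hp, hiff⟩ := exists_ne_colOf_forall_mem_iff hxy
    obtain ⟨b, ⟨hb, hpb⟩, -⟩ := hV.existsUnique_mem_class (colOf x) k p hp hk
    obtain ⟨hb', hx⟩ := hV.mem_blocks _ k b hb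
    exact ⟨.inl ⟨b, hb'⟩, hb, (hiff b hx).2 hpb⟩

theorem exists_productCover_inr_iff (hV : V.IsRDSQS) {x y : Option (A × G)} (σ : ΓU)
    (hxy : x ≠ y) : (∃ i, productCover V U i x (.inr σ) y) ↔ U.Uses (rowOf x) σ := by
  constructor
  · rintro ⟨b | a, hi⟩
    · exact hi.2.1
    · exact hi.1
  · intro hσ
    by_cases h : SameCol x y
    · obtain ⟨a, hpq⟩ := h.exists_inCol hxy
      exact ⟨.inr a, hσ, hpq⟩
    · obtain ⟨h₁, h₂, h₃⟩ := ne_colOf_of_not_sameCol h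
      obtain ⟨b, ⟨hb, hmem⟩, -⟩ := hV.existsUnique_block _ _ _ h₁ h₂ h₃ trivial
      exact ⟨.inl ⟨b, hb⟩, hmem, hσ, h⟩

theorem isRDSQS_product (hV : V.IsRDSQS) (hU : U.IsRDSQS)
    (hD : ∀ b ∈ V.blocks, IsIngredient b U.Uses (D b)) : (product V U D).IsRDSQS := by
  have hpiece : ∀ i, (productPiece V U D i).IsPartialRDSQS (productTriple V i)
      (productCover V U i) := by
    rintro (b | a)
    · exact isPartialRDSQS_productPiece_inl hV b (hD b b.2)
    · exact isPartialRDSQS_productPiece_inr hU a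
  refine (IsPartialRDSQS.iUnion hpiece (fun _ _ _ _ _ hxy _ _ => productTriple_unique hV hxy)
    fun _ _ _ _ _ hxy => productCover_unique hV hxy).isRDSQS
    (D := fun x => Sum.elim (fun kt => V.Uses (colOf x) kt.1) (U.Uses (rowOf x)))
    (fun _ _ _ hxy _ _ => exists_productTriple hV hxy) ?_
  rintro x (⟨k, t⟩ | σ) y hxy
  · exact exists_productCover_inl_iff hV k t hxy
  · exact exists_productCover_inr_iff hV σ hxy

theorem map_inRow_mem_product_classes [Zero G] (hV : V.IsRDSQS)
    (hD : ∀ b ∈ V.blocks, HasHorizontalBlocks b (D b)) {b : Finset (Option A)} {p : Option A}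
    {k : ΓV} (hb : b ∈ V.classes p k) (g : G) :
    b.map (inRow g) ∈ (product V U D).classes (inRow g p) (.inl (k, 0)) := by
  obtain ⟨hb', hp⟩ := hV.mem_blocks p k b hb
  have hcol : colOf (inRow g p) = p := by cases p <;> rfl
  exact ⟨.inl ⟨b, hb'⟩, .inl 0, .full 0 (by rwa [hcol]), hD b hb' g p hp⟩

end Product

section Graph

variable {J G : Type*} [Fintype J]

/-- The graph of a function on a finite type. -/
def functionGraph (h : J → G) : Finset (J × G) :=
  univ.map ⟨fun j => (j, h j), fun _ _ hij => congrArg Prod.fst hij⟩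

@[simp] theorem mem_functionGraph {h : J → G} {p : J × G} : p ∈ functionGraph h ↔ h p.1 = p.2 := by
  obtain ⟨j, g⟩ := p
  simp only [functionGraph, mem_map, mem_univ, true_and, Prod.ext_iff]
  exact ⟨fun ⟨_, hj, hg⟩ => hj ▸ hg, fun hg => ⟨j, rfl, hg⟩⟩

theorem functionGraph_injective : Function.Injective (functionGraph : (J → G) → _) := by
  intro h h' heq
  funext j
  have hmem : (j, h j) ∈ functionGraph h' := heq ▸ mem_functionGraph.2 rfl
  exact (mem_functionGraph.1 hmem).symm

theorem fst_ne_of_mem_functionGraph {h : J → G} {p q : J × G} (hp : p ∈ functionGraph h)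
    (hq : q ∈ functionGraph h) (hpq : p ≠ q) : p.1 ≠ q.1 := fun heq =>
  hpq (Prod.ext heq (by rw [← mem_functionGraph.1 hp, ← mem_functionGraph.1 hq, heq]))

end Graph

section Transversal

variable {G : Type*}

theorem existsUnique_function_of_values (s e : Bool) (a a' c₀ c₁ : G) :
    ∃! h : Bool × Bool → G,
      h (s, e) = a ∧ h (s, !e) = a' ∧ h (!s, false) = c₀ ∧ h (!s, true) = c₁ := by
  refine ⟨fun j => if j.1 = s then (if j.2 = e then a else a') else (if j.2 then c₁ else c₀),
    by simp, ?_⟩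
  rintro h ⟨rfl, rfl, rfl, rfl⟩
  funext ⟨s', e'⟩
  cases s <;> cases e <;> cases s' <;> cases e' <;> rfl

variable [AddCommGroup G]

/-- The defining equation of the blocks of the transversal system. -/
def IsBalanced (h : Bool × Bool → G) : Prop :=
  h (false, false) + h (false, true) = h (true, false) + h (true, true)

/-- The colour, at a point over `(s, e)`, of the block given by `h`. -/
def skew (s : Bool) (h : Bool × Bool → G) : G := h (!s, false) - h (!s, true)

theorem isBalanced_iff (s e : Bool) (h : Bool × Bool → G) :
    IsBalanced h ↔ h (s, e) + h (s, !e) = h (!s, false) + h (!s, true) := by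
  cases s <;> cases e <;> simp only [IsBalanced, Bool.not_true, Bool.not_false] <;> grind

theorem existsUnique_isBalanced (v : Bool × Bool → G) (l : Bool × Bool) :
    ∃! h, IsBalanced h ∧ ∀ j ≠ l, h j = v j := by
  obtain ⟨s, e⟩ := l
  refine ⟨Function.update v (s, e) (v (!s, false) + v (!s, true) - v (s, !e)), ⟨?_, ?_⟩, ?_⟩
  · rw [isBalanced_iff s e]
    simp
  · exact fun j hj => Function.update_of_ne hj _ _
  · rintro h ⟨hbal, hv⟩
    refine Function.eq_update_iff.2 ⟨?_, hv⟩
    rw [isBalanced_iff s e] at hbal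
    rw [← hv (!s, false) (by simp), ← hv (!s, true) (by simp), ← hv (s, !e) (by simp)]
    exact eq_sub_of_add_eq hbal

theorem existsUnique_isBalanced_of_three {i j k : Bool × Bool} (hij : i ≠ j) (hik : i ≠ k)
    (hjk : j ≠ k) (a b c : G) : ∃! h, IsBalanced h ∧ h i = a ∧ h j = b ∧ h k = c := by
  have hcard : ({i, j, k} : Finset (Bool × Bool))ᶜ.card = 1 := by
    rw [card_compl, card_eq_three.2 ⟨i, j, k, hij, hik, hjk, rfl⟩]
    rfl
  obtain ⟨l, hcompl⟩ := card_eq_one.1 hcard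
  have hl : ∀ m, m ≠ l ↔ m = i ∨ m = j ∨ m = k := fun m => by
    rw [Ne, ← mem_singleton, ← hcompl, mem_compl, not_not, mem_insert, mem_insert, mem_singleton]
  convert existsUnique_isBalanced (fun m => if m = i then a else if m = j then b else c) l
    using 3 with h
  simp [hl, hij.symm, hik.symm, hjk.symm]

theorem existsUnique_isBalanced_skew (hG : Function.Bijective fun g : G => 2 • g)
    {i j : Bool × Bool} (hij : i ≠ j) (a b t : G) :
    ∃! h, IsBalanced h ∧ h i = a ∧ h j = b ∧ skew i.1 h = t := by
  obtain ⟨s, e⟩ := i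
  simp only [isBalanced_iff s e, skew]
  have hj : j = (s, !e) ∨ j = (!s, false) ∨ j = (!s, true) := by
    clear a b t
    decide +revert
  rcases hj with rfl | rfl | rfl
  · obtain ⟨c, hc⟩ := hG.2 (a + b - t)
    have hhalf : ∀ d, d + d = a + b - t ↔ d = c := fun d => by
      rw [← hc, ← two_nsmul]
      exact hG.1.eq_iff
    convert existsUnique_function_of_values s e a b (c + t) c using 2 with h
    constructor
    · rintro ⟨hbal, rfl, rfl, rfl⟩
      obtain rfl := (hhalf (h (!s, true))).1 (by rw [hbal]; abel)
      exact ⟨rfl, rfl, by abel, rfl⟩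
    · rintro ⟨rfl, rfl, h₀, h₁⟩
      refine ⟨?_, rfl, rfl, by rw [h₀, h₁]; abel⟩
      rw [h₀, h₁, add_right_comm, (hhalf c).2 rfl, sub_add_cancel]
  · convert existsUnique_function_of_values s e a (b + (b - t) - a) b (b - t) using 2 with h
    grind
  · convert existsUnique_function_of_values s e a (b + (b + t) - a) (b + t) b using 2 with h
    grind

variable (G) in
/-- The transversal design on four copies of `G` whose blocks are the solutions of `IsBalanced`,
with classes given by the values of `skew`. -/
def transversalSystem : ColouredSystem ((Bool × Bool) × G) G where
  blocks := {B | ∃ h, IsBalanced h ∧ functionGraph h = B}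
  classes x t := {B | ∃ h, IsBalanced h ∧ h x.1 = x.2 ∧ skew x.1.1 h = t ∧ functionGraph h = B}

theorem isPartialRDSQS_transversalSystem (hG : Function.Bijective fun g : G => 2 • g) :
    (transversalSystem G).IsPartialRDSQS (fun x y z => x.1 ≠ y.1 ∧ x.1 ≠ z.1 ∧ y.1 ≠ z.1)
      fun x _ y => x.1 ≠ y.1 where
  card_eq := by
    rintro _ ⟨h, -, rfl⟩
    exact card_map _
  triple_of_mem := by
    rintro _ ⟨h, -, rfl⟩ x hx y hy z hz hxy hxz hyz
    exact ⟨fst_ne_of_mem_functionGraph hx hy hxy, fst_ne_of_mem_functionGraph hx hz hxz,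
      fst_ne_of_mem_functionGraph hy hz hyz⟩
  existsUnique_block := by
    rintro x y z - - - ⟨hxy, hxz, hyz⟩
    obtain ⟨h, ⟨hbal, hx, hy, hz⟩, huniq⟩ :=
      existsUnique_isBalanced_of_three hxy hxz hyz x.2 y.2 z.2
    refine ⟨functionGraph h, ⟨⟨h, hbal, rfl⟩, by simpa, by simpa, by simpa⟩, ?_⟩
    rintro _ ⟨⟨h', hbal', rfl⟩, hx', hy', hz'⟩
    rw [huniq h' ⟨hbal', by simpa using hx', by simpa using hy', by simpa using hz'⟩]
  mem_blocks := by
    rintro x t _ ⟨h, hbal, hx, -, rfl⟩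
    exact ⟨⟨h, hbal, rfl⟩, mem_functionGraph.2 hx⟩
  existsUnique_class := by
    rintro _ ⟨h, hbal, rfl⟩ x hx
    refine ⟨skew x.1.1 h, ⟨h, hbal, mem_functionGraph.1 hx, rfl, rfl⟩, ?_⟩
    rintro _ ⟨h', -, -, rfl, heq⟩
    rw [functionGraph_injective heq]
  covers_of_mem := by
    rintro x t _ ⟨h, -, hx, -, rfl⟩ y hy hxy
    exact fst_ne_of_mem_functionGraph (mem_functionGraph.2 hx) hy hxy
  existsUnique_mem_class := by
    rintro x t y - hne
    obtain ⟨h, ⟨hbal, hx, hy, ht⟩, huniq⟩ := existsUnique_isBalanced_skew hG hne x.2 y.2 t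
    refine ⟨functionGraph h, ⟨⟨h, hbal, hx, ht, rfl⟩, mem_functionGraph.2 hy⟩, ?_⟩
    rintro _ ⟨⟨h', hbal', hx', ht', rfl⟩, hy'⟩
    rw [huniq h' ⟨hbal', hx', mem_functionGraph.1 hy', ht'⟩]

end Transversal

section TransversalIngredient

variable {A J G Γ : Type*}

theorem exists_embedding_map_univ_eq [Fintype J] {s : Finset A} (hs : s.card = Fintype.card J) :
    ∃ e : J ↪ A, univ.map e = s := by
  have hcard : Fintype.card J = Fintype.card s := by rw [Fintype.card_coe, hs]
  refine ⟨(Fintype.equivOfCardEq hcard).toEmbedding.trans (.subtype (· ∈ s)), ?_⟩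
  rw [← Finset.map_map, map_univ_equiv]
  exact attach_map_val

theorem exists_embedding_map_some_univ_eq [Fintype J] {b : Finset (Option A)} (hn : none ∉ b)
    (hb : b.card = Fintype.card J) :
    ∃ e : J ↪ A, (univ.map .some : Finset (Option J)).map e.optionMap = b := by
  obtain ⟨e, he⟩ := exists_embedding_map_univ_eq ((card_eraseNone_of_not_mem hn).trans hb)
  refine ⟨e, ?_⟩
  ext (_ | a)
  · simpa using hn
  · simp [← mem_eraseNone, ← he]

theorem exists_embedding_map_univ_option_eq [Fintype J] {b : Finset (Option A)} (hn : none ∈ b)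
    (hb : b.card = Fintype.card J + 1) :
    ∃ e : J ↪ A, (univ : Finset (Option J)).map e.optionMap = b := by
  have hcard : b.eraseNone.card = Fintype.card J := by
    rw [card_eraseNone_of_mem hn, hb, Nat.add_sub_cancel]
  obtain ⟨e, he⟩ := exists_embedding_map_univ_eq hcard
  refine ⟨e, ?_⟩
  ext (_ | a)
  · simpa using hn
  · simp [← mem_eraseNone, ← he]

theorem transverseTo_map_some_univ_iff [Fintype J] {x y z : Option (J × G)} :
    TransverseTo (univ.map .some) x y z ↔ ∃ p q r : J × G,
      (p.1 ≠ q.1 ∧ p.1 ≠ r.1 ∧ q.1 ≠ r.1) ∧ some p = x ∧ some q = y ∧ some r = z := by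
  rcases x with _ | p <;> rcases y with _ | q <;> rcases z with _ | r <;>
    simp +contextual [TransverseTo, AllSameCol, SameCol, -Prod.exists]

theorem ingredientCover_map_some_univ_iff [Fintype J] {H : Option G → Γ → Prop}
    {x y : Option (J × G)} {k : G ⊕ Γ} :
    IngredientCover (univ.map .some) H x k y ↔
      ∃ t, k = .inl t ∧ ∃ p q : J × G, p.1 ≠ q.1 ∧ some p = x ∧ some q = y := by
  rcases x with _ | p <;> rcases y with _ | q <;> rcases k with t | σ <;>
    simp [IngredientCover]

variable [AddCommGroup G]

variable (G Γ) in
/-- The transversal system as an ingredient without holey classes. -/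
def transversalIngredient : ColouredSystem (Option ((Bool × Bool) × G)) (G ⊕ Γ) :=
  ((transversalSystem G).map .some).relabel fun _ t k => k = .inl t

theorem isIngredient_transversalIngredient (hG : Function.Bijective fun g : G => 2 • g)
    (H : Option G → Γ → Prop) :
    IsIngredient (univ.map .some) H (transversalIngredient G Γ) := by
  refine (((isPartialRDSQS_transversalSystem hG).map .some).relabel
    (fun _ t _ => ⟨.inl t, rfl, fun _ h => h⟩)
    (by rintro _ t t' _ rfl h; exact Sum.inl_injective h)).congr
    (fun _ _ _ _ _ _ => transverseTo_map_some_univ_iff.symm)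
    fun _ _ _ _ => ingredientCover_map_some_univ_iff.symm

theorem hasHorizontalBlocks_transversalIngredient :
    HasHorizontalBlocks (univ.map .some) (transversalIngredient G Γ) := by
  intro g
  simp only [Finset.forall_mem_map]
  intro j _
  refine ⟨0, rfl, (j, g), rfl, functionGraph fun _ => g,
    ⟨fun _ => g, rfl, rfl, sub_self g, rfl⟩, ?_⟩
  simp only [functionGraph, Finset.map_map]
  rfl

end TransversalIngredient

section TrivialSystem

variable {α : Type*} [Fintype α]

variable (α) in
/-- The quadruple system whose only block is the whole point set. -/
def trivialSystem : ColouredSystem α Unit where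
  blocks := {univ}
  classes _ _ := {univ}

theorem isRDSQS_trivialSystem (hα : Fintype.card α = 4) : (trivialSystem α).IsRDSQS where
  card_eq := by
    rintro _ rfl
    exact hα
  triple_of_mem _ _ _ _ _ _ _ _ _ _ _ := trivial
  existsUnique_block x y z _ _ _ _ :=
    ⟨univ, ⟨rfl, mem_univ x, mem_univ y, mem_univ z⟩, fun _ h => h.1⟩
  mem_blocks := by
    rintro x _ _ rfl
    exact ⟨rfl, mem_univ x⟩
  existsUnique_class b hb _ _ := ⟨(), hb, fun _ _ => rfl⟩
  covers_of_mem _ _ b hb _ _ _ := ⟨b, hb⟩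
  existsUnique_mem_class _ _ y _ _ := ⟨univ, ⟨rfl, mem_univ y⟩, fun _ h => h.1⟩

theorem trivialSystem_uses (x : α) : (trivialSystem α).Uses x () := ⟨univ, rfl⟩

end TrivialSystem

section InversivePlane

/-- The circles of the inversive plane of order three, except the vertical lines: the lines with
slope `m` and intercept `c`, and the circles of the norm form of `𝔽₉ = 𝔽₃[i]`, that is the
solutions of `(x - r) ^ 2 + (y - s) ^ 2 = 2` and `(x - r) ^ 2 + (y - s) ^ 2 = 1`. -/
def planeCircle : Fin 3 × ZMod 3 × ZMod 3 → Finset (Option (ZMod 3 × ZMod 3))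
  | (0, m, c) => {none, some (0, c), some (1, c + m), some (2, c + 2 * m)}
  | (1, r, s) =>
    {some (r + 1, s + 1), some (r + 1, s - 1), some (r - 1, s + 1), some (r - 1, s - 1)}
  | (2, r, s) => {some (r, s + 1), some (r, s - 1), some (r + 1, s), some (r - 1, s)}

/-- The line which carries the pencil of colour `k` at `x`: the line of slope `t` for `k = inl t`
and the vertical line for `k = inr ()`. -/
def pencilCarrier : Option (ZMod 3 × ZMod 3) → ZMod 3 ⊕ Unit → Finset (Option (ZMod 3 × ZMod 3))
  | none, .inl t => {none, some (0, 0), some (1, t), some (2, 2 * t)}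
  | some (r, s), .inl t => {none, some (r, s), some (r + 1, s + t), some (r + 2, s + 2 * t)}
  | none, .inr _ => {none, some (0, 0), some (0, 1), some (0, 2)}
  | some (r, s), .inr _ => {none, some (r, s), some (r, s + 1), some (r, s + 2)}

/-- The circle `B` passes through `x` and equals or touches there the carrier of colour `k`. -/
def InPencil (x : Option (ZMod 3 × ZMod 3)) (k : ZMod 3 ⊕ Unit)
    (B : Finset (Option (ZMod 3 × ZMod 3))) : Prop :=
  x ∈ B ∧ (B = pencilCarrier x k ∨ B ∩ pencilCarrier x k = {x})

instance (x k B) : Decidable (InPencil x k B) := inferInstanceAs (Decidable (_ ∧ _))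

/-- The candelabra system of type `3 ^ 3` obtained from the inversive plane of order three by
removing the vertical lines. The classes at a point are its pencils of touching circles. -/
def planeSystem : ColouredSystem (Option (ZMod 3 × ZMod 3)) (ZMod 3 ⊕ Unit) where
  blocks := Set.range planeCircle
  classes x k := {B | B ∈ Set.range planeCircle ∧ InPencil x k B}

theorem card_planeCircle : ∀ i, (planeCircle i).card = 4 := by decide +kernel

theorem not_allSameCol_planeCircle : ∀ i, ∀ x ∈ planeCircle i, ∀ y ∈ planeCircle i,
    ∀ z ∈ planeCircle i, x ≠ y → x ≠ z → y ≠ z → ¬ AllSameCol x y z := by decide +kernel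

set_option synthInstance.maxSize 1000 in
theorem exists_planeCircle : ∀ x y z : Option (ZMod 3 × ZMod 3), x ≠ y → x ≠ z → y ≠ z →
    ¬ AllSameCol x y z → ∃ i, x ∈ planeCircle i ∧ y ∈ planeCircle i ∧ z ∈ planeCircle i := by
  decide +kernel

theorem card_planeCircle_inter_le : ∀ i j, i ≠ j → (planeCircle i ∩ planeCircle j).card ≤ 2 := by
  decide +kernel

theorem exists_inPencil : ∀ i, ∀ x ∈ planeCircle i, ∃ k, InPencil x k (planeCircle i) := by
  decide +kernel

theorem inPencil_unique : ∀ i, ∀ x ∈ planeCircle i, ∀ k k', InPencil x k (planeCircle i) →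
    InPencil x k' (planeCircle i) → k = k' := by
  decide +kernel

theorem exists_planeCircle_inPencil_inl : ∀ x y : Option (ZMod 3 × ZMod 3), x ≠ y → ∀ t,
    ∃ i, InPencil x (.inl t) (planeCircle i) ∧ y ∈ planeCircle i := by
  decide +kernel

theorem exists_planeCircle_inPencil_inr : ∀ x y : Option (ZMod 3 × ZMod 3), ¬ SameCol x y →
    ∃ i, InPencil x (.inr ()) (planeCircle i) ∧ y ∈ planeCircle i := by
  decide +kernel

theorem not_sameCol_of_inPencil_inr : ∀ i, ∀ x, InPencil x (.inr ()) (planeCircle i) →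
    ∀ y ∈ planeCircle i, x ≠ y → ¬ SameCol x y := by
  decide +kernel

set_option synthInstance.maxSize 1000 in
theorem eq_of_inPencil : ∀ i, ∀ x, ∀ k, InPencil x k (planeCircle i) →
    ∀ j, InPencil x k (planeCircle j) → ∀ y ∈ planeCircle i, x ≠ y → y ∈ planeCircle j →
    i = j := by
  decide +kernel

theorem horizontal_planeCircle : ∀ g : ZMod 3, planeCircle (0, 0, g) = univ.map (inRow g) ∧
    ∀ x, InPencil (inRow g x) (.inl 0) (planeCircle (0, 0, g)) := by
  decide +kernel

theorem isIngredient_planeSystem {H : Option (ZMod 3) → Unit → Prop} (hH : ∀ x, H x ()) :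
    IsIngredient univ H planeSystem where
  card_eq := by
    rintro _ ⟨i, rfl⟩
    exact card_planeCircle i
  triple_of_mem := by
    rintro _ ⟨i, rfl⟩ x hx y hy z hz hxy hxz hyz
    exact ⟨by simp, not_allSameCol_planeCircle i x hx y hy z hz hxy hxz hyz, .inl (mem_univ _)⟩
  existsUnique_block := by
    rintro x y z hxy hxz hyz ⟨-, ht, -⟩
    obtain ⟨i, hx, hy, hz⟩ := exists_planeCircle x y z hxy hxz hyz ht
    refine ⟨planeCircle i, ⟨⟨i, rfl⟩, hx, hy, hz⟩, ?_⟩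
    rintro _ ⟨⟨j, rfl⟩, hx', hy', hz'⟩
    by_contra hne
    have hle := card_planeCircle_inter_le j i (ne_of_apply_ne _ hne)
    have hlt : 2 < (planeCircle j ∩ planeCircle i).card := two_lt_card.2
      ⟨x, mem_inter.2 ⟨hx', hx⟩, y, mem_inter.2 ⟨hy', hy⟩, z, mem_inter.2 ⟨hz', hz⟩, hxy, hxz, hyz⟩
    omega
  mem_blocks := fun _ _ _ ⟨hB, hx⟩ => ⟨hB, hx.1⟩
  existsUnique_class := by
    rintro _ ⟨i, rfl⟩ x hx
    obtain ⟨k, hk⟩ := exists_inPencil i x hx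
    exact ⟨k, ⟨⟨i, rfl⟩, hk⟩, fun k' hk' => inPencil_unique i x hx k' k hk'.2 hk⟩
  covers_of_mem := by
    rintro x k _ ⟨⟨i, rfl⟩, hk⟩ y hy hxy
    rcases k with t | _
    · simp [IngredientCover]
    · simp [IngredientCover, hH, not_sameCol_of_inPencil_inr i x hk y hy hxy]
  existsUnique_mem_class := by
    intro x k y hxy hc
    obtain ⟨i, hi, hy⟩ : ∃ i, InPencil x k (planeCircle i) ∧ y ∈ planeCircle i := by
      rcases k with t | _
      · exact exists_planeCircle_inPencil_inl x y hxy t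
      · exact exists_planeCircle_inPencil_inr x y hc.2.2.2.2
    refine ⟨planeCircle i, ⟨⟨⟨i, rfl⟩, hi⟩, hy⟩, ?_⟩
    rintro _ ⟨⟨⟨j, rfl⟩, hj⟩, hy'⟩
    rw [eq_of_inPencil j x k hj i hi y hy' hxy hy]

theorem hasHorizontalBlocks_planeSystem : HasHorizontalBlocks univ planeSystem := fun g x _ =>
  (horizontal_planeCircle g).1 ▸ ⟨⟨(0, 0, g), rfl⟩, (horizontal_planeCircle g).2 x⟩

end InversivePlane

section IngredientChoice

variable {A G Γ : Type*} [AddCommGroup G]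

theorem exists_isIngredient (hG : Function.Bijective fun g : G => 2 • g)
    {H : Option G → Γ → Prop} {E : ColouredSystem (Option (ZMod 3 × G)) (G ⊕ Γ)}
    (hE : IsIngredient univ H E) {b : Finset (Option A)} (hb : b.card = 4) :
    ∃ S, IsIngredient b H S ∧ (HasHorizontalBlocks univ E → HasHorizontalBlocks b S) := by
  by_cases hn : none ∈ b
  · obtain ⟨e, rfl⟩ := exists_embedding_map_univ_option_eq (J := ZMod 3) hn hb
    exact ⟨_, hE.map_gridEmb e, fun hE' => hE'.map_gridEmb e⟩
  · obtain ⟨e, rfl⟩ := exists_embedding_map_some_univ_eq (J := Bool × Bool) hn hb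
    exact ⟨_, (isIngredient_transversalIngredient hG H).map_gridEmb e,
      fun _ => hasHorizontalBlocks_transversalIngredient.map_gridEmb e⟩

end IngredientChoice

section DeleteColumns

variable {A I ΓW ΓU : Type*} {W : ColouredSystem (Option (A × I)) ΓW}
  {U : ColouredSystem (Option I) ΓU} {κ : ΓU → ΓW} {B : Finset (Option (A × I))}
  {x y z : Option (A × I)} {k : ΓW}

/-- Every completed column of `W` carries a copy of `U`, with the colours renamed by `κ`. -/
def ContainsColumns (W : ColouredSystem (Option (A × I)) ΓW) (U : ColouredSystem (Option I) ΓU)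
    (κ : ΓU → ΓW) : Prop :=
  ∀ a p σ, ∀ d ∈ U.classes p σ, d.map (inCol a) ∈ W.classes (inCol a p) (κ σ)

/-- The system `W` without the blocks contained in a completed column. -/
def deleteColumns (W : ColouredSystem (Option (A × I)) ΓW) :
    ColouredSystem (Option (A × I)) ΓW where
  blocks := {B | B ∈ W.blocks ∧ ∃ y ∈ B, ∃ z ∈ B, ¬ SameCol y z}
  classes x k := {B | B ∈ W.classes x k ∧ ∃ y ∈ B, ∃ z ∈ B, ¬ SameCol y z}

/-- The colour `k` is used at `x` by the copy of `U` on the completed column of `x`. -/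
def IsColumnColour (U : ColouredSystem (Option I) ΓU) (κ : ΓU → ΓW) (x : Option (A × I))
    (k : ΓW) : Prop :=
  ∃ σ, U.Uses (rowOf x) σ ∧ κ σ = k

theorem map_inCol_notMem_blocks_deleteColumns (a : A) (d : Finset (Option I)) :
    d.map (inCol a) ∉ (deleteColumns W).blocks := by
  rintro ⟨-, x, hx, y, hy, hxy⟩
  obtain ⟨p, -, rfl⟩ := mem_map.1 hx
  obtain ⟨q, -, rfl⟩ := mem_map.1 hy
  exact hxy (sameCol_inCol a p q)

theorem ContainsColumns.exists_eq_map_inCol (hcol : ContainsColumns W U κ) (hW : W.IsRDSQS)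
    (hU : U.IsRDSQS) (hB : B ∈ W.blocks) (hx : x ∈ B) (hy : y ∈ B) (hz : z ∈ B) (hxy : x ≠ y)
    (hxz : x ≠ z) (hyz : y ≠ z) (h : AllSameCol x y z) :
    ∃ a, ∃ d ∈ U.blocks, B = d.map (inCol a) := by
  obtain ⟨a, p, q, r, rfl, rfl, rfl⟩ := h.exists_inCol hxy
  obtain ⟨d, ⟨hd, hp, hq, hr⟩, -⟩ := hU.existsUnique_block p q r (ne_of_apply_ne _ hxy)
    (ne_of_apply_ne _ hxz) (ne_of_apply_ne _ hyz) trivial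
  obtain ⟨σ, hσ, -⟩ := hU.existsUnique_class d hd p hp
  exact ⟨a, d, hd, hW.eq_of_mem_blocks hB (hW.mem_blocks _ _ _ (hcol a p σ d hσ)).1 hxy hxz hyz
    hx hy hz (mem_map_of_mem _ hp) (mem_map_of_mem _ hq) (mem_map_of_mem _ hr)⟩

theorem ContainsColumns.isColumnColour (hcol : ContainsColumns W U κ) (hW : W.IsRDSQS)
    (hU : U.IsRDSQS) (hB : B ∈ W.classes x k) (hB' : B ∉ (deleteColumns W).classes x k) :
    IsColumnColour U κ x k := by
  obtain ⟨hBW, hx⟩ := hW.mem_blocks x k B hB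
  have hsame : ∀ y ∈ B, ∀ z ∈ B, SameCol y z := by
    by_contra! h
    exact hB' ⟨hB, h⟩
  obtain ⟨y, hy, z, hz, hxy, hxz, hyz⟩ := exists_two_others (hW.card_eq B hBW) x
  obtain ⟨a, d, hd, rfl⟩ := hcol.exists_eq_map_inCol hW hU hBW hx hy hz hxy hxz hyz
    ⟨hsame x hx y hy, hsame x hx z hz, hsame y hy z hz⟩
  obtain ⟨p, hp, rfl⟩ := mem_map.1 hx
  obtain ⟨σ, hσ, -⟩ := hU.existsUnique_class d hd p hp
  exact ⟨σ, ⟨d, by rwa [rowOf_inCol]⟩, hW.colour_eq (hcol a p σ d hσ) hB⟩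

theorem ContainsColumns.not_sameCol (hcol : ContainsColumns W U κ) (hW : W.IsRDSQS)
    (hU : U.IsRDSQS) (hB : B ∈ (deleteColumns W).classes x k) (hk : IsColumnColour U κ x k)
    (hy : y ∈ B) (hxy : x ≠ y) : ¬ SameCol x y := by
  intro h
  obtain ⟨a, p, q, rfl, rfl⟩ := h.exists_inCol hxy
  obtain ⟨σ, hσ, rfl⟩ := hk
  rw [rowOf_inCol] at hσ
  obtain ⟨d, ⟨hd, hq⟩, -⟩ := hU.existsUnique_mem_class p σ q (ne_of_apply_ne _ hxy) hσ
  obtain rfl := hW.eq_of_mem_classes hB.1 (hcol a p σ d hd) hxy hy (mem_map_of_mem _ hq)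
  exact map_inCol_notMem_blocks_deleteColumns a d ⟨(hW.mem_blocks _ _ _ hB.1).1, hB.2⟩

theorem ContainsColumns.isPartialRDSQS_deleteColumns (hcol : ContainsColumns W U κ)
    (hW : W.IsRDSQS) (hU : U.IsRDSQS) :
    (deleteColumns W).IsPartialRDSQS (fun x y z => ¬ AllSameCol x y z)
      fun x k y => W.Uses x k ∧ (SameCol x y → ¬ IsColumnColour U κ x k) where
  card_eq B hB := hW.card_eq B hB.1
  triple_of_mem B hB x hx y hy z hz hxy hxz hyz h := by
    obtain ⟨a, d, -, rfl⟩ := hcol.exists_eq_map_inCol hW hU hB.1 hx hy hz hxy hxz hyz h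
    exact map_inCol_notMem_blocks_deleteColumns a d hB
  existsUnique_block x y z hxy hxz hyz h := by
    obtain ⟨B, ⟨hB, hx, hy, hz⟩, huniq⟩ := hW.existsUnique_block x y z hxy hxz hyz trivial
    refine ⟨B, ⟨⟨hB, ?_⟩, hx, hy, hz⟩, fun B' hB' => huniq B' ⟨hB'.1.1, hB'.2⟩⟩
    by_contra! hsame
    exact h ⟨hsame x hx y hy, hsame x hx z hz, hsame y hy z hz⟩
  mem_blocks x k B hB := ⟨⟨(hW.mem_blocks x k B hB.1).1, hB.2⟩, (hW.mem_blocks x k B hB.1).2⟩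
  existsUnique_class B hB x hx := by
    obtain ⟨k, hk, huniq⟩ := hW.existsUnique_class B hB.1 x hx
    exact ⟨k, ⟨hk, hB.2⟩, fun l hl => huniq l hl.1⟩
  covers_of_mem x k B hB y hy hxy :=
    ⟨⟨B, hB.1⟩, fun h hk => hcol.not_sameCol hW hU hB hk hy hxy h⟩
  existsUnique_mem_class x k y hxy hc := by
    obtain ⟨B, ⟨hB, hy⟩, huniq⟩ := hW.existsUnique_mem_class x k y hxy hc.1
    refine ⟨B, ⟨?_, hy⟩, fun B' hB' => huniq B' ⟨hB'.1.1, hB'.2⟩⟩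
    by_contra hB'
    exact hB' ⟨hB, x, (hW.mem_blocks x k B hB).2, y, hy,
      fun h => hc.2 h (hcol.isColumnColour hW hU hB hB')⟩

theorem existsUnique_mem_colOf_eq [Fintype A] (hA : Fintype.card A = 3) (hcard : B.card = 4)
    (hB : ∀ x ∈ B, ∀ y ∈ B, ∀ z ∈ B, x ≠ y → x ≠ z → y ≠ z → ¬ AllSameCol x y z)
    (hn : none ∈ B) (p : Option A) : ∃! y, y ∈ B ∧ colOf y = p := by
  have hinj : Set.InjOn colOf (B : Set (Option (A × I))) := by
    rintro (_ | y) hy (_ | z) hz h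
    · rfl
    · exact absurd h (by simp)
    · exact absurd h (by simp)
    · by_contra hyz
      exact hB none hn _ hy _ hz (by simp) (by simp) hyz ⟨.inl rfl, .inl rfl, .inr (.inr h)⟩
  have hsurj : Set.SurjOn colOf (B : Set (Option (A × I))) (univ : Finset (Option A)) :=
    surjOn_of_injOn_of_card_le colOf (fun _ _ => mem_univ _) hinj (by simp [hA, hcard])
  obtain ⟨y, hy, hyp⟩ := hsurj (mem_univ p)
  exact ⟨y, ⟨hy, hyp⟩, fun z hz => hinj hz.1 hy (hz.2.trans hyp.symm)⟩

end DeleteColumns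

section Candelabrum

variable {I ΓW ΓU : Type*} {W : ColouredSystem (Option (ZMod 3 × I)) ΓW}
  {U : ColouredSystem (Option I) ΓU} {κ : ΓU → ΓW} {i₀ : I}

/-- A point other than `x` on the completed column of `x`. -/
def anchor (i₀ : I) : Option (ZMod 3 × I) → Option (ZMod 3 × I)
  | none => some (0, i₀)
  | some _ => none

/-- A column meeting neither `x` nor `anchor i₀ x`. -/
def nextCol : Option (ZMod 3 × I) → ZMod 3
  | none => 1
  | some p => p.1 + 1

/-- The colours of the candelabra system obtained from `W` by deleting its columns. A class
containing a block through `x` and `anchor i₀ x` is full, and is indexed by the row `t` in which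
this block meets the next column. -/
def CandelabrumColour (W : ColouredSystem (Option (ZMod 3 × I)) ΓW)
    (U : ColouredSystem (Option I) ΓU) (κ : ΓU → ΓW) (i₀ : I) (x : Option (ZMod 3 × I)) (k : ΓW) :
    I ⊕ ΓU → Prop
  | .inl t => ∃ B ∈ (deleteColumns W).classes x k, anchor i₀ x ∈ B ∧ some (nextCol x, t) ∈ B
  | .inr σ => U.Uses (rowOf x) σ ∧ κ σ = k

theorem ne_anchor (i₀ : I) (x : Option (ZMod 3 × I)) : x ≠ anchor i₀ x := by
  cases x <;> simp [anchor]

theorem sameCol_anchor (i₀ : I) (x : Option (ZMod 3 × I)) : SameCol x (anchor i₀ x) := by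
  cases x <;> simp [anchor, SameCol]

theorem none_mem_of_anchor_mem {B : Finset (Option (ZMod 3 × I))} {x : Option (ZMod 3 × I)}
    (hx : x ∈ B) (ha : anchor i₀ x ∈ B) : none ∈ B := by
  cases x <;> assumption

theorem nextCol_transverse (i₀ : I) (x : Option (ZMod 3 × I)) (t : I) :
    x ≠ some (nextCol x, t) ∧ anchor i₀ x ≠ some (nextCol x, t) ∧
      ¬ AllSameCol x (anchor i₀ x) (some (nextCol x, t)) := by
  cases x <;> simp [anchor, nextCol, AllSameCol, SameCol, Prod.ext_iff]

theorem existsUnique_candelabrumColour (hcol : ContainsColumns W U κ) (hW : W.IsRDSQS)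
    (hU : U.IsRDSQS) (hκ : Function.Injective κ) {x : Option (ZMod 3 × I)} {k : ΓW}
    (hk : W.Uses x k) : ∃! k', CandelabrumColour W U κ i₀ x k k' := by
  have hS := hcol.isPartialRDSQS_deleteColumns hW hU
  have ha := ne_anchor i₀ x
  by_cases hcc : IsColumnColour U κ x k
  · obtain ⟨σ, hσ⟩ := hcc
    refine ⟨.inr σ, hσ, ?_⟩
    rintro (t | τ) hτ
    · obtain ⟨B, hB, haB, -⟩ := hτ
      exact absurd (sameCol_anchor i₀ x) (hcol.not_sameCol hW hU hB ⟨σ, hσ⟩ haB ha)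
    · exact congrArg _ (hκ (hτ.2.trans hσ.2.symm))
  · obtain ⟨B, ⟨hB, haB⟩, -⟩ := hS.existsUnique_mem_class x k _ ha ⟨hk, fun _ => hcc⟩
    obtain ⟨hBS, hx⟩ := hS.mem_blocks x k B hB
    obtain ⟨_ | ⟨r, t⟩, ⟨hy, hyc⟩, huniq⟩ := existsUnique_mem_colOf_eq (ZMod.card 3)
      (hS.card_eq B hBS) (hS.triple_of_mem B hBS) (none_mem_of_anchor_mem hx haB)
      (some (nextCol x))
    · exact absurd hyc (by simp)
    · obtain rfl : r = nextCol x := by simpa using hyc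
      refine ⟨.inl t, ⟨B, hB, haB, hy⟩, ?_⟩
      rintro (t' | τ) hτ
      · obtain ⟨B', hB', haB', hy'⟩ := hτ
        obtain rfl := hS.eq_of_mem_classes hB' hB ha haB' haB
        simpa using huniq _ ⟨hy', rfl⟩
      · exact absurd ⟨τ, hτ⟩ hcc

theorem candelabrumColour_injective (hcol : ContainsColumns W U κ) (hW : W.IsRDSQS)
    (hU : U.IsRDSQS) {x : Option (ZMod 3 × I)} {k₁ k₂ : ΓW} {k' : I ⊕ ΓU}
    (h₁ : CandelabrumColour W U κ i₀ x k₁ k') (h₂ : CandelabrumColour W U κ i₀ x k₂ k') :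
    k₁ = k₂ := by
  have hS := hcol.isPartialRDSQS_deleteColumns hW hU
  rcases k' with t | σ
  · obtain ⟨B₁, hB₁, ha₁, ht₁⟩ := h₁
    obtain ⟨B₂, hB₂, ha₂, ht₂⟩ := h₂
    obtain ⟨hxt, hat, -⟩ := nextCol_transverse i₀ x t
    obtain ⟨hBS₁, hx₁⟩ := hS.mem_blocks x k₁ B₁ hB₁
    obtain ⟨hBS₂, hx₂⟩ := hS.mem_blocks x k₂ B₂ hB₂
    obtain rfl := hS.eq_of_mem_blocks hBS₁ hBS₂ (ne_anchor i₀ x) hxt hat hx₁ ha₁ ht₁ hx₂ ha₂ ht₂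
    exact hS.colour_eq hB₁ hB₂
  · exact h₁.2.symm.trans h₂.2

theorem exists_candelabrumColour_inl (hcol : ContainsColumns W U κ) (hW : W.IsRDSQS)
    (hU : U.IsRDSQS) (i₀ : I) (x : Option (ZMod 3 × I)) (t : I) :
    ∃ k, CandelabrumColour W U κ i₀ x k (.inl t) ∧ W.Uses x k ∧ ¬ IsColumnColour U κ x k := by
  have hS := hcol.isPartialRDSQS_deleteColumns hW hU
  have ha := ne_anchor i₀ x
  obtain ⟨hxt, hat, htrans⟩ := nextCol_transverse i₀ x t
  obtain ⟨B, ⟨hB, hx, haB, ht⟩, -⟩ := hS.existsUnique_block x _ _ ha hxt hat htrans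
  obtain ⟨k, hk, -⟩ := hS.existsUnique_class B hB x hx
  exact ⟨k, ⟨B, hk, haB, ht⟩, ⟨B, hk.1⟩,
    fun hcc => hcol.not_sameCol hW hU hk hcc haB ha (sameCol_anchor i₀ x)⟩

theorem ContainsColumns.uses (hcol : ContainsColumns W U κ) {x : Option (ZMod 3 × I)} {σ : ΓU}
    (hσ : U.Uses (rowOf x) σ) : W.Uses x (κ σ) := by
  obtain ⟨d, hd⟩ := hσ
  rcases x with _ | ⟨r, i⟩
  · exact ⟨_, hcol 0 none σ d hd⟩
  · exact ⟨_, hcol r (some i) σ d hd⟩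

theorem isIngredient_relabel_deleteColumns (hcol : ContainsColumns W U κ) (hW : W.IsRDSQS)
    (hU : U.IsRDSQS) (hκ : Function.Injective κ) (i₀ : I) :
    IsIngredient univ U.Uses ((deleteColumns W).relabel (CandelabrumColour W U κ i₀)) := by
  refine ((hcol.isPartialRDSQS_deleteColumns hW hU).relabel
    (fun x k ⟨B, hB⟩ => existsUnique_candelabrumColour hcol hW hU hκ ⟨B, hB.1⟩)
    fun x k₁ k₂ k' => candelabrumColour_injective hcol hW hU).congr
    (fun x y z _ _ _ => by simp [TransverseTo]) ?_
  rintro x (t | σ) y -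
  · obtain ⟨k, hk, hkW, hcc⟩ := exists_candelabrumColour_inl hcol hW hU i₀ x t
    exact iff_of_true ⟨k, hk, hkW, fun _ => hcc⟩ (by simp [IngredientCover])
  · simp only [IngredientCover, mem_univ, true_and]
    constructor
    · rintro ⟨k, hk, -, hsame⟩
      exact ⟨hk.1, fun h => hsame h ⟨σ, hk⟩⟩
    · rintro ⟨hσ, hxy⟩
      exact ⟨κ σ, ⟨hσ, rfl⟩, hcol.uses hσ, fun h => absurd h hxy⟩

end Candelabrum

section ProductExistence

variable {A G I ΓU ΓV : Type*}

/-- The interchange of rows and columns of a grid completed by a point at infinity. -/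
def transpose (I J : Type*) : Option (I × J) ≃ Option (J × I) :=
  Equiv.optionCongr (Equiv.prodComm I J)

theorem transpose_inRow (r : G) (p : Option A) : transpose A G (inRow r p) = inCol r p := by
  cases p <;> rfl

theorem containsColumns_map_transpose {U : ColouredSystem (Option A) ΓU}
    {W : ColouredSystem (Option (A × G)) ΓV} {κ : ΓU → ΓV}
    (h : ∀ r p σ, ∀ d ∈ U.classes p σ, d.map (inRow r) ∈ W.classes (inRow r p) (κ σ)) :
    ContainsColumns (W.map (transpose A G).toEmbedding) U κ := by
  intro r p σ d hd
  refine ⟨inRow r p, transpose_inRow r p, d.map (inRow r), h r p σ d hd, ?_⟩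
  rw [Finset.map_map]
  congr 1
  ext1 q
  exact transpose_inRow r q

theorem exists_candelabrum [Nonempty I] {U : ColouredSystem (Option I) ΓU} (hU : U.IsRDSQS) :
    ∃ E : ColouredSystem (Option (ZMod 3 × I)) (I ⊕ ΓU), IsIngredient univ U.Uses E := by
  let L := trivialSystem (Option (ZMod 3))
  have hL : L.IsRDSQS := isRDSQS_trivialSystem (by simp)
  have hD : ∀ b ∈ U.blocks, ∃ S : ColouredSystem (Option (I × ZMod 3)) (ZMod 3 ⊕ Unit),
      IsIngredient b L.Uses S ∧ HasHorizontalBlocks b S := fun b hb => by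
    obtain ⟨S, hS, hS'⟩ := exists_isIngredient (by decide)
      (isIngredient_planeSystem trivialSystem_uses) (hU.card_eq b hb)
    exact ⟨S, hS, hS' hasHorizontalBlocks_planeSystem⟩
  choose! D hD using hD
  have hW : (product U L D).IsRDSQS := isRDSQS_product hU hL fun b hb => (hD b hb).1
  have hcol : ContainsColumns ((product U L D).map (transpose I (ZMod 3)).toEmbedding) U
      fun σ => .inl (σ, 0) := containsColumns_map_transpose fun r p σ d hd =>
    map_inRow_mem_product_classes hU (fun b hb => (hD b hb).2) hd r
  exact ⟨_, isIngredient_relabel_deleteColumns hcol (hW.map_equiv _) hU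
    (fun σ τ h => by simpa using h) (Classical.arbitrary I)⟩

theorem exists_isRDSQS_prod [AddCommGroup G] (hG : Function.Bijective fun g : G => 2 • g)
    {V : ColouredSystem (Option A) ΓV} {U : ColouredSystem (Option G) ΓU} (hV : V.IsRDSQS)
    (hU : U.IsRDSQS) :
    ∃ S : ColouredSystem (Option (A × G)) ((ΓV × G) ⊕ ΓU), S.IsRDSQS := by
  obtain ⟨E, hE⟩ := exists_candelabrum hU
  have hD : ∀ b ∈ V.blocks, ∃ S : ColouredSystem (Option (A × G)) (G ⊕ ΓU),
      IsIngredient b U.Uses S := fun b hb =>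
    (exists_isIngredient hG hE (hV.card_eq b hb)).imp fun _ hS => hS.1
  choose! D hD using hD
  exact ⟨product V U D, isRDSQS_product hV hU hD⟩

end ProductExistence

section Evenness

variable {α Γ : Type*} {S : ColouredSystem α Γ}

theorem ColouredSystem.IsRDSQS.even_card [Fintype α] [Nontrivial α] (hS : S.IsRDSQS) :
    Even (Fintype.card α) := by
  classical
  obtain ⟨x, y, hxy⟩ := exists_pair_ne α
  let pencil : Finset (Finset α) := {b | b ∈ S.blocks ∧ x ∈ b ∧ y ∈ b}
  have hunion : ({x, y}ᶜ : Finset α) = pencil.biUnion fun b => b \ {x, y} := by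
    ext z
    simp only [pencil, mem_compl, mem_insert, mem_singleton, not_or, mem_biUnion, mem_filter_univ,
      mem_sdiff]
    constructor
    · rintro ⟨hzx, hzy⟩
      obtain ⟨b, ⟨hb, hx, hy, hz⟩, -⟩ :=
        hS.existsUnique_block x y z hxy (Ne.symm hzx) (Ne.symm hzy) trivial
      exact ⟨b, ⟨hb, hx, hy⟩, hz, hzx, hzy⟩
    · exact fun ⟨_, _, _, hz⟩ => hz
  have hdisj : (pencil : Set (Finset α)).PairwiseDisjoint fun b => b \ {x, y} := by
    intro b hb b' hb' hne
    simp only [pencil, mem_coe, mem_filter_univ] at hb hb'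
    refine disjoint_left.2 fun z hz hz' => hne ?_
    simp only [mem_sdiff, mem_insert, mem_singleton, not_or] at hz hz'
    exact hS.eq_of_mem_blocks hb.1 hb'.1 hxy (Ne.symm hz.2.1) (Ne.symm hz.2.2) hb.2.1 hb.2.2 hz.1
      hb'.2.1 hb'.2.2 hz'.1
  have hcard : ∀ b ∈ pencil, (b \ {x, y}).card = 2 := by
    intro b hb
    simp only [pencil, mem_filter_univ] at hb
    rw [card_sdiff_of_subset (by simp [insert_subset_iff, hb.2]), hS.card_eq b hb.1, card_pair hxy]
  have hcompl : ({x, y}ᶜ : Finset α).card = pencil.card * 2 := by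
    rw [hunion, card_biUnion hdisj, sum_const_nat hcard]
  have htotal := card_add_card_compl ({x, y} : Finset α)
  rw [hcompl, card_pair hxy] at htotal
  exact ⟨pencil.card + 1, by omega⟩

end Evenness

section Resolution

variable {Y : Finset ℕ} {B : Finset (Finset ℕ)} {Q : Set (Finset (Finset ℕ))}

/-- `Q` is a set of parallel classes of `Y` that partitions the block collection `B`. -/
def IsResolution (Y : Finset ℕ) (B : Finset (Finset ℕ)) (Q : Set (Finset (Finset ℕ))) : Prop :=
  (∀ P ∈ Q, IsParallelClass Y P) ∧ (∀ P ∈ Q, P ⊆ B) ∧ ∀ b ∈ B, ∃! P, P ∈ Q ∧ b ∈ P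

theorem Resolvable.exists_isResolution (h : Resolvable Y B) : ∃ Q, IsResolution Y B Q := by
  obtain ⟨r, P, hpar, hsub, huniq⟩ := h
  refine ⟨Set.range P, Set.forall_mem_range.2 hpar, Set.forall_mem_range.2 hsub, fun b hb => ?_⟩
  obtain ⟨i, hi, hi'⟩ := huniq b hb
  refine ⟨P i, ⟨⟨i, rfl⟩, hi⟩, ?_⟩
  rintro _ ⟨⟨j, rfl⟩, hj⟩
  rw [hi' j hj]

theorem IsResolution.resolvable (h : IsResolution Y B Q) : Resolvable Y B := by
  obtain ⟨hpar, hsub, huniq⟩ := h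
  have hfinite : Q.Finite :=
    B.powerset.finite_toSet.subset fun P hP => mem_coe.2 (mem_powerset.2 (hsub P hP))
  have : Finite Q := hfinite.to_subtype
  let e := Finite.equivFin Q
  refine ⟨Nat.card Q, fun i => e.symm i, fun i => hpar _ (e.symm i).2,
    fun i => hsub _ (e.symm i).2, fun b hb => ?_⟩
  obtain ⟨P, ⟨hP, hbP⟩, hP'⟩ := huniq b hb
  refine ⟨e ⟨P, hP⟩, by simpa only [Equiv.symm_apply_apply] using hbP, fun i hi => ?_⟩
  rw [← e.symm_apply_eq]
  exact Subtype.ext (hP' _ ⟨(e.symm i).2, hi⟩)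

end Resolution

section Conversion

variable {α Γ : Type*} {f : α ↪ ℕ} {B : Finset (Finset ℕ)}

/-- The image under `f` of the block of the derived design at `x` that comes from `b`. -/
def derivedImage (f : α ↪ ℕ) (x : α) (b : Finset α) : Finset ℕ := (b.map f).erase (f x)

theorem apply_mem_derivedImage {x y : α} {b : Finset α} :
    f y ∈ derivedImage f x b ↔ x ≠ y ∧ y ∈ b := by
  simp [derivedImage, eq_comm]

theorem derivedImage_injOn (f : α ↪ ℕ) (x : α) : Set.InjOn (derivedImage f x) {b | x ∈ b} := by
  intro b hb b' hb' h
  refine map_injective f ?_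
  rw [← insert_erase (mem_map_of_mem f hb), ← insert_erase (mem_map_of_mem f hb')]
  exact congrArg _ h

variable [Fintype α]

theorem mem_derivedBlocks_iff (hB : ∀ c ∈ B, c ⊆ univ.map f) {x : α} {d : Finset ℕ} :
    d ∈ derivedBlocks B (f x) ↔ ∃ b, b.map f ∈ B ∧ x ∈ b ∧ derivedImage f x b = d := by
  simp only [derivedBlocks, mem_image, mem_filter]
  constructor
  · rintro ⟨c, ⟨hc, hx⟩, rfl⟩
    obtain ⟨b, -, rfl⟩ := subset_map_iff.1 (hB c hc)
    exact ⟨b, hc, (mem_map' f).1 hx, rfl⟩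
  · rintro ⟨b, hb, hx, rfl⟩
    exact ⟨b.map f, ⟨hb, mem_map_of_mem f hx⟩, rfl⟩

/-- The coloured system on `α` whose image under `f` has the blocks `B` and, at every `x`, the
classes given by the resolution `Q x` of the derived design. -/
def designSystem (f : α ↪ ℕ) (B : Finset (Finset ℕ)) (Q : α → Set (Finset (Finset ℕ))) :
    ColouredSystem α (Finset (Finset ℕ)) where
  blocks := {b | b.map f ∈ B}
  classes x P := {b | b.map f ∈ B ∧ x ∈ b ∧ P ∈ Q x ∧ derivedImage f x b ∈ P}

theorem isRDSQS_designSystem {n : ℕ} {Q : α → Set (Finset (Finset ℕ))}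
    (hB : IsSteiner 3 4 n (univ.map f) B)
    (hQ : ∀ x, IsResolution ((univ.map f).erase (f x)) (derivedBlocks B (f x)) (Q x)) :
    (designSystem f B Q).IsRDSQS := by
  obtain ⟨-, hblock, htriple⟩ := hB
  have hsub : ∀ c ∈ B, c ⊆ univ.map f := fun c hc => (hblock c hc).1
  suffices h : (designSystem f B Q).IsPartialRDSQS (fun _ _ _ => True) fun x P _ => P ∈ Q x from
    h.isRDSQS (D := fun x P => P ∈ Q x) (fun _ _ _ _ _ _ => trivial) fun _ _ _ _ => Iff.rfl
  exact
  { card_eq := fun b hb => (card_map f).symm.trans (hblock _ hb).2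
    triple_of_mem := fun _ _ _ _ _ _ _ _ _ _ _ => trivial
    existsUnique_block := fun x y z hxy hxz hyz _ => by
      have hcard : ({f x, f y, f z} : Finset ℕ).card = 3 := card_eq_three.2
        ⟨_, _, _, f.injective.ne hxy, f.injective.ne hxz, f.injective.ne hyz, rfl⟩
      obtain ⟨c, ⟨hc, hxc⟩, huniq⟩ := htriple _ (by simp [insert_subset_iff]) hcard
      obtain ⟨b, -, rfl⟩ := subset_map_iff.1 (hsub c hc)
      refine ⟨b, ⟨hc, by simpa [insert_subset_iff] using hxc⟩, fun b' ⟨hb', hxb'⟩ => ?_⟩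
      exact map_injective f (huniq _ ⟨hb', by simpa [insert_subset_iff] using hxb'⟩)
    mem_blocks := fun x P b hb => ⟨hb.1, hb.2.1⟩
    existsUnique_class := fun b hb x hx => by
      obtain ⟨P, ⟨hP, hbP⟩, huniq⟩ :=
        (hQ x).2.2 _ ((mem_derivedBlocks_iff hsub).2 ⟨b, hb, hx, rfl⟩)
      exact ⟨P, ⟨hb, hx, hP, hbP⟩, fun P' hP' => huniq P' hP'.2.2⟩
    covers_of_mem := fun x P b hb y _ _ => hb.2.2.1
    existsUnique_mem_class := fun x P y hxy hP => by
      obtain ⟨d, ⟨hd, hy⟩, huniq⟩ :=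
        ((hQ x).1 P hP).2 (f y) (by simp [f.injective.ne_iff, Ne.symm hxy])
      obtain ⟨b, hb, hx, rfl⟩ := (mem_derivedBlocks_iff hsub).1 ((hQ x).2.1 P hP hd)
      refine ⟨b, ⟨⟨hb, hx, hP, hd⟩, (apply_mem_derivedImage.1 hy).2⟩, ?_⟩
      rintro b' ⟨⟨-, hx', -, hd'⟩, hy'⟩
      exact derivedImage_injOn f x hx' hx
        (huniq _ ⟨hd', apply_mem_derivedImage.2 ⟨hxy, hy'⟩⟩) }

theorem ExistsRDSQS.exists_isRDSQS (h : ExistsRDSQS (Fintype.card α)) :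
    ∃ S : ColouredSystem α (Finset (Finset ℕ)), S.IsRDSQS := by
  obtain ⟨X, B, hB, hres⟩ := h
  obtain ⟨f, rfl⟩ := exists_embedding_map_univ_eq hB.1
  choose Q hQ using fun x => (hres (f x) (mem_map_of_mem f (mem_univ x))).exists_isResolution
  exact ⟨designSystem f B Q, isRDSQS_designSystem hB hQ⟩

variable {S : ColouredSystem α Γ}

/-- The images under `f` of the blocks of `S`. -/
noncomputable def blockImages (f : α ↪ ℕ) (S : ColouredSystem α Γ) : Finset (Finset ℕ) :=
  (S.blocks.toFinite.image (Finset.map f)).toFinset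

/-- The images under `f` of the derived blocks at `x` of colour `k`. -/
noncomputable def classImages (f : α ↪ ℕ) (S : ColouredSystem α Γ) (x : α) (k : Γ) :
    Finset (Finset ℕ) :=
  ((S.classes x k).toFinite.image (derivedImage f x)).toFinset

theorem mem_classImages {x : α} {k : Γ} {d : Finset ℕ} :
    d ∈ classImages f S x k ↔ ∃ b ∈ S.classes x k, derivedImage f x b = d := by
  simp [classImages]

theorem map_mem_blockImages {b : Finset α} : b.map f ∈ blockImages f S ↔ b ∈ S.blocks := by
  simp [blockImages]

theorem subset_of_mem_blockImages {c : Finset ℕ} (hc : c ∈ blockImages f S) : c ⊆ univ.map f := by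
  obtain ⟨b, -, rfl⟩ := (Set.Finite.mem_toFinset _).1 hc
  exact map_subset_map.2 (subset_univ b)

theorem isSteiner_blockImages (hS : S.IsRDSQS) :
    IsSteiner 3 4 (Fintype.card α) (univ.map f) (blockImages f S) := by
  classical
  refine ⟨card_map f, fun c hc => ⟨subset_of_mem_blockImages hc, ?_⟩, fun T hT hcard => ?_⟩
  · obtain ⟨b, hb, rfl⟩ := (Set.Finite.mem_toFinset _).1 hc
    rw [card_map, hS.card_eq b hb]
  · obtain ⟨t, -, rfl⟩ := subset_map_iff.1 hT
    rw [card_map, card_eq_three] at hcard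
    obtain ⟨x, y, z, hxy, hxz, hyz, rfl⟩ := hcard
    obtain ⟨b, ⟨hb, hxb⟩, huniq⟩ := hS.existsUnique_block x y z hxy hxz hyz trivial
    refine ⟨b.map f, ⟨map_mem_blockImages.2 hb, ?_⟩, ?_⟩
    · simpa [insert_subset_iff] using hxb
    · rintro c ⟨hc, hxc⟩
      obtain ⟨b', -, rfl⟩ := subset_map_iff.1 (subset_of_mem_blockImages hc)
      rw [huniq b' ⟨map_mem_blockImages.1 hc, by simpa [insert_subset_iff] using hxc⟩]

theorem isParallelClass_classImages (hS : S.IsRDSQS) {x : α} {k : Γ} (hk : S.Uses x k) :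
    IsParallelClass ((univ.map f).erase (f x)) (classImages f S x k) := by
  refine ⟨fun d hd => ?_, fun y' hy' => ?_⟩
  · obtain ⟨b, -, rfl⟩ := mem_classImages.1 hd
    exact erase_subset_erase _ (map_subset_map.2 (subset_univ b))
  · obtain ⟨hne, hy⟩ := mem_erase.1 hy'
    obtain ⟨y, -, rfl⟩ := mem_map.1 hy
    have hxy : x ≠ y := fun h => hne (congrArg f h).symm
    obtain ⟨b, ⟨hb, hyb⟩, huniq⟩ := hS.existsUnique_mem_class x k y hxy hk
    refine ⟨_, ⟨mem_classImages.2 ⟨b, hb, rfl⟩, apply_mem_derivedImage.2 ⟨hxy, hyb⟩⟩, ?_⟩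
    rintro _ ⟨hd, hyd⟩
    obtain ⟨b', hb', rfl⟩ := mem_classImages.1 hd
    rw [huniq b' ⟨hb', (apply_mem_derivedImage.1 hyd).2⟩]

theorem isResolution_classImages (hS : S.IsRDSQS) (x : α) :
    IsResolution ((univ.map f).erase (f x)) (derivedBlocks (blockImages f S) (f x))
      (classImages f S x '' {k | S.Uses x k}) := by
  have hmem {d : Finset ℕ} : d ∈ derivedBlocks (blockImages f S) (f x) ↔
      ∃ b ∈ S.blocks, x ∈ b ∧ derivedImage f x b = d := by
    simp only [mem_derivedBlocks_iff (fun _ => subset_of_mem_blockImages), map_mem_blockImages]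
  refine ⟨Set.forall_mem_image.2 fun k hk => isParallelClass_classImages hS hk,
    Set.forall_mem_image.2 fun k _ d hd => ?_, fun d hd => ?_⟩
  · obtain ⟨b, hb, rfl⟩ := mem_classImages.1 hd
    exact hmem.2 ⟨b, (hS.mem_blocks x k b hb).1, (hS.mem_blocks x k b hb).2, rfl⟩
  · obtain ⟨b, hb, hx, rfl⟩ := hmem.1 hd
    obtain ⟨k, hk, huniq⟩ := hS.existsUnique_class b hb x hx
    refine ⟨_, ⟨⟨k, ⟨b, hk⟩, rfl⟩, mem_classImages.2 ⟨b, hk, rfl⟩⟩, ?_⟩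
    rintro _ ⟨⟨l, -, rfl⟩, hl⟩
    obtain ⟨b', hb', hbb'⟩ := mem_classImages.1 hl
    obtain rfl := derivedImage_injOn f x (hS.mem_blocks x l b' hb').2 hx hbb'
    rw [huniq l hb']

theorem ColouredSystem.IsRDSQS.existsRDSQS (hS : S.IsRDSQS) :
    ExistsRDSQS (Fintype.card α) := by
  let f : α ↪ ℕ := (Fintype.equivFin α).toEmbedding.trans Fin.valEmbedding
  refine ⟨univ.map f, blockImages f S, isSteiner_blockImages hS, ?_⟩
  simp only [Finset.forall_mem_map]
  exact fun x _ => (isResolution_classImages hS x).resolvable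

end Conversion

/-- If there exist an RDSQS(u + 1) and an RDSQS(v + 1), then there exists an
RDSQS(uv + 1). -/
theorem stmt_15 (u v : ℕ) (hu : 0 < u) (hv : 0 < v)
    (h1 : ExistsRDSQS (u + 1)) (h2 : ExistsRDSQS (v + 1)) :
    ExistsRDSQS (u * v + 1) := by
  have : NeZero u := ⟨hu.ne'⟩
  obtain ⟨U, hU⟩ : ∃ U : ColouredSystem (Option (ZMod u)) _, U.IsRDSQS :=
    ExistsRDSQS.exists_isRDSQS (by simpa using h1)
  obtain ⟨V, hV⟩ : ∃ V : ColouredSystem (Option (Fin v)) _, V.IsRDSQS :=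
    ExistsRDSQS.exists_isRDSQS (by simpa using h2)
  have hodd : Odd u := by
    have heven := hU.even_card
    rwa [Fintype.card_option, ZMod.card, Nat.even_add_one, Nat.not_even_iff_odd] at heven
  have htwo : Function.Bijective fun g : ZMod u => 2 • g :=
    (nsmulCoprime (by simpa using hodd.coprime_two_right)).bijective
  obtain ⟨S, hS⟩ := exists_isRDSQS_prod htwo hV hU
  simpa [mul_comm] using hS.existsRDSQS
end
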